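/- For integers r,k ≥ 3, let s_r(k) denote the minimum, over all graphs G that are r-Ramsey minimal for K_k, of the minimum degree of G. Then there exists an absolute constant c > 0 such that for all k,r ≥ 3: s_r(k) ≤ 2^{100k}·r²·log r and s_r(k) ≥ c·(k−1)·r². -/

import Mathlib

/-!
Lower bound. Let `v` be a vertex of minimum degree `d` in a Ramsey minimal graph. Without `v` the
graph has a colouring without a monochromatic `K_k`. If `64 d ≤ r² (k - 2)`, the edges at `v` can be
coloured so that, for each `i`, the neighbours joined to `v` in colour `i` contain no `K_{k-1}` of
colour `i` (`greedy_color`): as there is no `K_k` of colour `i`, neighbourhoods in colour `i` contain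
no `K_{k-1}`, so either some neighbourhood, or else a maximum union of `k - 2` independent sets, is a
large `K_{k-1}`-free set, which can be taken as a colour class. This extends the colouring to the
whole graph, a contradiction (`lower_bound`).

Upper bound, reduction. It suffices to find, on `n ≤ 2^{100k} r² log r` vertices, edge-disjoint
`K_k`-free graphs `G_1, …, G_r` such that each colouring of the vertices with `r` colours has, for
some `i`, a `(k-1)`-clique of `G_i` inside the class `i` (`gadget`). Indeed `colour_ramsey`, obtained
by iterating a Hales–Jewett amalgamation (`amalgam`), provides a coloured graph without monochromatic
`K_k` such that every recolouring contains a copy of the family on which the new colour is an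
injective function of the old one. Join a new vertex to each copy of the vertex set: the result
arrows `K_k`, but not without the new vertices. A minimal subgraph therefore contains a new vertex,
and its degree is at most `n`.

Upper bound, construction. The vertices form a grid `Fin m × Fin b` with two projections to the
*points* `Fin m`, such that each set of `16 t` vertices has at least `t` distinct images under one of
them (`exists_grid`). For each projection and each colour there are `D` layers; each layer is a
random partition of the points into `Q` lines, and each line is randomly split into `c = k - 1`
classes. Two vertices are adjacent in colour `i` if their images lie on a common line of colour `i`
in different classes, unless the points already met in an earlier layer, or the pair is *bad*:
collinear in a smaller colour, joined by two lines of earlier layers of colour `i`, or near in the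
system of the other projection. So the graphs are edge-disjoint (`gr_disjoint`), the edges of a
clique all come from one line, and a line has only `c` classes (`gr_free`).

Fix a set of `t` vertices with distinct images. Exposing the points of a layer one by one, pick
greedily on each line a vertex of the next class that forms no bad pair with the earlier choices. As
long as there are few bad pairs and no line is full, a point is accepted with probability at least
`1 / (2 c)`. An exponential supermartingale (`wt_avg`, `wt_prod`, `seq_mgf`) shows that no layer
fills a line, that is, produces a `c`-clique, with probability at most `2^{-DQ}` (`Pr_fails`). This
beats the union bound over all sets of `t` vertices. That bad pairs are few is a property of the
random lines alone (`Tame`): it follows from tail bounds for collinear pairs (`tail_pairs`) and for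
incidences of points with several lines (`tail_excess`), since the latter control the paths of two
lines (`paths_bound`). In a colouring of the vertices with `r` colours some class has at least `16 t`
vertices, which yields the required clique (`exists_family`).

Parameters. Let `K = 2^k`, `8^{e-1} < r ≤ 8^e`, `g = 3 e`, `ρ b = 8^e`, `Q = K^80 ρ b g`,
`D = K^8 g`, `t = K^3 Q` and `m = 16 t ρ`. The grid has `m b = 16 K^83 (8^e)² g` vertices
(`upper_exists`), which is at most `2^{100k} r² log r` (`upper_final`). -/

/-- `G` arrows `K_k` with `r` colors: every `r`-coloring of the edges of `G` contains a
monochromatic copy of `K_k`. -/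
def ArrowsClique {V : Type*} (G : SimpleGraph V) (r k : ℕ) : Prop :=
  ∀ c : Sym2 V → Fin r, ∃ i : Fin r, ∃ S : Finset V, S.card = k ∧
    ∀ u ∈ S, ∀ v ∈ S, u ≠ v → G.Adj u v ∧ c s(u, v) = i

/-- `G` is `r`-Ramsey minimal for `K_k`: `G` arrows `K_k` with `r` colors, but no proper
subgraph of `G` does. -/
def RamseyMinimal {V : Type*} (G : SimpleGraph V) (r k : ℕ) : Prop :=
  ArrowsClique G r k ∧ ∀ H : G.Subgraph, H ≠ ⊤ → ¬ ArrowsClique H.coe r k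

/-- The minimum degree of `G`. -/
noncomputable def minDeg {n : ℕ} (G : SimpleGraph (Fin n)) : ℕ :=
  sInf (Set.range fun v : Fin n => {u : Fin n | G.Adj v u}.ncard)

/-- `s_r(k)`: the smallest minimum degree over all graphs that are `r`-Ramsey minimal
for `K_k`. -/
noncomputable def sRamseyMinDeg (r k : ℕ) : ℕ :=
  sInf {δ : ℕ | ∃ (n : ℕ) (G : SimpleGraph (Fin n)), RamseyMinimal G r k ∧ minDeg G = δ}

namespace SRam

open Finset

/-! ### The lower bound -/

/-- If every set of `q + 2` vertices of `W` misses a pair of each relation `R i`, and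
`64 * |W| ≤ j ^ 2 * q`, then `W` can be coloured with `j` colours so that no `q + 1` vertices of
colour `i` are pairwise related by `R i`. The colour class of the last colour is a large subset of
`W` without a clique of size `q + 1` of its relation, and the rest is coloured inductively. -/
lemma greedy_color {V : Type*} [DecidableEq V] (q : ℕ) (hq : 1 ≤ q) (R : ℕ → V → V → Prop)
    (hsymm : ∀ i u v, R i u v → R i v u) :
    ∀ (j : ℕ) (W : Finset V)
    (_ : ∀ i, ∀ S ⊆ W, S.card = q + 2 → ¬ (∀ u ∈ S, ∀ v ∈ S, u ≠ v → R i u v)),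
    64 * W.card ≤ j ^ 2 * q →
    ∃ f : V → ℕ, (∀ v ∈ W, f v < j) ∧ ∀ i, ∀ S ⊆ W, S.card = q + 1 → (∀ v ∈ S, f v = i) →
      ¬ (∀ u ∈ S, ∀ v ∈ S, u ≠ v → R i u v) := by
  classical
  intro j
  induction j with
  | zero =>
    intro W _ hW
    have hW0 : W = ∅ := by
      rw [← Finset.card_eq_zero]; simpa using hW
    subst hW0
    refine ⟨fun _ => 0, by simp, ?_⟩
    intro i S hS hc
    have : S = ∅ := Finset.subset_empty.mp hS
    subst this; simp at hc
  | succ j ih =>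
    intro W hfree hW
    by_cases hsmall : 64 * W.card ≤ j ^ 2 * q
    · obtain ⟨f, hf1, hf2⟩ := ih W hfree hsmall
      exact ⟨f, fun v hv => (hf1 v hv).trans (Nat.lt_succ_self j), hf2⟩
    push Not at hsmall
    -- a large subset without a clique of size `q + 1` in the relation `R j`
    have key : ∃ U ⊆ W, (∀ S ⊆ U, S.card = q + 1 → ¬ (∀ u ∈ S, ∀ v ∈ S, u ≠ v → R j u v)) ∧
        (W = U ∨ (2 * j + 1) * q ≤ 64 * U.card) := by
      by_contra hcon
      push Not at hcon
      have hcon' : ∀ U ⊆ W, (∀ S ⊆ U, S.card = q + 1 →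
          ¬ (∀ u ∈ S, ∀ v ∈ S, u ≠ v → R j u v)) → 64 * U.card < (2 * j + 1) * q ∧ W ≠ U := by
        intro U hU h
        have := hcon U hU (fun S hS hc => by
          have := h S hS hc; push Not at this; exact this)
        exact ⟨this.2, this.1⟩
      have hqW : q < W.card := by
        by_contra hlt
        push Not at hlt
        refine (hcon' W subset_rfl ?_).2 rfl
        intro S hS hc
        have := Finset.card_le_card hS
        omega
      have hj : 32 ≤ j := by
        obtain ⟨U, hU, hUc⟩ := Finset.exists_subset_card_eq hqW.le
        have := (hcon' U hU (by
          intro S hS hc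
          have := Finset.card_le_card hS
          omega)).1
        rw [hUc] at this
        have : 64 < 2 * j + 1 := lt_of_mul_lt_mul_right this (Nat.zero_le q)
        omega
      have hne : (W.powerset.filter (fun U => ∃ c : V → Fin q, ∀ u ∈ U, ∀ v ∈ U, u ≠ v →
          c u = c v → ¬ R j u v)).Nonempty :=
        ⟨∅, by
          simp only [mem_filter, mem_powerset, empty_subset, true_and]
          exact ⟨fun _ => ⟨0, hq⟩, by simp⟩⟩
      -- `U` is a largest set split into `q` independent classes of `R j`; by maximality each outside
      -- vertex has a neighbour in every class
      obtain ⟨U, hUm, hmax⟩ := Finset.exists_max_image _ Finset.card hne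
      simp only [mem_filter, mem_powerset] at hUm hmax
      obtain ⟨hUW, c, hc⟩ := hUm
      have hUfree := (hcon' U hUW (by
        intro S hS hcard hcl
        obtain ⟨u, hu, v, hv, huv, he⟩ := Finset.exists_ne_map_eq_of_card_lt_of_maps_to
          (s := S) (t := (univ : Finset (Fin q))) (f := c) (by simp [hcard]) (by simp)
        exact hc u (hS hu) v (hS hv) huv he (hcl u hu v hv huv))).1
      -- neighbourhoods in `R j` have no clique of size `q + 1`, so they are small
      have hdeg : ∀ u ∈ W, 64 * (W.filter (fun w => w ≠ u ∧ R j u w)).card ≤ (2 * j + 1) * q := by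
        intro u hu
        refine (hcon' _ (Finset.filter_subset _ _) ?_).1.le
        intro S hS hcard hcl
        have hmem : ∀ x ∈ S, x ∈ W ∧ x ≠ u ∧ R j u x := fun x hx => by
          have := hS hx; simpa using this
        have huS : u ∉ S := fun h => (hmem u h).2.1 rfl
        refine hfree j (insert u S) ?_ (by rw [Finset.card_insert_of_notMem huS, hcard]) ?_
        · intro x hx
          rcases Finset.mem_insert.mp hx with rfl | hx
          · exact hu
          · exact (hmem x hx).1
        · intro x hx y hy hxy
          rcases Finset.mem_insert.mp hx with rfl | hx' <;>
          rcases Finset.mem_insert.mp hy with rfl | hy'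
          · exact absurd rfl hxy
          · exact (hmem y hy').2.2
          · exact hsymm _ _ _ (hmem x hx').2.2
          · exact hcl x hx' y hy' hxy
      have hout : ∀ w ∈ W \ U, q ≤ (U.filter (fun u => R j w u)).card := by
        intro w hw
        rw [mem_sdiff] at hw
        have hall : ∀ a : Fin q, ∃ u ∈ U.filter (fun u => R j w u), c u = a := by
          intro a
          by_contra hno
          push Not at hno
          have := hmax (insert w U) ⟨Finset.insert_subset hw.1 hUW, Function.update c w a, by
            intro u hu v hv huv he
            rcases Finset.mem_insert.mp hu with rfl | hu' <;>
            rcases Finset.mem_insert.mp hv with rfl | hv'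
            · exact absurd rfl huv
            · rw [Function.update_self, Function.update_of_ne huv.symm] at he
              intro hr
              exact hno v (by simp [hv', hr]) he.symm
            · rw [Function.update_self, Function.update_of_ne huv] at he
              intro hr
              exact hno u (by simp [hu', hsymm _ _ _ hr]) he
            · rw [Function.update_of_ne (by rintro rfl; exact hw.2 hu'),
                Function.update_of_ne (by rintro rfl; exact hw.2 hv')] at he
              exact hc u hu' v hv' huv he⟩
          rw [Finset.card_insert_of_notMem hw.2] at this
          omega
        have : (univ : Finset (Fin q)).card ≤ ((U.filter (fun u => R j w u)).image c).card := by
          apply Finset.card_le_card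
          intro a _
          obtain ⟨u, hu, hua⟩ := hall a
          exact Finset.mem_image.mpr ⟨u, hu, hua⟩
        simpa using this.trans Finset.card_image_le
      have h1 : (W \ U).card * q ≤ ∑ w ∈ W \ U, (U.filter (fun u => R j w u)).card := by
        rw [← smul_eq_mul]
        exact Finset.card_nsmul_le_sum _ _ _ hout
      have h2 : ∑ w ∈ W \ U, (U.filter (fun u => R j w u)).card
          = ∑ u ∈ U, ((W \ U).filter (fun w => R j w u)).card := by
        simp only [Finset.card_filter]
        rw [Finset.sum_comm]
      have h3 : ∀ u ∈ U, 64 * ((W \ U).filter (fun w => R j w u)).card ≤ (2 * j + 1) * q := by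
        intro u hu
        refine le_trans (Nat.mul_le_mul_left _ (Finset.card_le_card ?_)) (hdeg u (hUW hu))
        intro w hw
        simp only [mem_filter, mem_sdiff] at hw ⊢
        exact ⟨hw.1.1, by rintro rfl; exact hw.1.2 hu, hsymm _ _ _ hw.2⟩
      have h4 : 64 * ∑ u ∈ U, ((W \ U).filter (fun w => R j w u)).card
          ≤ U.card * ((2 * j + 1) * q) := by
        rw [Finset.mul_sum, ← smul_eq_mul U.card]
        exact Finset.sum_le_card_nsmul _ _ _ h3
      have h5 : 64 * ((W \ U).card * q) ≤ U.card * ((2 * j + 1) * q) := by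
        rw [h2] at h1
        exact (Nat.mul_le_mul_left _ h1).trans h4
      have h6 : 64 * (W \ U).card ≤ U.card * (2 * j + 1) := by
        have : (64 * (W \ U).card) * q ≤ (U.card * (2 * j + 1)) * q := by
          calc _ = 64 * ((W \ U).card * q) := by ring
            _ ≤ _ := h5
            _ = _ := by ring
        exact Nat.le_of_mul_le_mul_right this hq
      have h7 : (W \ U).card + U.card = W.card := Finset.card_sdiff_add_card_eq_card hUW
      have h8 : 64 * W.card ≤ U.card * (2 * j + 65) := by
        rw [← h7]; nlinarith
      have h9 : 64 * (64 * W.card) ≤ (2 * j + 1) * q * (2 * j + 65) := by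
        calc 64 * (64 * W.card) ≤ 64 * (U.card * (2 * j + 65)) := Nat.mul_le_mul_left _ h8
          _ = (64 * U.card) * (2 * j + 65) := by ring
          _ ≤ _ := Nat.mul_le_mul_right _ hUfree.le
      have h10 : 64 * (j ^ 2 * q) < (2 * j + 1) * q * (2 * j + 65) := by omega
      have h11 : (64 * j ^ 2) * q < ((2 * j + 1) * (2 * j + 65)) * q := by nlinarith
      have h12 : 64 * j ^ 2 < (2 * j + 1) * (2 * j + 65) :=
        lt_of_mul_lt_mul_right h11 (Nat.zero_le q)
      nlinarith
    obtain ⟨U, hUW, hU1, hU2⟩ := key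
    have hsmall' : 64 * (W \ U).card ≤ j ^ 2 * q := by
      rcases hU2 with h | h
      · subst h; simp
      · have := Finset.card_sdiff_add_card_eq_card hUW
        nlinarith
    obtain ⟨f, hf1, hf2⟩ := ih (W \ U)
      (fun i S hS => hfree i S (hS.trans Finset.sdiff_subset)) hsmall'
    refine ⟨fun v => if v ∈ U then j else f v, ?_, ?_⟩
    · intro v hv
      dsimp only
      split_ifs with h
      · exact Nat.lt_succ_self j
      · exact (hf1 v (mem_sdiff.mpr ⟨hv, h⟩)).trans (Nat.lt_succ_self j)
    · intro i S hS hcard hi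
      beta_reduce at hi
      by_cases hij : i = j
      · subst hij
        refine hU1 S (fun v hv => ?_) hcard
        by_contra hvU
        have h1 := hi v hv
        rw [if_neg hvU] at h1
        have h2 := hf1 v (mem_sdiff.mpr ⟨hS hv, hvU⟩)
        omega
      · have hno : ∀ v ∈ S, v ∉ U := fun v hv hvU => hij (by
          have := hi v hv
          rw [if_pos hvU] at this
          exact this.symm)
        refine hf2 i S (fun v hv => mem_sdiff.mpr ⟨hS hv, hno v hv⟩) hcard ?_
        intro v hv
        have := hi v hv
        rwa [if_neg (hno v hv)] at this

lemma minDeg_attained {n : ℕ} (hn : 0 < n) (G : SimpleGraph (Fin n)) :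
    ∃ v, minDeg G = {u : Fin n | G.Adj v u}.ncard := by
  have : Nonempty (Fin n) := ⟨⟨0, hn⟩⟩
  obtain ⟨v, hv⟩ := Nat.sInf_mem (Set.range_nonempty fun v : Fin n => {u : Fin n | G.Adj v u}.ncard)
  exact ⟨v, hv.symm⟩

lemma arrows_pos {V : Type*} {G : SimpleGraph V} {r k : ℕ} (hr : 1 ≤ r) (hk : 1 ≤ k)
    (h : ArrowsClique G r k) : Nonempty V := by
  obtain ⟨i, S, hS, -⟩ := h (fun _ => ⟨0, hr⟩)
  obtain ⟨x, -⟩ := Finset.card_pos.mp (by omega : 0 < S.card)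
  exact ⟨x⟩

/-- Delete a vertex `v` of minimum degree from a Ramsey minimal graph and colour the remaining edges
without a monochromatic `K_k`. If the degree of `v` were small, `greedy_color` would colour the
edges at `v` without creating one. -/
lemma lower_bound {r k n : ℕ} (hr : 1 ≤ r) (hk : 3 ≤ k) (G : SimpleGraph (Fin n))
    (hG : RamseyMinimal G r k) : r ^ 2 * (k - 2) < 64 * minDeg G := by
  classical
  obtain ⟨hA, hmin⟩ := hG
  have hn : 0 < n := by
    obtain ⟨x⟩ := arrows_pos hr (by omega) hA
    exact x.pos
  obtain ⟨v, hv⟩ := minDeg_attained hn G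
  rw [hv]
  by_contra hcon
  push Not at hcon
  set N : Finset (Fin n) := univ.filter (fun u => G.Adj v u) with hN
  have hNc : {u : Fin n | G.Adj v u}.ncard = N.card := by
    rw [← Set.ncard_coe_finset]; congr 1; ext u; simp [hN]
  rw [hNc] at hcon
  let H : G.Subgraph :=
    { verts := {u | u ≠ v}
      Adj := fun u w => G.Adj u w ∧ u ≠ v ∧ w ≠ v
      adj_sub := fun h => h.1
      edge_vert := fun h => h.2.1
      symm := ⟨fun u w h => ⟨h.1.symm, h.2.2, h.2.1⟩⟩ }
  have hH : H ≠ ⊤ := by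
    intro h
    have : v ∈ H.verts := by rw [h]; trivial
    exact this rfl
  have hna := hmin H hH
  unfold ArrowsClique at hna
  push Not at hna
  obtain ⟨c, hc⟩ := hna
  have hinj : Function.Injective (Sym2.map (Subtype.val : H.verts → Fin n)) :=
    Sym2.map.injective Subtype.val_injective
  let c0 : Sym2 (Fin n) → Fin r := fun e =>
    if h : ∃ e', Sym2.map (Subtype.val : H.verts → Fin n) e' = e then c h.choose else ⟨0, hr⟩
  have hc0 : ∀ e', c0 (Sym2.map Subtype.val e') = c e' := by
    intro e'
    have h : ∃ e'', Sym2.map (Subtype.val : H.verts → Fin n) e'' = Sym2.map Subtype.val e' :=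
      ⟨e', rfl⟩
    simp only [c0]
    rw [dif_pos h]
    exact congrArg c (hinj h.choose_spec)
  have hgood : ∀ i : Fin r, ∀ S : Finset (Fin n), S.card = k → v ∉ S →
      ¬ (∀ u ∈ S, ∀ w ∈ S, u ≠ w → G.Adj u w ∧ c0 s(u, w) = i) := by
    intro i S hS hvS hcl
    have hSv : ∀ u ∈ S, u ∈ H.verts := fun u hu h => hvS (h ▸ hu)
    obtain ⟨a, ha, b, hb, hab, hne⟩ := hc i (S.subtype (· ∈ H.verts)) (by
      rw [Finset.card_subtype, Finset.filter_true_of_mem hSv, hS])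
    rw [Finset.mem_subtype] at ha hb
    have h1 := hcl a ha b hb (fun h => hab (Subtype.ext h))
    refine hne ⟨h1.1, a.2, b.2⟩ ?_
    rw [← hc0]
    exact h1.2
  have hq : k - 2 + 2 = k := by omega
  obtain ⟨f, hf1, hf2⟩ := greedy_color (k - 2) (by omega)
    (fun i u w => G.Adj u w ∧ ((c0 s(u, w) : Fin r) : ℕ) = i)
    (fun i u w h => ⟨h.1.symm, by rw [Sym2.eq_swap]; exact h.2⟩) r N (by
      intro i S hS hcard hcl
      rw [hq] at hcard
      have hvS : v ∉ S := fun h => by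
        have := hS h
        simp [hN] at this
      have h2 : 1 < S.card := by omega
      obtain ⟨a, ha, b, hb, hab⟩ := Finset.one_lt_card.mp h2
      refine hgood (c0 s(a, b)) S hcard hvS ?_
      intro u hu w hw huw
      refine ⟨(hcl u hu w hw huw).1, Fin.ext ?_⟩
      rw [(hcl u hu w hw huw).2, (hcl a ha b hb hab).2]) hcon
  let c1 : Sym2 (Fin n) → Fin r := fun e =>
    if h : v ∈ e then ⟨f (Sym2.Mem.other h) % r, Nat.mod_lt _ hr⟩ else c0 e
  have hc1 : ∀ u ∈ N, ((c1 s(v, u) : Fin r) : ℕ) = f u := by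
    intro u hu
    have h : v ∈ s(v, u) := Sym2.mem_mk_left v u
    have h2 : Sym2.Mem.other h = u := Sym2.congr_right.mp (Sym2.other_spec h)
    simp only [c1]
    rw [dif_pos h, h2]
    exact Nat.mod_eq_of_lt (hf1 u hu)
  have hc1' : ∀ u w, u ≠ v → w ≠ v → c1 s(u, w) = c0 s(u, w) := by
    intro u w hu hw
    simp only [c1]
    rw [dif_neg]
    rw [Sym2.mem_iff]
    rintro (h | h)
    · exact hu h.symm
    · exact hw h.symm
  obtain ⟨i, S, hS, hcl⟩ := hA c1
  by_cases hvS : v ∈ S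
  · have hmem : ∀ u ∈ S.erase v, u ≠ v ∧ u ∈ S := fun u hu => by simpa using hu
    have hsub : S.erase v ⊆ N := by
      intro u hu
      obtain ⟨h1, h2⟩ := hmem u hu
      simp [hN, (hcl v hvS u h2 h1.symm).1]
    refine hf2 i (S.erase v) hsub (by rw [Finset.card_erase_of_mem hvS, hS]; omega) ?_ ?_
    · intro u hu
      obtain ⟨h1, h2⟩ := hmem u hu
      rw [← hc1 u (hsub hu), (hcl v hvS u h2 h1.symm).2]
    · intro u hu w hw huw
      obtain ⟨h1, h2⟩ := hmem u hu
      obtain ⟨h3, h4⟩ := hmem w hw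
      have := hcl u h2 w h4 huw
      rw [hc1' u w h1 h3] at this
      exact ⟨this.1, congrArg Fin.val this.2⟩
  · refine hgood i S hS hvS ?_
    intro u hu w hw huw
    have := hcl u hu w hw huw
    rwa [hc1' u w (fun h => hvS (h ▸ hu)) (fun h => hvS (h ▸ hw))] at this

/-! ### Partite amalgamation -/

/-- A finite vertex set with a partial colouring of the pairs by `Fin r` (uncoloured pairs are
non-edges) and a projection to an index set `I`, such that edges join different fibres. -/
structure Sys (I : Type) (r : ℕ) where
  /-- the vertices -/
  V : Type
  /-- there are finitely many vertices -/
  fin : Finite V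
  /-- the colour of a pair, `none` for a non-edge -/
  col : V → V → Option (Fin r)
  /-- the index of the part containing a vertex -/
  proj : V → I
  symm : ∀ u w, col u w = col w u
  part : ∀ u w, col u w ≠ none → proj u ≠ proj w

/-- No `k` vertices span a complete graph all of whose pairs have the same colour. -/
def Good {V : Type*} {r : ℕ} (k : ℕ) (col : V → V → Option (Fin r)) : Prop :=
  ∀ (i : Fin r) (S : Finset V), S.card = k → ¬ ∀ u ∈ S, ∀ w ∈ S, u ≠ w → col u w = some i

section amalgam
variable {I : Type} {r : ℕ} (P : Sys I r) (a b : I) (i : Fin r)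

/-- The edges of colour `i` between the parts `a` and `b`. -/
abbrev EdgeT : Type := {p : P.V × P.V // P.proj p.1 = a ∧ P.proj p.2 = b ∧ P.col p.1 p.2 = some i}

variable {P a b i} {ι : Type}

/-- First coordinates of the points of a combinatorial line, with `x` at the moving places. -/
def vecA (l : Combinatorics.Line (EdgeT P a b i) ι) (x : P.V) : ι → P.V :=
  fun t => ((l.idxFun t).map (fun e => e.1.1)).getD x

/-- Second coordinates of the points of a combinatorial line, with `x` at the moving places. -/
def vecB (l : Combinatorics.Line (EdgeT P a b i) ι) (x : P.V) : ι → P.V :=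
  fun t => ((l.idxFun t).map (fun e => e.1.2)).getD x

lemma vecA_inj (l : Combinatorics.Line (EdgeT P a b i) ι) : Function.Injective (vecA l) := by
  intro x y h
  obtain ⟨t, ht⟩ := l.proper
  have := congrFun h t
  simpa [vecA, ht] using this

lemma vecB_inj (l : Combinatorics.Line (EdgeT P a b i) ι) : Function.Injective (vecB l) := by
  intro x y h
  obtain ⟨t, ht⟩ := l.proper
  have := congrFun h t
  simpa [vecB, ht] using this

variable (P a b i ι)
/-- The vertices of the amalgam: vectors over the part `a`, vectors over the part `b`, and a copy
of the remaining vertices for each combinatorial line. -/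
abbrev AmV : Type :=
  (ι → P.V) ⊕ (ι → P.V) ⊕ (Combinatorics.Line (EdgeT P a b i) ι × P.V)
variable {P a b i ι}

open Classical in
/-- The colour of a pair of vectors: the value at a coordinate not coloured `i`, if any. -/
noncomputable def bip (P : Sys I r) (i : Fin r) (x y : ι → P.V) : Option (Fin r) :=
  if h : ∃ t, P.col (x t) (y t) ≠ some i then P.col (x h.choose) (y h.choose) else some i

/-- Along a combinatorial line the moving coordinates all show the pair `(x, y)`, and the fixed ones
have colour `i`; so the colours between the vectors of a line are those of `P`. -/
lemma bip_line (l : Combinatorics.Line (EdgeT P a b i) ι) (x y : P.V) :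
    bip P i (vecA l x) (vecB l y) = P.col x y := by
  unfold bip
  have hv : ∀ t, P.col (vecA l x t) (vecB l y t) ≠ some i →
      P.col (vecA l x t) (vecB l y t) = P.col x y := by
    intro t ht
    unfold vecA vecB at *
    cases h : l.idxFun t with
    | none => simp
    | some e =>
      rw [h] at ht
      exact absurd e.2.2.2 ht
  split_ifs with h
  · exact hv _ h.choose_spec
  · push Not at h
    obtain ⟨t, ht⟩ := l.proper
    have := h t
    simp only [vecA, vecB, ht] at this
    exact this.symm

open Classical in
/-- The colour of the pair formed by the vertex `z` of the copy belonging to `l` and `q`. -/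
noncomputable def copyCol (l : Combinatorics.Line (EdgeT P a b i) ι) (z : P.V) :
    AmV P a b i ι → Option (Fin r)
  | Sum.inl x => if h : ∃ v, P.proj v = a ∧ vecA l v = x then P.col z h.choose else none
  | Sum.inr (Sum.inl y) => if h : ∃ v, P.proj v = b ∧ vecB l v = y then P.col z h.choose else none
  | Sum.inr (Sum.inr (l', z')) => if l' = l then P.col z z' else none

/-- The colouring of the amalgam. -/
noncomputable def amCol : AmV P a b i ι → AmV P a b i ι → Option (Fin r)
  | Sum.inl _, Sum.inl _ => none
  | Sum.inl x, Sum.inr (Sum.inl y) => bip P i x y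
  | Sum.inr (Sum.inl y), Sum.inl x => bip P i x y
  | Sum.inr (Sum.inl _), Sum.inr (Sum.inl _) => none
  | Sum.inr (Sum.inr (l, z)), q => copyCol l z q
  | q, Sum.inr (Sum.inr (l, z)) => copyCol l z q

/-- `q` is the vertex corresponding to `v` in the copy belonging to `l`. -/
def InCopy (l : Combinatorics.Line (EdgeT P a b i) ι) : AmV P a b i ι → P.V → Prop
  | Sum.inl x, v => P.proj v = a ∧ vecA l v = x
  | Sum.inr (Sum.inl y), v => P.proj v = b ∧ vecB l v = y
  | Sum.inr (Sum.inr (l', z')), v => l' = l ∧ z' = v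

lemma same_part {u w : P.V} (h : P.proj u = P.proj w) : P.col u w = none := by
  by_contra hn
  exact P.part u w hn h

lemma copyCol_eq (l : Combinatorics.Line (EdgeT P a b i) ι) (z : P.V) (q : AmV P a b i ι) (v : P.V)
    (h : InCopy l q v) : copyCol l z q = P.col z v := by
  rcases q with x | y | ⟨l', z'⟩
  · have hex : ∃ v, P.proj v = a ∧ vecA l v = x := ⟨v, h⟩
    simp only [copyCol]
    rw [dif_pos hex, vecA_inj l (hex.choose_spec.2.trans h.2.symm)]
  · have hex : ∃ v, P.proj v = b ∧ vecB l v = y := ⟨v, h⟩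
    simp only [copyCol]
    rw [dif_pos hex, vecB_inj l (hex.choose_spec.2.trans h.2.symm)]
  · obtain ⟨h1, h2⟩ := h
    simp [copyCol, h1, h2]

lemma inCopy_of_copyCol (l : Combinatorics.Line (EdgeT P a b i) ι) (z : P.V) (q : AmV P a b i ι)
    (h : copyCol l z q ≠ none) : ∃ v, InCopy l q v := by
  rcases q with x | y | ⟨l', z'⟩
  · simp only [copyCol] at h
    split_ifs at h with hex
    · exact hex
    · exact absurd rfl h
  · simp only [copyCol] at h
    split_ifs at h with hex
    · exact hex
    · exact absurd rfl h
  · simp only [copyCol] at h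
    split_ifs at h with hex
    · exact ⟨z', hex, rfl⟩
    · exact absurd rfl h

lemma amCol_symm (p q : AmV P a b i ι) : amCol p q = amCol q p := by
  rcases p with x | y | ⟨l, z⟩ <;> rcases q with x' | y' | ⟨l', z'⟩ <;> try rfl
  simp only [amCol, copyCol]
  by_cases h : l = l'
  · subst h; simp [P.symm z z']
  · rw [if_neg h, if_neg (Ne.symm h)]

/-- Each combinatorial line carries a copy of `P`. -/
lemma amCol_eq (l : Combinatorics.Line (EdgeT P a b i) ι) (p q : AmV P a b i ι) (u v : P.V)
    (hp : InCopy l p u) (hq : InCopy l q v) : amCol p q = P.col u v := by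
  have third : ∀ (z : P.V) (q : AmV P a b i ι) (v : P.V), InCopy l q v →
      amCol (Sum.inr (Sum.inr (l, z))) q = P.col z v := fun z q v h => by
    simp only [amCol]; exact copyCol_eq l z q v h
  rcases p with x | y | ⟨l', z⟩
  · rcases q with x' | y' | ⟨l', z'⟩
    · exact (same_part (hp.1.trans hq.1.symm)).symm
    · obtain ⟨-, rfl⟩ := hp
      obtain ⟨-, rfl⟩ := hq
      exact bip_line l u v
    · obtain ⟨rfl, rfl⟩ := hq
      rw [amCol_symm, P.symm]
      exact third _ _ _ hp
  · rcases q with x' | y' | ⟨l', z'⟩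
    · obtain ⟨-, rfl⟩ := hp
      obtain ⟨-, rfl⟩ := hq
      rw [P.symm]
      exact bip_line l v u
    · exact (same_part (hp.1.trans hq.1.symm)).symm
    · obtain ⟨rfl, rfl⟩ := hq
      rw [amCol_symm, P.symm]
      exact third _ _ _ hp
  · obtain ⟨rfl, rfl⟩ := hp
    exact third _ _ _ hq

variable (P a b i ι) in
/-- The part of a vertex of the amalgam. -/
def amProj : AmV P a b i ι → I
  | Sum.inl _ => a
  | Sum.inr (Sum.inl _) => b
  | Sum.inr (Sum.inr (_, z)) => P.proj z

lemma inCopy_proj (l : Combinatorics.Line (EdgeT P a b i) ι) (q : AmV P a b i ι) (v : P.V)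
    (h : InCopy l q v) : amProj P a b i ι q = P.proj v := by
  rcases q with x | y | ⟨l', z'⟩
  · exact h.1.symm
  · exact h.1.symm
  · exact congrArg _ h.2

lemma amPart (hab : a ≠ b) (p q : AmV P a b i ι) (h : amCol p q ≠ none) :
    amProj P a b i ι p ≠ amProj P a b i ι q := by
  have third : ∀ l z (q : AmV P a b i ι), amCol (Sum.inr (Sum.inr (l, z))) q ≠ none →
      amProj P a b i ι (Sum.inr (Sum.inr (l, z))) ≠ amProj P a b i ι q := by
    intro l z q h
    simp only [amCol] at h
    obtain ⟨v, hv⟩ := inCopy_of_copyCol l z q h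
    rw [copyCol_eq l z q v hv] at h
    rw [inCopy_proj l q v hv]
    exact P.part _ _ h
  rcases p with x | y | ⟨l, z⟩
  · rcases q with x' | y' | ⟨l', z'⟩
    · exact absurd rfl h
    · exact hab
    · rw [amCol_symm] at h
      exact (third _ _ _ h).symm
  · rcases q with x' | y' | ⟨l', z'⟩
    · exact hab.symm
    · exact absurd rfl h
    · rw [amCol_symm] at h
      exact (third _ _ _ h).symm
  · exact third _ _ _ h

/-- A clique of the amalgam with at least three vertices contains a vertex outside the two vector
parts, hence lies in the copy of `P` to which that vertex belongs. -/
lemma amGood {k : ℕ} (hk : 3 ≤ k) (hP : Good k P.col) :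
    Good k (amCol : AmV P a b i ι → AmV P a b i ι → Option (Fin r)) := by
  classical
  intro j S hS hcl
  by_cases h3 : ∃ l z, (Sum.inr (Sum.inr (l, z)) : AmV P a b i ι) ∈ S
  · obtain ⟨l, z, hz⟩ := h3
    have hex : ∀ q : AmV P a b i ι, ∃ v, q ∈ S → InCopy l q v := by
      intro q
      by_cases hq : q ∈ S
      · by_cases hqz : (Sum.inr (Sum.inr (l, z)) : AmV P a b i ι) = q
        · exact ⟨z, fun _ => hqz ▸ ⟨rfl, rfl⟩⟩
        · obtain ⟨v, hv⟩ := inCopy_of_copyCol l z q (by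
            have := hcl _ hz q hq hqz
            simp only [amCol] at this
            rw [this]; simp)
          exact ⟨v, fun _ => hv⟩
      · exact ⟨z, fun h => absurd h hq⟩
    choose g hg using hex
    have hcol : ∀ p ∈ S, ∀ q ∈ S, p ≠ q → P.col (g p) (g q) = some j := by
      intro p hp q hq hpq
      rw [← amCol_eq l p q _ _ (hg p hp) (hg q hq)]
      exact hcl p hp q hq hpq
    have hinj : Set.InjOn g S := by
      intro p hp q hq hpq
      by_contra hne
      have h1 := hcol p hp q hq hne
      rw [same_part (by rw [hpq])] at h1
      simp at h1
    refine hP j (S.image g) (by rw [Finset.card_image_of_injOn hinj, hS]) ?_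
    intro u hu w hw huw
    obtain ⟨p, hp, rfl⟩ := Finset.mem_image.mp hu
    obtain ⟨q, hq, rfl⟩ := Finset.mem_image.mp hw
    exact hcol p hp q hq (fun h => huw (by rw [h]))
  · push Not at h3
    -- three vertices in two independent classes
    obtain ⟨p, hp, q, hq, hpq, he⟩ := Finset.exists_ne_map_eq_of_card_lt_of_maps_to
      (s := S) (t := (univ : Finset Bool)) (f := fun p => p.isLeft) (by simp; omega)
      (fun _ _ => Finset.mem_coe.mpr (Finset.mem_univ _))
    have := hcl p hp q hq hpq
    rcases p with x | y | ⟨l, z⟩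
    · rcases q with x' | y' | ⟨l', z'⟩
      · simp [amCol] at this
      · simp at he
      · exact h3 _ _ hq
    · rcases q with x' | y' | ⟨l', z'⟩
      · simp at he
      · simp [amCol] at this
      · exact h3 _ _ hq
    · exact h3 _ _ hp

end amalgam

/-- `f` is an embedding of coloured systems. -/
def IsEmb {I : Type} {r : ℕ} (P P' : Sys I r) (f : P.V → P'.V) : Prop :=
  (∀ u w, P'.col (f u) (f w) = P.col u w) ∧ (∀ u, P'.proj (f u) = P.proj u) ∧ Function.Injective f

/-- The recolouring `c` of `P'` is constant on the `f`-image of the edges of colour `i`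
between the parts `a` and `b` of `P`. -/
def ConstOn {I : Type} {r : ℕ} (P P' : Sys I r) (f : P.V → P'.V) (c : Sym2 P'.V → Fin r)
    (t : I × I × Fin r) : Prop :=
  ∃ τ, ∀ x y, P.proj x = t.1 → P.proj y = t.2.1 → P.col x y = some t.2.2 → c s(f x, f y) = τ

/-- One step of partite amalgamation: the Hales–Jewett theorem, applied to the edges of one colour
between two parts, gives a larger good system all of whose recolourings
contain a copy of `P` on which these edges are monochromatic. -/
lemma amalgam {I : Type} {r k : ℕ} (hk : 3 ≤ k) (P : Sys I r) (hP : Good k P.col)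
    (t : I × I × Fin r) (hab : t.1 ≠ t.2.1) :
    ∃ P' : Sys I r, Good k P'.col ∧ ∀ c : Sym2 P'.V → Fin r, ∃ f, IsEmb P P' f ∧
      ConstOn P P' f c t := by
  classical
  obtain ⟨a, b, i⟩ := t
  dsimp only at hab
  have := P.fin
  have : Finite (EdgeT P a b i) := inferInstance
  obtain ⟨ι, hι, hHJ⟩ :=
    Combinatorics.Line.exists_mono_in_high_dimension (EdgeT P a b i) (Fin r)
  have : Finite (Combinatorics.Line (EdgeT P a b i) ι) :=
    Finite.of_injective (fun l => l.idxFun) (by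
      intro l l' h
      cases l; cases l'; simp_all)
  refine ⟨⟨AmV P a b i ι, inferInstance, amCol, amProj P a b i ι, amCol_symm, amPart hab⟩,
    amGood hk hP, ?_⟩
  intro c
  obtain ⟨l, τ, hl⟩ := hHJ (fun p => c s(Sum.inl (fun t => (p t).1.1),
    Sum.inr (Sum.inl (fun t => (p t).1.2))))
  let f : P.V → AmV P a b i ι := fun v =>
    if P.proj v = a then Sum.inl (vecA l v) else
      if P.proj v = b then Sum.inr (Sum.inl (vecB l v)) else Sum.inr (Sum.inr (l, v))
  have hf : ∀ v, InCopy l (f v) v := by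
    intro v
    simp only [f]
    split_ifs with h1 h2
    · exact ⟨h1, rfl⟩
    · exact ⟨h2, rfl⟩
    · exact ⟨rfl, rfl⟩
  refine ⟨f, ⟨fun u w => amCol_eq l _ _ u w (hf u) (hf w), fun u => inCopy_proj l _ u (hf u), ?_⟩,
    τ, ?_⟩
  · intro u w huw
    have h1 := hf u
    have h2 := hf w
    rw [huw] at h1
    rcases hq : f w with x | y | ⟨l', z'⟩
    · rw [hq] at h1 h2
      exact vecA_inj l (h1.2.trans h2.2.symm)
    · rw [hq] at h1 h2
      exact vecB_inj l (h1.2.trans h2.2.symm)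
    · rw [hq] at h1 h2
      exact h1.2.symm.trans h2.2
  · intro x y hx hy hxy
    dsimp only at hx hy hxy
    have h := hl (⟨(x, y), hx, hy, hxy⟩ : EdgeT P a b i)
    have hfx : f x = Sum.inl (vecA l x) := by simp only [f]; rw [if_pos hx]
    have hfy : f y = Sum.inr (Sum.inl (vecB l y)) := by
      simp only [f]; rw [if_neg (by rw [hy]; exact hab.symm), if_pos hy]
    rw [hfx, hfy, ← h]
    dsimp only
    congr 3
    · funext t
      simp only [vecA]
      cases h : l.idxFun t with
      | none => rw [Combinatorics.Line.apply_none _ _ _ h]; rfl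
      | some e => rw [Combinatorics.Line.apply_some h]; rfl
    · congr 2
      funext t
      simp only [vecB]
      cases h : l.idxFun t with
      | none => rw [Combinatorics.Line.apply_none _ _ _ h]; rfl
      | some e => rw [Combinatorics.Line.apply_some h]; rfl

/-- Partite amalgamation for a list of pairs of parts and colours, one after the other. -/
lemma amalgam_list {I : Type} {r k : ℕ} (hk : 3 ≤ k) (P : Sys I r) (hP : Good k P.col)
    (L : List (I × I × Fin r)) (hL : ∀ t ∈ L, t.1 ≠ t.2.1) :
    ∃ P' : Sys I r, Good k P'.col ∧ ∀ c : Sym2 P'.V → Fin r, ∃ f, IsEmb P P' f ∧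
      ∀ t ∈ L, ConstOn P P' f c t := by
  induction L with
  | nil => exact ⟨P, hP, fun c => ⟨id, ⟨by simp, by simp, Function.injective_id⟩, by simp⟩⟩
  | cons t L ih =>
    obtain ⟨P1, hP1, h1⟩ := ih (fun t ht => hL t (List.mem_cons_of_mem _ ht))
    obtain ⟨P2, hP2, h2⟩ := amalgam hk P1 hP1 t (hL t List.mem_cons_self)
    refine ⟨P2, hP2, fun c => ?_⟩
    obtain ⟨f2, ⟨e1, e2, e3⟩, τ, hτ⟩ := h2 c
    obtain ⟨f1, ⟨d1, d2, d3⟩, hf1⟩ := h1 (fun e => c (e.map f2))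
    refine ⟨f2 ∘ f1, ⟨fun u w => by simp [e1, d1], fun u => by simp [e2, d2], e3.comp d3⟩, ?_⟩
    intro t' ht'
    rcases List.mem_cons.mp ht' with rfl | ht'
    · exact ⟨τ, fun x y hx hy hxy => hτ _ _ (by rw [d2, hx]) (by rw [d2, hy]) (by rw [d1, hxy])⟩
    · obtain ⟨τ', hτ'⟩ := hf1 t' ht'
      exact ⟨τ', fun x y hx hy hxy => by simpa using hτ' x y hx hy hxy⟩

/-- Ramsey's theorem for pairs and finitely many colours. -/
lemma ramsey_pairs (C : Type) [Finite C] (s : ℕ) : ∃ N : ℕ, ∀ f : Fin N → Fin N → C,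
    ∃ S : Finset (Fin N), ∃ τ, S.card = s ∧ ∀ a ∈ S, ∀ b ∈ S, a < b → f a b = τ := by
  classical
  have := Fintype.ofFinite C
  have key : ∀ L : ℕ, ∃ M : ℕ, ∀ (N : ℕ) (f : Fin N → Fin N → C) (T : Finset (Fin N)),
      M ≤ T.card → ∃ S ⊆ T, ∃ g : Fin N → C, S.card = L ∧
        ∀ a ∈ S, ∀ b ∈ S, a < b → f a b = g a := by
    intro L
    induction L with
    | zero =>
      refine ⟨1, fun N f T hT => ?_⟩
      obtain ⟨x, -⟩ := Finset.card_pos.mp (by omega : 0 < T.card)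
      exact ⟨∅, by simp, fun _ => f x x, by simp⟩
    | succ L ih =>
      obtain ⟨M, hM⟩ := ih
      refine ⟨Fintype.card C * M + 2, fun N f T hT => ?_⟩
      have hne : T.Nonempty := Finset.card_pos.mp (by omega)
      set a := T.min' hne with ha
      have haT : a ∈ T := T.min'_mem hne
      obtain ⟨y, -, hy⟩ := Finset.exists_lt_card_fiber_of_mul_lt_card_of_maps_to
        (s := T.erase a) (t := (univ : Finset C)) (f := fun x => f a x) (n := M)
        (by simp) (by rw [Finset.card_erase_of_mem haT, Finset.card_univ]; omega)
      obtain ⟨S, hS, g, hc, hg⟩ := hM N f _ hy.le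
      have hST : ∀ x ∈ S, x ∈ T ∧ x ≠ a ∧ f a x = y := fun x hx => by
        have := hS hx
        simp only [mem_filter, mem_erase] at this
        exact ⟨this.1.2, this.1.1, this.2⟩
      have haS : a ∉ S := fun h => (hST a h).2.1 rfl
      refine ⟨insert a S, ?_, Function.update g a y, ?_, ?_⟩
      · intro x hx
        rcases Finset.mem_insert.mp hx with rfl | hx
        · exact haT
        · exact (hST x hx).1
      · rw [Finset.card_insert_of_notMem haS, hc]
      · intro u hu w hw huw
        rcases Finset.mem_insert.mp hw with rfl | hw'
        · rcases Finset.mem_insert.mp hu with rfl | hu'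
          · exact absurd huw (lt_irrefl _)
          · exact absurd huw (not_lt.mpr (T.min'_le _ (hST u hu').1))
        · rcases Finset.mem_insert.mp hu with rfl | hu'
          · rw [Function.update_self]; exact (hST w hw').2.2
          · rw [Function.update_of_ne (hST u hu').2.1]
            exact hg u hu' w hw' huw
  obtain ⟨M, hM⟩ := key (Fintype.card C * s + 1)
  refine ⟨M, fun f => ?_⟩
  obtain ⟨S, -, g, hc, hg⟩ := hM M f univ (by simp)
  obtain ⟨y, -, hy⟩ := Finset.exists_lt_card_fiber_of_mul_lt_card_of_maps_to
    (s := S) (t := (univ : Finset C)) (f := g) (n := s)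
    (by simp) (by rw [Finset.card_univ]; omega)
  obtain ⟨S', hS', hc'⟩ := Finset.exists_subset_card_eq hy.le
  refine ⟨S', y, hc', fun a ha b hb hab => ?_⟩
  have h1 := Finset.mem_filter.mp (hS' ha)
  have h2 := Finset.mem_filter.mp (hS' hb)
  rw [hg a h1.1 b h2.1 hab, h1.2]

/-! ### Recolourings that depend only on the old colour -/

/-- Disjoint copies of a coloured graph, one for each injection of its vertices into `I`. -/
def copies {α I : Type} [Finite α] [Finite I] {r : ℕ} (χ : α → α → Option (Fin r))
    (hs : ∀ u w, χ u w = χ w u) (hirr : ∀ u, χ u u = none) [DecidableEq (α ↪ I)] : Sys I r where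
  V := (α ↪ I) × α
  fin := inferInstance
  col p q := if p.1 = q.1 then χ p.2 q.2 else none
  proj p := p.1 p.2
  symm p q := by
    by_cases h : p.1 = q.1
    · rw [if_pos h, if_pos h.symm, hs]
    · rw [if_neg h, if_neg (Ne.symm h)]
  part p q h := by
    by_cases h1 : p.1 = q.1
    · rw [if_pos h1] at h
      intro h2
      rw [h1] at h2
      rw [q.1.injective h2, hirr] at h
      exact h rfl
    · rw [if_neg h1] at h
      exact absurd rfl h

lemma copies_good {α I : Type} [Finite α] [Finite I] {r k : ℕ}
    (χ : α → α → Option (Fin r))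
    (hs : ∀ u w, χ u w = χ w u) (hirr : ∀ u, χ u u = none) [DecidableEq (α ↪ I)]
    (hg : Good k χ) : Good k (copies (I := I) χ hs hirr).col := by
  classical
  change Good k (fun p q : (α ↪ I) × α => if p.1 = q.1 then χ p.2 q.2 else none)
  intro i S hS hcl
  have h1 : ∀ p ∈ S, ∀ q ∈ S, p ≠ q → p.1 = q.1 ∧ χ p.2 q.2 = some i := by
    intro p hp q hq hpq
    have := hcl p hp q hq hpq
    beta_reduce at this
    split_ifs at this with h
    exact ⟨h, this⟩
  have hinj : Set.InjOn (fun p : (α ↪ I) × α => p.2) S := by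
    intro p hp q hq hpq
    by_contra hne
    have := (h1 p hp q hq hne).2
    dsimp only at hpq
    rw [hpq, hirr] at this
    simp at this
  refine hg i (S.image (fun p : (α ↪ I) × α => p.2))
    (by rw [Finset.card_image_of_injOn hinj]; exact hS) ?_
  intro u hu w hw huw
  obtain ⟨p, hp, rfl⟩ := Finset.mem_image.mp hu
  obtain ⟨q, hq, rfl⟩ := Finset.mem_image.mp hw
  exact (h1 p hp q hq (fun h => huw (by rw [h]))).2

/-- For every good coloured graph `χ` there is a good coloured graph all of whose recolourings
contain a copy of `χ` on which the new colour is a function of the old one. -/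
lemma colour_ramsey {α : Type} [Finite α] {r k : ℕ} (hk : 3 ≤ k) (χ : α → α → Option (Fin r))
    (hs : ∀ u w, χ u w = χ w u) (hirr : ∀ u, χ u u = none) (hg : Good k χ) :
    ∃ (β : Type) (_ : Finite β) (χ' : β → β → Option (Fin r)),
      (∀ u w, χ' u w = χ' w u) ∧ (∀ u, χ' u u = none) ∧ Good k χ' ∧
      ∀ c : Sym2 β → Fin r, ∃ (σ : Fin r → Fin r) (e : α → β), Function.Injective e ∧
        (∀ u w, χ' (e u) (e w) = χ u w) ∧
        ∀ u w i, χ u w = some i → c s(e u, e w) = σ i := by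
  classical
  have := Fintype.ofFinite α
  obtain ⟨N, hN⟩ := ramsey_pairs (Fin r → Fin r) (Fintype.card α)
  obtain ⟨P, hP, h⟩ := amalgam_list hk (copies (I := Fin N) χ hs hirr)
    (copies_good χ hs hirr hg)
    ((univ : Finset (Fin N × Fin N × Fin r)).filter (fun t => t.1 ≠ t.2.1)).toList
    (by intro t ht; simpa using ht)
  refine ⟨P.V, P.fin, P.col, P.symm, fun u => same_part rfl, hP, fun c => ?_⟩
  obtain ⟨f, ⟨f1, f2, f3⟩, hf⟩ := h c
  have hτ : ∀ t : Fin N × Fin N × Fin r, ∃ τ, t.1 ≠ t.2.1 → ∀ x y,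
      (copies (I := Fin N) χ hs hirr).proj x = t.1 →
      (copies (I := Fin N) χ hs hirr).proj y = t.2.1 →
      (copies (I := Fin N) χ hs hirr).col x y = some t.2.2 → c s(f x, f y) = τ := by
    intro t
    by_cases ht : t.1 = t.2.1
    · exact ⟨t.2.2, fun h => absurd ht h⟩
    · obtain ⟨τ, h⟩ := hf t (by simpa using ht)
      exact ⟨τ, fun _ => h⟩
  choose τ hτ using hτ
  -- on the parts in `S`, the new colour of an edge depends only on its old colour
  obtain ⟨S, σ, hS, hσ⟩ := hN (fun a b i => τ (a, b, i))
  -- the copy whose vertices are placed in the parts of `S`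
  let φ : α ↪ Fin N := ((Fintype.equivFinOfCardEq (rfl : Fintype.card α = _)).toEmbedding.trans
    (S.orderEmbOfFin hS).toEmbedding)
  have hφS : ∀ u, φ u ∈ S := fun u => Finset.orderEmbOfFin_mem S hS _
  refine ⟨σ, fun u => f (φ, u), ?_, ?_, ?_⟩
  · intro u w huw
    exact congrArg Prod.snd (f3 huw)
  · intro u w
    exact (f1 _ _).trans (if_pos rfl)
  · intro u w i hi
    have hne : u ≠ w := by rintro rfl; rw [hirr] at hi; simp at hi
    have aux : ∀ u w, χ u w = some i → φ u < φ w → c s(f (φ, u), f (φ, w)) = σ i := by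
      intro u w hi hlt
      have h1 := hτ (φ u, φ w, i) hlt.ne (φ, u) (φ, w) rfl rfl (by simpa [copies] using hi)
      rw [h1]
      exact congrFun (hσ _ (hφS u) _ (hφS w) hlt) i
    rcases lt_trichotomy (φ u) (φ w) with hlt | heq | hlt
    · exact aux u w hi hlt
    · exact absurd (φ.injective heq) hne
    · rw [Sym2.eq_swap]
      exact aux w u (by rw [hs]; exact hi) hlt

lemma arrows_mono {V W : Type*} {G : SimpleGraph V} {H : SimpleGraph W} {r k : ℕ} (φ : V → W)
    (hφ : Function.Injective φ) (hadj : ∀ u w, G.Adj u w → H.Adj (φ u) (φ w))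
    (h : ArrowsClique G r k) : ArrowsClique H r k := by
  classical
  intro c
  obtain ⟨i, S, hS, hcl⟩ := h (fun e => c (e.map φ))
  refine ⟨i, S.image φ, by rw [Finset.card_image_of_injective _ hφ, hS], ?_⟩
  intro u hu w hw huw
  obtain ⟨p, hp, rfl⟩ := Finset.mem_image.mp hu
  obtain ⟨q, hq, rfl⟩ := Finset.mem_image.mp hw
  have := hcl p hp q hq (fun h => huw (by rw [h]))
  exact ⟨hadj _ _ this.1, by simpa using this.2⟩

/-- Every finite graph that arrows `K_k` contains a Ramsey-minimal graph. -/
lemma exists_minimal {W : Type} [Finite W] (F : SimpleGraph W) {r k : ℕ}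
    (hF : ArrowsClique F r k) : ∃ (n : ℕ) (G : SimpleGraph (Fin n)) (φ : Fin n → W),
      Function.Injective φ ∧ (∀ u w, G.Adj u w → F.Adj (φ u) (φ w)) ∧ RamseyMinimal G r k := by
  classical
  have := Fintype.ofFinite W
  let p : ℕ → Prop := fun s => ∃ (n : ℕ) (G : SimpleGraph (Fin n)) (φ : Fin n → W),
      Function.Injective φ ∧ (∀ u w, G.Adj u w → F.Adj (φ u) (φ w)) ∧ ArrowsClique G r k ∧
      n + {e : Fin n × Fin n | G.Adj e.1 e.2}.ncard = s
  have transfer : ∀ {V : Type} [Finite V] (G : SimpleGraph V), ArrowsClique G r k →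
      ∀ (ψ : V → W), Function.Injective ψ → (∀ u w, G.Adj u w → F.Adj (ψ u) (ψ w)) →
      p (Nat.card V + {e : V × V | G.Adj e.1 e.2}.ncard) := by
    intro V _ G hG ψ hψ hadj
    let ε := Finite.equivFin V
    refine ⟨Nat.card V, G.comap ε.symm, ψ ∘ ε.symm, hψ.comp ε.symm.injective, ?_, ?_, ?_⟩
    · intro u w h
      exact hadj _ _ h
    · exact arrows_mono ε ε.injective (fun u w h => by simpa using h) hG
    · congr 1
      rw [← Set.ncard_image_of_injective _ (ε.injective.prodMap ε.injective)]
      congr 1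
      ext ⟨x, y⟩
      simp only [Set.mem_ofPred_eq, Set.mem_image, SimpleGraph.comap_adj, Prod.exists,
        Prod.map_apply, Prod.mk.injEq]
      constructor
      · intro h
        exact ⟨_, _, h, by simp, by simp⟩
      · rintro ⟨a, b, h, rfl, rfl⟩
        simpa using h
  have hex : ∃ s, p s := ⟨_, transfer F hF id Function.injective_id (fun _ _ h => h)⟩
  obtain ⟨n, G, φ, hφ, hadj, hG, hs⟩ := Nat.find_spec hex
  refine ⟨n, G, φ, hφ, hadj, hG, ?_⟩
  intro H hH hHarr
  have h1 := transfer H.coe hHarr (fun v => φ v.1) (fun a b h => Subtype.ext (hφ h))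
    (fun u w h => hadj _ _ (H.adj_sub h))
  have h2 := Nat.find_min' hex h1
  rw [← hs] at h2
  have h3 : Nat.card H.verts ≤ n := by
    simpa using Nat.card_le_card_of_injective (Subtype.val : H.verts → Fin n)
      Subtype.val_injective
  have himg : {e : H.verts × H.verts | H.coe.Adj e.1 e.2}.ncard =
      {e : Fin n × Fin n | H.Adj e.1 e.2}.ncard := by
    rw [← Set.ncard_image_of_injective _
      (Subtype.val_injective.prodMap Subtype.val_injective)]
    congr 1
    ext ⟨x, y⟩
    simp only [Set.mem_ofPred_eq, Set.mem_image, Prod.exists, Prod.map_apply, Prod.mk.injEq,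
      Subtype.exists, SimpleGraph.Subgraph.coe_adj]
    constructor
    · rintro ⟨a, ha, b, hb, h, rfl, rfl⟩
      exact h
    · intro h
      exact ⟨x, H.edge_vert h, y, H.edge_vert h.symm, h, rfl, rfl⟩
  rw [himg] at h2
  have hsub : {e : Fin n × Fin n | H.Adj e.1 e.2} ⊆ {e : Fin n × Fin n | G.Adj e.1 e.2} :=
    fun e he => H.adj_sub he
  have h4 := Set.ncard_le_ncard hsub (Set.toFinite _)
  have h5 : Nat.card H.verts = n := by omega
  have h6 : H.verts = Set.univ := by
    apply Set.eq_univ_of_forall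
    intro v
    by_contra hv
    have : Nat.card H.verts < Nat.card (Fin n) := by
      rw [Nat.card_coe_set_eq]
      rw [← Set.ncard_univ]
      exact Set.ncard_lt_ncard ((Set.ssubset_univ_iff).mpr (fun h => hv (h ▸ trivial)))
    rw [Nat.card_fin] at this
    omega
  have h7 := Set.eq_of_subset_of_ncard_le hsub (by omega) (Set.toFinite _)
  apply hH
  apply SimpleGraph.Subgraph.ext
  · rw [h6]; rfl
  · funext x y
    have : (x, y) ∈ {e : Fin n × Fin n | H.Adj e.1 e.2} ↔
      (x, y) ∈ {e : Fin n × Fin n | G.Adj e.1 e.2} := by rw [h7]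
    exact propext this

/-! ### From edge-disjoint graphs to a Ramsey minimal graph -/

open Classical in
/-- The coloured graph to which the recolouring theorem is applied: the union of the graphs `G i`,
with colour `i` on the edges of `G i`, together with, for each pair `i ≠ j` of colours, a disjoint
`K_k` in which the edge `{0, 1}` has colour `i` and all others have colour `j`. A recolouring that
identifies `i` and `j` makes the latter monochromatic. -/
noncomputable def baseCol {U : Type} {r k : ℕ} (G : Fin r → SimpleGraph U) :
    U ⊕ (Fin r × Fin r × Fin k) → U ⊕ (Fin r × Fin r × Fin k) → Option (Fin r)
  | Sum.inl u, Sum.inl w => if h : ∃ i, (G i).Adj u w then some h.choose else none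
  | Sum.inr p, Sum.inr q =>
      if p.1 = q.1 ∧ p.2.1 = q.2.1 ∧ p.2.2 ≠ q.2.2 ∧ p.1 ≠ p.2.1 then
        some (if p.2.2.1 ≤ 1 ∧ q.2.2.1 ≤ 1 then p.1 else p.2.1) else none
  | _, _ => none

section
variable {U : Type} {r k : ℕ} {G : Fin r → SimpleGraph U}

lemma baseCol_symm (p q : U ⊕ (Fin r × Fin r × Fin k)) : baseCol G p q = baseCol G q p := by
  classical
  rcases p with u | p <;> rcases q with w | q <;> try rfl
  · simp only [baseCol, SimpleGraph.adj_comm]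
  · simp only [baseCol]
    by_cases h : p.1 = q.1 ∧ p.2.1 = q.2.1 ∧ p.2.2 ≠ q.2.2 ∧ p.1 ≠ p.2.1
    · have h' : q.1 = p.1 ∧ q.2.1 = p.2.1 ∧ q.2.2 ≠ p.2.2 ∧ q.1 ≠ q.2.1 :=
        ⟨h.1.symm, h.2.1.symm, h.2.2.1.symm, by rw [← h.1, ← h.2.1]; exact h.2.2.2⟩
      rw [if_pos h, if_pos h', h.1, h.2.1]
      by_cases h1 : p.2.2.1 ≤ 1 <;> by_cases h2 : q.2.2.1 ≤ 1 <;> simp [h1, h2]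
    · rw [if_neg h, if_neg]
      rintro ⟨h1, h2, h3, h4⟩
      exact h ⟨h1.symm, h2.symm, h3.symm, by rw [← h1, ← h2]; exact h4⟩

lemma baseCol_irr (p : U ⊕ (Fin r × Fin r × Fin k)) : baseCol G p p = none := by
  rcases p with u | p <;> simp [baseCol]

lemma baseCol_adj (hdisj : ∀ i j u w, (G i).Adj u w → (G j).Adj u w → i = j) (i : Fin r) (u w : U)
    (h : (G i).Adj u w) :
    baseCol G (Sum.inl u : U ⊕ (Fin r × Fin r × Fin k)) (Sum.inl w) = some i := by
  have hex : ∃ i, (G i).Adj u w := ⟨i, h⟩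
  simp only [baseCol]
  rw [dif_pos hex, hdisj _ _ _ _ hex.choose_spec h]

lemma baseCol_adj' (i : Fin r) (u w : U)
    (h : baseCol G (Sum.inl u : U ⊕ (Fin r × Fin r × Fin k)) (Sum.inl w) = some i) :
    (G i).Adj u w := by
  simp only [baseCol] at h
  split_ifs at h with hex
  · rw [← Option.some.inj h]
    exact hex.choose_spec

lemma baseCol_good (hk : 3 ≤ k)
    (hfree : ∀ i (S : Finset U), S.card = k → ¬ ∀ u ∈ S, ∀ w ∈ S, u ≠ w → (G i).Adj u w) :
    Good k (baseCol G : U ⊕ (Fin r × Fin r × Fin k) → _ → _) := by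
  classical
  intro a S hS hcl
  obtain ⟨p, hp⟩ := Finset.card_pos.mp (by omega : 0 < S.card)
  rcases p with u | p
  · have hR : S.toRight = ∅ := by
      apply Finset.eq_empty_of_forall_notMem
      intro q hq
      rw [Finset.mem_toRight] at hq
      have := hcl _ hp _ hq (by simp)
      simp [baseCol] at this
    have hc : S.toLeft.card = k := by
      have := Finset.card_toLeft_add_card_toRight (u := S)
      rw [hR] at this
      simpa [hS] using this
    refine hfree a S.toLeft hc ?_
    intro x hx y hy hxy
    rw [Finset.mem_toLeft] at hx hy
    exact baseCol_adj' a x y (hcl _ hx _ hy (by simpa using hxy))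
  · have hL : S.toLeft = ∅ := by
      apply Finset.eq_empty_of_forall_notMem
      intro q hq
      rw [Finset.mem_toLeft] at hq
      have := hcl _ hp _ hq (by simp)
      simp [baseCol] at this
    have hc : S.toRight.card = k := by
      have := Finset.card_toLeft_add_card_toRight (u := S)
      rw [hL] at this
      simpa [hS] using this
    have hcl' : ∀ x ∈ S.toRight, ∀ y ∈ S.toRight, x ≠ y →
        (x.1 = y.1 ∧ x.2.1 = y.2.1 ∧ x.2.2 ≠ y.2.2 ∧ x.1 ≠ x.2.1) ∧
        a = (if x.2.2.1 ≤ 1 ∧ y.2.2.1 ≤ 1 then x.1 else x.2.1) := by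
      intro x hx y hy hxy
      rw [Finset.mem_toRight] at hx hy
      have := hcl _ hx _ hy (by simpa using hxy)
      simp only [baseCol] at this
      rw [Option.ite_none_right_eq_some] at this
      exact ⟨this.1, (Option.some.inj this.2).symm⟩
    have hinj : Set.InjOn (fun x : Fin r × Fin r × Fin k => x.2.2) S.toRight := by
      intro x hx y hy hxy
      by_contra hne
      exact (hcl' x hx y hy hne).1.2.2.1 hxy
    have himg : S.toRight.image (fun x : Fin r × Fin r × Fin k => x.2.2) = univ := by
      apply Finset.eq_univ_of_card
      rw [Finset.card_image_of_injOn hinj, hc, Fintype.card_fin]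
    have hpt : ∀ z : Fin k, ∃ x ∈ S.toRight, x.2.2 = z := by
      intro z
      have : z ∈ S.toRight.image (fun x : Fin r × Fin r × Fin k => x.2.2) := by
        rw [himg]; simp
      simpa only [Finset.mem_image] using this
    obtain ⟨x0, hx0, h0⟩ := hpt ⟨0, by omega⟩
    obtain ⟨x1, hx1, h1⟩ := hpt ⟨1, by omega⟩
    obtain ⟨x2, hx2, h2⟩ := hpt ⟨2, by omega⟩
    have h01 := hcl' x0 hx0 x1 hx1 (by intro h; rw [h, h1] at h0; simp at h0)
    have h02 := hcl' x0 hx0 x2 hx2 (by intro h; rw [h, h2] at h0; simp at h0)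
    have e1 := h01.2
    have e2 := h02.2
    rw [h0, h1] at e1
    rw [h0, h2] at e2
    simp only [zero_le, le_refl, and_self, if_true] at e1
    rw [if_neg (by simp)] at e2
    exact h01.1.2.2.2 (e1.symm.trans e2)
end

/-- If the complete graph on `U` contains `r` edge-disjoint `K_k`-free graphs such that every
colouring of `U` with `r` colours has a `(k-1)`-clique of the `i`-th graph within the
`i`-th colour class, then some `r`-Ramsey-minimal graph for `K_k` has minimum degree
at most `|U|`. -/
lemma gadget {U : Type} [Finite U] {r k : ℕ} (hr : 0 < r) (hk : 3 ≤ k)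
    (G : Fin r → SimpleGraph U)
    (hdisj : ∀ i j u w, (G i).Adj u w → (G j).Adj u w → i = j)
    (hfree : ∀ i (S : Finset U), S.card = k → ¬ ∀ u ∈ S, ∀ w ∈ S, u ≠ w → (G i).Adj u w)
    (hcol : ∀ f : U → Fin r, ∃ (i : Fin r) (S : Finset U), S.card = k - 1 ∧ (∀ u ∈ S, f u = i) ∧
      ∀ u ∈ S, ∀ w ∈ S, u ≠ w → (G i).Adj u w) :
    ∃ (n : ℕ) (G' : SimpleGraph (Fin n)), RamseyMinimal G' r k ∧ minDeg G' ≤ Nat.card U := by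
  classical
  obtain ⟨β, hβ, χ', hs, hirr, hgood, hB⟩ := colour_ramsey hk
    (baseCol G : U ⊕ (Fin r × Fin r × Fin k) → _ → _) baseCol_symm baseCol_irr
    (baseCol_good hk hfree)
  let FB : SimpleGraph β :=
    { Adj := fun u w => χ' u w ≠ none
      symm := ⟨fun u w h => by rw [hs]; exact h⟩
      loopless := ⟨fun u h => h (hirr u)⟩ }
  -- the colouring `χ'` itself shows that this graph does not arrow `K_k`
  have hFB : ¬ ArrowsClique FB r k := by
    intro h
    let c : Sym2 β → Fin r := Sym2.lift ⟨fun u w => (χ' u w).getD ⟨0, hr⟩, fun u w => by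
      beta_reduce; rw [hs]⟩
    obtain ⟨i, S, hS, hcl⟩ := h c
    refine hgood i S hS fun u hu w hw huw => ?_
    obtain ⟨h1, h2⟩ := hcl u hu w hw huw
    obtain ⟨j, hj⟩ := Option.ne_none_iff_exists'.mp (h1 : χ' u w ≠ none)
    simp only [c, Sym2.lift_mk, hj, Option.getD_some] at h2
    rw [hj, h2]
  -- for each map `g : U → β`, add a new vertex joined to the image of `g`
  let F : SimpleGraph (β ⊕ (U → β)) :=
    { Adj := fun p q => match p, q with
        | Sum.inl u, Sum.inl w => χ' u w ≠ none
        | Sum.inl u, Sum.inr g => ∃ x, g x = u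
        | Sum.inr g, Sum.inl u => ∃ x, g x = u
        | Sum.inr _, Sum.inr _ => False
      symm := ⟨fun p q h => by
        rcases p with u | g <;> rcases q with w | g'
        · change χ' w u ≠ none
          rw [hs]; exact h
        · exact h
        · exact h
        · exact h⟩
      loopless := ⟨fun p h => by
        rcases p with u | g
        · exact h (hirr u)
        · exact h⟩ }
  have hF : ArrowsClique F r k := by
    intro c
    by_contra hno
    push Not at hno
    obtain ⟨σ, e, he, hcol', hσ⟩ := hB (fun x => c (x.map Sum.inl))
    -- otherwise the `K_k` with the colours `i` and `j` becomes monochromatic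
    have hσinj : Function.Injective σ := by
      intro i j hij
      by_contra hne
      let ψ : Fin k → β ⊕ (U → β) := fun x => Sum.inl (e (Sum.inr (i, j, x)))
      have hψ : Function.Injective ψ := fun x y h => by
        have := he (Sum.inl_injective h)
        simpa using this
      obtain ⟨u, hu, w, hw, huw, h⟩ := hno (σ i) (univ.image ψ)
        (by rw [Finset.card_image_of_injective _ hψ]; simp)
      obtain ⟨x, -, rfl⟩ := Finset.mem_image.mp hu
      obtain ⟨y, -, rfl⟩ := Finset.mem_image.mp hw
      have hxy : x ≠ y := fun h => huw (by rw [h])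
      have hb : baseCol G (Sum.inr (i, j, x) : U ⊕ (Fin r × Fin r × Fin k)) (Sum.inr (i, j, y)) =
          some (if x.1 ≤ 1 ∧ y.1 ≤ 1 then i else j) := by
        simp only [baseCol]
        exact if_pos ⟨trivial, trivial, hxy, hne⟩
      refine h ?_ ?_
      · change χ' _ _ ≠ none
        rw [hcol', hb]; simp
      · have := hσ _ _ _ hb
        simp only [Sym2.map_mk] at this
        change c s(ψ x, ψ y) = _ at this
        rw [this]
        split_ifs
        · rfl
        · exact hij.symm
    have hσsurj : Function.Surjective σ := Finite.surjective_of_injective hσinj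
    let g : U → β := fun u => e (Sum.inl u)
    have hg : Function.Injective g := fun u w h => Sum.inl_injective (he h)
    choose ρ hρ using hσsurj
    -- the colours at the new vertex of the copy of `U`, read through `σ⁻¹`, colour `U`
    obtain ⟨i, S, hS, hi, hcl⟩ := hcol (fun u => ρ (c s(Sum.inr g, Sum.inl (g u))))
    have hi' : ∀ u ∈ S, c s(Sum.inr g, Sum.inl (g u)) = σ i := fun u hu => by
      rw [← hi u hu, hρ]
    let S' : Finset (β ⊕ (U → β)) := S.image (fun u => Sum.inl (g u))
    have hnot : (Sum.inr g : β ⊕ (U → β)) ∉ S' := by simp [S']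
    obtain ⟨u, hu, w, hw, huw, h⟩ := hno (σ i) (insert (Sum.inr g) S') (by
      rw [Finset.card_insert_of_notMem hnot,
        Finset.card_image_of_injective _ (fun u w h => hg (Sum.inl_injective h)), hS]
      omega)
    rcases Finset.mem_insert.mp hu with rfl | hu
    · rcases Finset.mem_insert.mp hw with rfl | hw
      · exact huw rfl
      · obtain ⟨y, hy, rfl⟩ := Finset.mem_image.mp hw
        exact h ⟨y, rfl⟩ (hi' y hy)
    · obtain ⟨x, hx, rfl⟩ := Finset.mem_image.mp hu
      rcases Finset.mem_insert.mp hw with rfl | hw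
      · exact h ⟨x, rfl⟩ (by rw [Sym2.eq_swap]; exact hi' x hx)
      · obtain ⟨y, hy, rfl⟩ := Finset.mem_image.mp hw
        have hb := baseCol_adj (k := k) hdisj i x y (hcl x hx y hy (fun h => huw (by rw [h])))
        refine h ?_ (hσ _ _ _ hb)
        change χ' _ _ ≠ none
        rw [hcol', hb]; simp
  obtain ⟨n, G', φ, hφ, hadj, hmin⟩ := exists_minimal F hF
  refine ⟨n, G', hmin, ?_⟩
  -- the minimal graph must use one of the new vertices, whose degree is at most `|U|`
  have hnew : ∃ x g, φ x = Sum.inr g := by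
    by_contra hno
    push Not at hno
    have hl : ∀ x, ∃ u, φ x = Sum.inl u := by
      intro x
      rcases h : φ x with u | g
      · exact ⟨u, rfl⟩
      · exact absurd h (hno x g)
    choose φ' hφ' using hl
    refine hFB (arrows_mono φ' (fun x y h => hφ (by rw [hφ', hφ', h])) ?_ hmin.1)
    intro x y h
    have := hadj x y h
    rw [hφ', hφ'] at this
    exact this
  obtain ⟨x, g, hx⟩ := hnew
  have hle : minDeg G' ≤ {u : Fin n | G'.Adj x u}.ncard := Nat.sInf_le (Set.mem_range_self x)
  refine hle.trans ?_
  have hex : ∀ y : {y : Fin n // G'.Adj x y}, ∃ u, φ y = Sum.inl (g u) := by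
    rintro ⟨y, hy⟩
    have := hadj x y hy
    rw [hx] at this
    rcases h : φ y with u | g'
    · rw [h] at this
      obtain ⟨z, hz⟩ := this
      exact ⟨z, by rw [hz]⟩
    · rw [h] at this
      exact absurd this id
  choose f hf using hex
  have hfi : Function.Injective f := fun y z h => Subtype.ext (hφ (by rw [hf, hf, h]))
  have := Nat.card_le_card_of_injective f hfi
  rwa [← Nat.card_coe_set_eq]

/-! ### Sequential exposure of independent coordinates -/

section mgf
variable {ι Λ : Type*} [Fintype ι] [DecidableEq ι] [Fintype Λ]

/-- Summing over all values of one coordinate repeats every function `|Λ|` times. -/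
lemma sum_update (f : (ι → Λ) → ℝ) (j : ι) :
    ∑ ω : ι → Λ, ∑ x : Λ, f (Function.update ω j x) = Fintype.card Λ * ∑ ω, f ω := by
  classical
  rw [← Fintype.sum_prod_type' (f := fun (ω : ι → Λ) (x : Λ) => f (Function.update ω j x))]
  let g : ((ι → Λ) × Λ) → ((ι → Λ) × Λ) := fun p => (Function.update p.1 j p.2, p.1 j)
  have hg : Function.Involutive g := by
    intro p
    simp [g]
  have h := Equiv.sum_comp (Function.Involutive.toPerm g hg) (fun p : (ι → Λ) × Λ => f p.1)
  have h2 : ∑ p : (ι → Λ) × Λ, f (Function.Involutive.toPerm g hg p).1 =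
      ∑ p : (ι → Λ) × Λ, f (Function.update p.1 j p.2) :=
    Finset.sum_congr rfl fun p _ => by rw [Function.Involutive.coe_toPerm]
  rw [h2] at h
  rw [h, Fintype.sum_prod_type]
  simp [Finset.mul_sum]

/-- Sequential exposure: if the factor `w j` depends only on the coordinate `j` and on
coordinates of smaller rank, and its average over the coordinate `j` is at most `c j` whatever the
other coordinates are, then the average of the product is at most the product of the `c j`. -/
lemma seq_mgf (rk : ι → ℕ) (w : ι → (ι → Λ) → ℝ) (c : ι → ℝ) (hw : ∀ j ω, 0 ≤ w j ω)
    (hc : ∀ j, 0 ≤ c j)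
    (hloc : ∀ j (ω ω' : ι → Λ), (∀ a, a = j ∨ rk a < rk j → ω a = ω' a) → w j ω = w j ω')
    (havg : ∀ j ω, ∑ x, w j (Function.update ω j x) ≤ c j * Fintype.card Λ) :
    ∑ ω, ∏ j, w j ω ≤ (∏ j, c j) * Fintype.card (ι → Λ) := by
  classical
  by_cases hΛ : Nonempty (ι → Λ)
  swap
  · rw [not_nonempty_iff] at hΛ
    simp
  suffices H : ∀ s : Finset ι, ∑ ω, ∏ j ∈ s, w j ω ≤ (∏ j ∈ s, c j) * Fintype.card (ι → Λ) from
    H univ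
  intro s
  induction hn : s.card generalizing s with
  | zero =>
    rw [Finset.card_eq_zero] at hn
    subst hn
    simp
  | succ n ih =>
    obtain ⟨j, hj, hmax⟩ := Finset.exists_max_image s rk (Finset.card_pos.mp (by omega))
    have hΛ' : Nonempty Λ := ⟨hΛ.some j⟩
    have hcard : (0 : ℝ) < Fintype.card Λ := by exact_mod_cast Fintype.card_pos
    have ih' := ih (s.erase j) (by rw [Finset.card_erase_of_mem hj]; omega)
    have hinv : ∀ ω x, ∏ a ∈ s.erase j, w a (Function.update ω j x) = ∏ a ∈ s.erase j, w a ω := by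
      intro ω x
      refine Finset.prod_congr rfl fun a ha => hloc a _ _ fun a' ha' => ?_
      rw [Finset.mem_erase] at ha
      rw [Function.update_of_ne]
      rintro rfl
      rcases ha' with h | h
      · exact ha.1 h.symm
      · exact absurd (hmax a ha.2) (not_le.mpr h)
    have h1 := sum_update (fun ω => ∏ a ∈ s, w a ω) j
    have h2 : ∑ ω : ι → Λ, ∑ x : Λ, ∏ a ∈ s, w a (Function.update ω j x) ≤
        ∑ ω : ι → Λ, (∏ a ∈ s.erase j, w a ω) * (c j * Fintype.card Λ) := by
      refine Finset.sum_le_sum fun ω _ => ?_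
      have : ∀ x, ∏ a ∈ s, w a (Function.update ω j x) =
          (∏ a ∈ s.erase j, w a ω) * w j (Function.update ω j x) := by
        intro x
        rw [← Finset.prod_erase_mul s _ hj, hinv]
      simp only [this]
      rw [← Finset.mul_sum]
      exact mul_le_mul_of_nonneg_left (havg j ω) (Finset.prod_nonneg fun a _ => hw a ω)
    rw [h1, ← Finset.sum_mul] at h2
    have h3 : ∑ ω, ∏ a ∈ s, w a ω ≤ (∑ ω, ∏ a ∈ s.erase j, w a ω) * c j := by
      refine le_of_mul_le_mul_left ?_ hcard
      calc _ ≤ _ := h2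
        _ = _ := by ring
    calc _ ≤ _ := h3
      _ ≤ ((∏ j ∈ s.erase j, c j) * Fintype.card (ι → Λ)) * c j :=
        mul_le_mul_of_nonneg_right ih' (hc j)
      _ = _ := by rw [← Finset.prod_erase_mul s c hj]; ring

end mgf

open Classical in
/-- Markov's inequality for counting. -/
lemma markov {Ω : Type*} [Fintype Ω] (f : Ω → ℝ) (hf : ∀ ω, 0 ≤ f ω) (p : Ω → Prop) (B : ℝ)
    (hB : ∀ ω, p ω → B ≤ f ω) : ((univ.filter p).card : ℝ) * B ≤ ∑ ω, f ω := by
  classical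
  calc ((univ.filter p).card : ℝ) * B = ∑ ω ∈ univ.filter p, B := by simp
    _ ≤ ∑ ω ∈ univ.filter p, f ω :=
      Finset.sum_le_sum fun ω hω => hB ω (Finset.mem_filter.mp hω).2
    _ ≤ ∑ ω, f ω := Finset.sum_le_sum_of_subset_of_nonneg (Finset.filter_subset _ _)
      fun ω _ _ => hf ω

/-! ### The graphs given by random lines -/

section construction
variable {V : Type} {r D m Q c : ℕ}

/-- A random object: for each of two systems, each colour, each layer and each point, the index of
the line of that layer on which the point lies, and the class of the point on that line. -/
abbrev Obj (r D m Q c : ℕ) : Type := (Bool × Fin r × Fin D) × Fin m → Fin Q × Fin c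

/-- The line of layer `s` of colour `i` in system `κ` on which `x` lies. -/
def ph (ω : Obj r D m Q c) (κ : Bool) (i : Fin r) (s : Fin D) (x : Fin m) : Fin Q :=
  (ω ((κ, i, s), x)).1

/-- The class of `x` on its line. -/
def ch (ω : Obj r D m Q c) (κ : Bool) (i : Fin r) (s : Fin D) (x : Fin m) : Fin c :=
  (ω ((κ, i, s), x)).2

/-- `x` and `y` lie on a common line of system `κ`, of any colour. -/
def Col (ω : Obj r D m Q c) (κ : Bool) (x y : Fin m) : Prop :=
  ∃ i s, ph ω κ i s x = ph ω κ i s y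

/-- `x` and `y` are joined by a path of two lines of colour `i`. -/
def Pth (ω : Obj r D m Q c) (κ : Bool) (i : Fin r) (x y : Fin m) : Prop :=
  ∃ z s₁ s₂, ph ω κ i s₁ x = ph ω κ i s₁ z ∧ ph ω κ i s₂ z = ph ω κ i s₂ y

/-- `x` and `y` are *near* in system `κ` as seen by colour `i`: collinear in any colour, or joined
by two lines of colour `i`. -/
def Near (ω : Obj r D m Q c) (κ : Bool) (i : Fin r) (x y : Fin m) : Prop :=
  Col ω κ x y ∨ Pth ω κ i x y

/-- `x` and `y` are collinear in a smaller colour, or joined by two lines of colour `i` of layers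
below `s`. -/
def Prior (ω : Obj r D m Q c) (κ : Bool) (i : Fin r) (s : Fin D) (x y : Fin m) : Prop :=
  (∃ j < i, ∃ s', ph ω κ j s' x = ph ω κ j s' y) ∨
    ∃ z, ∃ s₁ < s, ∃ s₂ < s, ph ω κ i s₁ x = ph ω κ i s₁ z ∧ ph ω κ i s₂ z = ph ω κ i s₂ y

/-- A pair of vertices that must not become an edge in layer `s` of colour `i` of system `κ`. -/
def Bad (ω : Obj r D m Q c) (pr : Bool → V → Fin m) (κ : Bool) (i : Fin r) (s : Fin D)
    (u w : V) : Prop :=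
  Prior ω κ i s (pr κ u) (pr κ w) ∨ Near ω (!κ) i (pr (!κ) u) (pr (!κ) w)

/-- `x` and `y` lie on a common line of colour `i` of a layer below `s`. -/
def Met (ω : Obj r D m Q c) (κ : Bool) (i : Fin r) (s : Fin D) (x y : Fin m) : Prop :=
  ∃ s' < s, ph ω κ i s' y = ph ω κ i s' x

/-- The point `x` takes part in layer `s`: no smaller point of its line of that layer was
collinear with it in an earlier layer. -/
def Active (ω : Obj r D m Q c) (κ : Bool) (i : Fin r) (s : Fin D) (x : Fin m) : Prop :=
  ∀ y < x, Met ω κ i s x y → ph ω κ i s y ≠ ph ω κ i s x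

/-- The edges of colour `i` created by layer `s` of system `κ`. -/
def EdgeAt (ω : Obj r D m Q c) (pr : Bool → V → Fin m) (κ : Bool) (i : Fin r) (s : Fin D)
    (u w : V) : Prop :=
  ph ω κ i s (pr κ u) = ph ω κ i s (pr κ w) ∧ ch ω κ i s (pr κ u) ≠ ch ω κ i s (pr κ w) ∧
    ¬ Bad ω pr κ i s u w ∧ Active ω κ i s (pr κ u) ∧ Active ω κ i s (pr κ w)

variable {ω : Obj r D m Q c} {pr : Bool → V → Fin m} {κ : Bool} {i : Fin r} {s : Fin D}

lemma Col.symm {x y : Fin m} (h : Col ω κ x y) : Col ω κ y x := by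
  obtain ⟨i, s, h⟩ := h
  exact ⟨i, s, h.symm⟩

lemma Near.symm {x y : Fin m} (h : Near ω κ i x y) : Near ω κ i y x := by
  rcases h with h | ⟨z, s₁, s₂, h₁, h₂⟩
  · exact Or.inl h.symm
  · exact Or.inr ⟨z, s₂, s₁, h₂.symm, h₁.symm⟩

lemma Prior.symm {x y : Fin m} (h : Prior ω κ i s x y) : Prior ω κ i s y x := by
  rcases h with ⟨j, hj, s', h⟩ | ⟨z, s₁, l₁, s₂, l₂, h₁, h₂⟩
  · exact Or.inl ⟨j, hj, s', h.symm⟩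
  · exact Or.inr ⟨z, s₂, l₂, s₁, l₁, h₂.symm, h₁.symm⟩

lemma Prior.near {x y : Fin m} (h : Prior ω κ i s x y) : Near ω κ i x y := by
  rcases h with ⟨j, hj, s', h⟩ | ⟨z, s₁, l₁, s₂, l₂, h₁, h₂⟩
  · exact Or.inl ⟨j, s', h⟩
  · exact Or.inr ⟨z, s₁, s₂, h₁, h₂⟩

lemma Bad.symm {u w : V} (h : Bad ω pr κ i s u w) : Bad ω pr κ i s w u :=
  h.imp Prior.symm Near.symm

lemma EdgeAt.symm {u w : V} (h : EdgeAt ω pr κ i s u w) : EdgeAt ω pr κ i s w u :=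
  ⟨h.1.symm, h.2.1.symm, fun hb => h.2.2.1 hb.symm, h.2.2.2.2, h.2.2.2.1⟩

/-- The graph of colour `i`. -/
def gr (ω : Obj r D m Q c) (pr : Bool → V → Fin m) (i : Fin r) : SimpleGraph V where
  Adj u w := ∃ κ s, EdgeAt ω pr κ i s u w
  symm := ⟨fun u w h => by
    obtain ⟨κ, s, h⟩ := h
    exact ⟨κ, s, h.symm⟩⟩
  loopless := ⟨fun u h => by
    obtain ⟨κ, s, h⟩ := h
    exact h.2.1 rfl⟩

lemma gr_disjoint (i j : Fin r) (u w : V) (hi : (gr ω pr i).Adj u w) (hj : (gr ω pr j).Adj u w) :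
    i = j := by
  obtain ⟨κ, s, h⟩ := hi
  obtain ⟨κ', s', h'⟩ := hj
  by_cases hk : κ' = κ
  · subst hk
    rcases lt_trichotomy i j with hl | hl | hl
    · exact absurd (Or.inl (Or.inl ⟨i, hl, s, h.1⟩)) h'.2.2.1
    · exact hl
    · exact absurd (Or.inl (Or.inl ⟨j, hl, s', h'.1⟩)) h.2.2.1
  · have hk' : κ' = !κ := by cases κ <;> cases κ' <;> simp_all
    subst hk'
    exact absurd (Or.inr (Or.inl ⟨j, s', h'.1⟩)) h.2.2.1

/-- A path of two edges of the same system forbids an edge of the other one. -/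
lemma no_mixed {u w v : V} {s₁ s₂ s₃ : Fin D} (h₁ : EdgeAt ω pr κ i s₁ u w)
    (h₂ : EdgeAt ω pr κ i s₂ w v) (h₃ : EdgeAt ω pr (!κ) i s₃ u v) : False := by
  refine h₃.2.2.1 (Or.inr ?_)
  rw [Bool.not_not]
  exact Or.inr ⟨pr κ w, s₁, s₂, h₁.1, h₂.1⟩

/-- If one edge of a triangle is created in system `κ`, then so is another one. -/
lemma same_system {u w v : V} {s₁ : Fin D} (h₁ : EdgeAt ω pr κ i s₁ u w)
    (h₂ : (gr ω pr i).Adj w v) (h₃ : (gr ω pr i).Adj u v) : ∃ s, EdgeAt ω pr κ i s w v := by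
  obtain ⟨κ₂, s₂, h₂⟩ := h₂
  by_cases hk : κ₂ = κ
  · subst hk
    exact ⟨s₂, h₂⟩
  have hk' : κ₂ = !κ := by cases κ <;> cases κ₂ <;> simp_all
  subst hk'
  obtain ⟨κ₃, s₃, h₃⟩ := h₃
  by_cases hk3 : κ₃ = κ
  · subst hk3
    exact (no_mixed h₁.symm h₃ h₂).elim
  · have hk' : κ₃ = !κ := by cases κ <;> cases κ₃ <;> simp_all
    subst hk'
    refine (no_mixed h₃ h₂.symm (by rw [Bool.not_not]; exact h₁)).elim

/-- The graph of each colour has no clique with more vertices than there are classes (and at least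
two vertices). -/
lemma gr_free (i : Fin r) (S : Finset V) (hc : c < S.card) (hc1 : 1 ≤ c)
    (hS : ∀ u ∈ S, ∀ w ∈ S, u ≠ w → (gr ω pr i).Adj u w) : False := by
  classical
  obtain ⟨u₀, hu₀, w₀, hw₀, hne⟩ := Finset.one_lt_card.mp (show 1 < S.card by omega)
  obtain ⟨κ, s₀, h₀⟩ := hS u₀ hu₀ w₀ hw₀ hne
  -- all edges of the clique come from the same system
  have hu : ∀ v ∈ S, u₀ ≠ v → ∃ s, EdgeAt ω pr κ i s u₀ v := by
    intro v hv huv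
    by_cases hvw : v = w₀
    · subst hvw
      exact ⟨s₀, h₀⟩
    · exact same_system h₀.symm (hS _ hu₀ _ hv huv) (hS _ hw₀ _ hv (Ne.symm hvw))
  have hall : ∀ v ∈ S, ∀ v' ∈ S, v ≠ v' → ∃ s, EdgeAt ω pr κ i s v v' := by
    intro v hv v' hv' hvv
    by_cases h1 : u₀ = v
    · subst h1
      exact hu v' hv' hvv
    by_cases h2 : u₀ = v'
    · subst h2
      obtain ⟨s, h⟩ := hu v hv h1
      exact ⟨s, h.symm⟩
    obtain ⟨s, h⟩ := hu v hv h1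
    exact same_system h (hS _ hv _ hv' hvv) (hS _ hu₀ _ hv' h2)
  let Z : Finset (Fin D) := univ.filter fun s => ∃ u ∈ S, ∃ w ∈ S, EdgeAt ω pr κ i s u w
  have hZ : Z.Nonempty := ⟨s₀, by
    simp only [Z, mem_filter, mem_univ, true_and]
    exact ⟨u₀, hu₀, w₀, hw₀, h₀⟩⟩
  obtain ⟨t, htZ, htmax⟩ := Finset.exists_max_image Z id hZ
  simp only [Z, mem_filter, mem_univ, true_and] at htZ
  obtain ⟨u, huS, w, hwS, h⟩ := htZ
  have hle : ∀ a ∈ S, ∀ b ∈ S, ∀ s, EdgeAt ω pr κ i s a b → s ≤ t := by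
    intro a ha b hb s hs
    refine htmax s ?_
    simp only [Z, mem_filter, mem_univ, true_and]
    exact ⟨a, ha, b, hb, hs⟩
  -- hence all vertices lie on one line of the last layer used, and are active there
  have hline : ∀ z ∈ S, ph ω κ i t (pr κ z) = ph ω κ i t (pr κ u) ∧ Active ω κ i t (pr κ z) := by
    intro z hz
    by_cases hzu : z = u
    · subst hzu
      exact ⟨rfl, h.2.2.2.1⟩
    by_cases hzw : z = w
    · subst hzw
      exact ⟨h.1.symm, h.2.2.2.2⟩
    obtain ⟨s₁, h₁⟩ := hall u huS z hz (Ne.symm hzu)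
    obtain ⟨s₂, h₂⟩ := hall z hz w hwS hzw
    rcases (hle _ huS _ hz _ h₁).lt_or_eq with l₁ | rfl
    · rcases (hle _ hz _ hwS _ h₂).lt_or_eq with l₂ | rfl
      · exact absurd (Or.inl (Or.inr ⟨pr κ z, s₁, l₁, s₂, l₂, h₁.1, h₂.1⟩)) h.2.2.1
      · exact ⟨h₂.1.trans h.1.symm, h₂.2.2.2.1⟩
    · exact ⟨h₁.1.symm, h₁.2.2.2.2⟩
  obtain ⟨a, ha, b, hb, hab, heq⟩ := Finset.exists_ne_map_eq_of_card_lt_of_maps_to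
    (t := (univ : Finset (Fin c))) (f := fun z => ch ω κ i t (pr κ z)) (by simpa using hc)
    (fun _ _ => mem_univ _)
  obtain ⟨s, hs⟩ := hall a ha b hb hab
  have hst : s < t := by
    refine lt_of_le_of_ne (hle _ ha _ hb _ hs) ?_
    rintro rfl
    exact hs.2.1 heq
  have hpl : ph ω κ i t (pr κ a) = ph ω κ i t (pr κ b) :=
    (hline a ha).1.trans (hline b hb).1.symm
  rcases lt_trichotomy (pr κ a) (pr κ b) with hl | hl | hl
  · exact (hline b hb).2 _ hl ⟨s, hst, hs.1⟩ hpl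
  · exact hs.2.1 (by rw [hl])
  · exact (hline a ha).2 _ hl ⟨s, hst, hs.1.symm⟩ hpl.symm

end construction

/-! ### The greedy process in one layer -/

section prob
variable {Ω : Type*} [Fintype Ω]

open Classical in
/-- The proportion of the outcomes `ω` satisfying `p`. -/
noncomputable def Pr (p : Ω → Prop) : ℝ := ((univ.filter p).card : ℝ) / Fintype.card Ω

lemma Pr_nonneg (p : Ω → Prop) : 0 ≤ Pr p := by
  unfold Pr
  positivity

lemma Pr_mono {p q : Ω → Prop} (h : ∀ ω, p ω → q ω) : Pr p ≤ Pr q := by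
  classical
  unfold Pr
  refine div_le_div_of_nonneg_right ?_ (by positivity)
  exact_mod_cast Finset.card_le_card (Finset.monotone_filter_right _ fun ω _ => h ω)

lemma Pr_or (p q : Ω → Prop) : Pr (fun ω => p ω ∨ q ω) ≤ Pr p + Pr q := by
  classical
  unfold Pr
  rw [← add_div]
  refine div_le_div_of_nonneg_right ?_ (by positivity)
  rw [← Nat.cast_add, Nat.cast_le]
  refine le_trans (Finset.card_le_card fun ω h => ?_) (Finset.card_union_le _ _)
  simpa [Finset.mem_union] using h

lemma Pr_exists {A : Type*} (s : Finset A) (p : A → Ω → Prop) (f : A → ℝ)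
    (h : ∀ a ∈ s, Pr (p a) ≤ f a) : Pr (fun ω => ∃ a ∈ s, p a ω) ≤ ∑ a ∈ s, f a := by
  classical
  induction s using Finset.induction_on with
  | empty => simp [Pr]
  | insert a s ha ih =>
    rw [Finset.sum_insert ha]
    calc Pr (fun ω => ∃ b ∈ insert a s, p b ω) ≤ Pr (fun ω => p a ω ∨ ∃ b ∈ s, p b ω) :=
          Pr_mono fun ω ⟨b, hb, hp⟩ => by
            rcases Finset.mem_insert.mp hb with rfl | hb
            · exact Or.inl hp
            · exact Or.inr ⟨b, hb, hp⟩
      _ ≤ Pr (p a) + Pr (fun ω => ∃ b ∈ s, p b ω) := Pr_or _ _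
      _ ≤ _ := add_le_add (h a (mem_insert_self _ _))
          (ih fun b hb => h b (mem_insert_of_mem hb))

lemma Pr_exists_const {A : Type*} (s : Finset A) (p : A → Ω → Prop) (B : ℝ)
    (h : ∀ a ∈ s, Pr (p a) ≤ B) : Pr (fun ω => ∃ a ∈ s, p a ω) ≤ s.card * B := by
  refine (Pr_exists s p (fun _ => B) h).trans ?_
  simp

lemma Pr_lt_one [Nonempty Ω] {p : Ω → Prop} (h : Pr p < 1) : ∃ ω, ¬ p ω := by
  classical
  by_contra! hc
  rw [Pr, Finset.filter_true_of_mem (fun ω _ => hc ω), Finset.card_univ, div_self] at h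
  · exact lt_irrefl _ h
  · exact_mod_cast Fintype.card_ne_zero

lemma Pr_markov (f : Ω → ℝ) (hf : ∀ ω, 0 ≤ f ω) (p : Ω → Prop) {B C : ℝ} (hB0 : 0 < B)
    (hB : ∀ ω, p ω → B ≤ f ω) (hC : ∑ ω, f ω ≤ C * Fintype.card Ω) (hC0 : 0 ≤ C) :
    Pr p ≤ C / B := by
  classical
  have h := (markov f hf p B hB).trans hC
  unfold Pr
  by_cases hz : Fintype.card Ω = 0
  · rw [hz]
    simp only [Nat.cast_zero, div_zero]
    positivity
  have : (0 : ℝ) < Fintype.card Ω := by positivity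
  rw [div_le_div_iff₀ this hB0]
  exact h

end prob

section process
variable {m Q c : ℕ}

open Classical in
/-- The greedy process in one layer: the points are treated in increasing order, and a point `x` of
`X` is accepted if no smaller point `y` with `I x y` lies on its line, it forms no bad pair with an
accepted point of its line, and its class is the number of points accepted so far on its line. The
value at `n` is the set of accepted points among the first `n` points. -/
noncomputable def acc (φ : Fin m → Fin Q) (χ : Fin m → Fin c) (X : Finset (Fin m))
    (bad I : Fin m → Fin m → Prop) : ℕ → Finset (Fin m)
  | 0 => ∅
  | n + 1 => (acc φ χ X bad I n) ∪ univ.filter fun x : Fin m => (x : ℕ) = n ∧ x ∈ X ∧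
      (∀ y < x, I x y → φ y ≠ φ x) ∧ (∀ y ∈ acc φ χ X bad I n, φ y = φ x → ¬ bad y x) ∧
      (χ x : ℕ) = ((acc φ χ X bad I n).filter fun y => φ y = φ x).card

variable {φ : Fin m → Fin Q} {χ : Fin m → Fin c} {X : Finset (Fin m)}
  {bad I : Fin m → Fin m → Prop}

lemma acc_mono {a b : ℕ} (h : a ≤ b) : acc φ χ X bad I a ⊆ acc φ χ X bad I b :=
  monotone_nat_of_le_succ (f := acc φ χ X bad I) (fun n => by
    rw [acc]
    exact subset_union_left) h

open Classical in
lemma acc_lt {n : ℕ} {x : Fin m} (h : x ∈ acc φ χ X bad I n) : (x : ℕ) < n := by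
  induction n with
  | zero => simp [acc] at h
  | succ n ih =>
    rw [acc, mem_union, mem_filter] at h
    rcases h with h | h
    · have := ih h
      omega
    · omega

open Classical in
lemma acc_succ_iff (x : Fin m) : x ∈ acc φ χ X bad I (x + 1) ↔ x ∈ X ∧
      (∀ y < x, I x y → φ y ≠ φ x) ∧ (∀ y ∈ acc φ χ X bad I x, φ y = φ x → ¬ bad y x) ∧
      (χ x : ℕ) = ((acc φ χ X bad I x).filter fun y => φ y = φ x).card := by
  rw [acc, mem_union, mem_filter]
  constructor
  · rintro (h | h)
    · exact absurd (acc_lt h) (lt_irrefl _)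
    · exact h.2.2
  · intro h
    exact Or.inr ⟨mem_univ _, rfl, h⟩

open Classical in
lemma acc_at {n : ℕ} {x : Fin m} (h : x ∈ acc φ χ X bad I n) : x ∈ acc φ χ X bad I (x + 1) := by
  induction n with
  | zero => simp [acc] at h
  | succ n ih =>
    by_cases hx : x ∈ acc φ χ X bad I n
    · exact ih hx
    · have h1 := h
      rw [acc, mem_union, mem_filter] at h1
      rcases h1 with h1 | h1
      · exact ih h1
      · have : n = x := h1.2.1.symm
        rw [this] at h
        exact h

lemma acc_of {n : ℕ} {x : Fin m} (h : x ∈ acc φ χ X bad I n) {a : ℕ} (ha : (x : ℕ) < a) :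
    x ∈ acc φ χ X bad I a :=
  acc_mono (show (x : ℕ) + 1 ≤ a from ha) (acc_at h)

lemma acc_congr {φ' : Fin m → Fin Q} {χ' : Fin m → Fin c} (n : ℕ)
    (hφ : ∀ y : Fin m, (y : ℕ) < n → φ y = φ' y) (hχ : ∀ y : Fin m, (y : ℕ) < n → χ y = χ' y) :
    acc φ χ X bad I n = acc φ' χ' X bad I n := by
  classical
  induction n with
  | zero => rfl
  | succ n ih =>
    have ih' := ih (fun y hy => hφ y (by omega)) (fun y hy => hχ y (by omega))
    rw [acc, acc, ih']
    congr 1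
    refine Finset.filter_congr fun x _ => ?_
    refine and_congr_right fun hx => and_congr_right fun _ => ?_
    have hx' : φ x = φ' x := hφ x (by omega)
    refine and_congr ?_ (and_congr ?_ ?_)
    · refine forall_congr' fun y => forall_congr' fun hy => ?_
      rw [hx', hφ y (by rw [Fin.lt_def] at hy; omega)]
    · refine forall_congr' fun y => forall_congr' fun hy => ?_
      rw [hx', hφ y (by have := acc_lt hy; omega)]
    · rw [hχ x (by omega), hx']
      have : ((acc φ' χ' X bad I n).filter fun y => φ y = φ' x) =
          (acc φ' χ' X bad I n).filter fun y => φ' y = φ' x := by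
        refine Finset.filter_congr fun y hy => ?_
        rw [hφ y (by have := acc_lt hy; omega)]
      rw [this]

lemma acc_pair {n : ℕ} {x y : Fin m} (hx : x ∈ acc φ χ X bad I n) (hy : y ∈ acc φ χ X bad I n)
    (hlt : y < x) (heq : φ y = φ x) : ¬ bad y x ∧ (χ y : ℕ) < χ x := by
  classical
  have h1 := (acc_succ_iff x).mp (acc_at hx)
  have h2 := (acc_succ_iff y).mp (acc_at hy)
  have hyx : y ∈ acc φ χ X bad I x := acc_of hy hlt
  refine ⟨h1.2.2.1 y hyx heq, ?_⟩
  rw [h1.2.2.2, h2.2.2.2]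
  refine Finset.card_lt_card ?_
  rw [Finset.ssubset_iff_of_subset]
  · refine ⟨y, mem_filter.mpr ⟨hyx, heq⟩, ?_⟩
    intro h
    exact absurd (acc_lt (mem_filter.mp h).1) (lt_irrefl _)
  · intro z hz
    rw [mem_filter] at hz ⊢
    exact ⟨acc_mono (le_of_lt hlt) hz.1, hz.2.trans heq⟩

open Classical in
/-- The point `x` is eligible: it is in `X`, no line is full, and few lines are forbidden to `x`. -/
def Elig (φ : Fin m → Fin Q) (χ : Fin m → Fin c) (X : Finset (Fin m))
    (bad I : Fin m → Fin m → Prop) (x : Fin m) : Prop :=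
  x ∈ X ∧ (∀ q, ((acc φ χ X bad I x).filter fun y => φ y = q).card < c) ∧
    4 * (X.filter fun y => y < x ∧ bad y x).card ≤ Q ∧
    4 * (univ.filter fun y => y < x ∧ I x y).card ≤ Q

lemma Elig_congr {φ' : Fin m → Fin Q} {χ' : Fin m → Fin c} (x : Fin m)
    (hφ : ∀ y < x, φ y = φ' y) (hχ : ∀ y < x, χ y = χ' y) :
    Elig φ χ X bad I x ↔ Elig φ' χ' X bad I x := by
  unfold Elig
  rw [acc_congr (x : ℕ) hφ hχ]
  refine and_congr_right fun _ => and_congr_left fun _ => forall_congr' fun q => ?_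
  have : ((acc φ' χ' X bad I x).filter fun y => φ y = q) =
      (acc φ' χ' X bad I x).filter fun y => φ' y = q := by
    refine Finset.filter_congr fun y hy => ?_
    rw [hφ y (acc_lt hy)]
  rw [this]

open Classical in
/-- The factor of the point `x` in the exponential supermartingale. -/
noncomputable def wt (φ : Fin m → Fin Q) (χ : Fin m → Fin c) (X : Finset (Fin m))
    (bad I : Fin m → Fin m → Prop) (x : Fin m) : ℝ :=
  if Elig φ χ X bad I x then
    (if x ∈ acc φ χ X bad I (x + 1) then 1 / 2 else 1) / (1 - 1 / (4 * c)) else 1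

lemma wt_nonneg (hc : 1 ≤ c) (x : Fin m) : 0 ≤ wt φ χ X bad I x := by
  have hc' : (1 : ℝ) ≤ c := by exact_mod_cast hc
  have : (0 : ℝ) ≤ 1 - 1 / (4 * c) := by
    rw [sub_nonneg, div_le_one (by positivity)]
    linarith
  unfold wt
  split_ifs <;> positivity

lemma wt_congr {φ' : Fin m → Fin Q} {χ' : Fin m → Fin c} (x : Fin m)
    (hφ : ∀ y ≤ x, φ y = φ' y) (hχ : ∀ y ≤ x, χ y = χ' y) :
    wt φ χ X bad I x = wt φ' χ' X bad I x := by
  unfold wt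
  rw [acc_congr ((x : ℕ) + 1) (fun y hy => hφ y (Nat.lt_succ_iff.mp hy))
    (fun y hy => hχ y (Nat.lt_succ_iff.mp hy)),
    Elig_congr x (fun y hy => hφ y hy.le) (fun y hy => hχ y hy.le)]

/-- The average of the factor of `x` over the line and the class of `x` is at most one: if `x` is
eligible, at least half of the lines are allowed, and for each of them one class leads to
acceptance. -/
lemma wt_avg (hc : 1 ≤ c) (x : Fin m) :
    ∑ v : Fin Q × Fin c, wt (Function.update φ x v.1) (Function.update χ x v.2) X bad I x ≤
      Q * c := by
  classical
  have hc' : (1 : ℝ) ≤ c := by exact_mod_cast hc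
  have hpos : (0 : ℝ) < 1 - 1 / (4 * c) := by
    rw [sub_pos, div_lt_one (by positivity)]
    linarith
  have hu : ∀ (v : Fin Q × Fin c), ∀ y < x, Function.update φ x v.1 y = φ y := by
    intro v y hy
    exact Function.update_of_ne hy.ne _ _
  have hu' : ∀ (v : Fin Q × Fin c), ∀ y < x, Function.update χ x v.2 y = χ y := by
    intro v y hy
    exact Function.update_of_ne hy.ne _ _
  by_cases he : Elig φ χ X bad I x
  swap
  · have : ∀ v : Fin Q × Fin c,
        wt (Function.update φ x v.1) (Function.update χ x v.2) X bad I x = 1 := by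
      intro v
      rw [wt, if_neg]
      rwa [Elig_congr x (hu v) (hu' v)]
    simp [this]
  have hw : ∀ v : Fin Q × Fin c,
      wt (Function.update φ x v.1) (Function.update χ x v.2) X bad I x =
      (1 - (if x ∈ acc (Function.update φ x v.1) (Function.update χ x v.2) X bad I (x + 1) then
        (1 / 2 : ℝ) else 0)) / (1 - 1 / (4 * c)) := by
    intro v
    rw [wt, if_pos ((Elig_congr x (hu v) (hu' v)).mpr he)]
    split_ifs <;> norm_num
  simp only [hw]
  rw [← Finset.sum_div, div_le_iff₀ hpos, Finset.sum_sub_distrib, ← Finset.sum_filter]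
  set Acc : Finset (Fin Q × Fin c) := univ.filter fun v =>
    x ∈ acc (Function.update φ x v.1) (Function.update χ x v.2) X bad I (x + 1) with hAcc
  obtain ⟨hxX, hfull, hb, hI⟩ := he
  set Forb : Finset (Fin Q) := (X.filter fun y => y < x ∧ bad y x).image φ ∪
    (univ.filter fun y => y < x ∧ I x y).image φ with hForb
  have hF : 2 * Forb.card ≤ Q := by
    have h1 : Forb.card ≤ _ := Finset.card_union_le _ _
    have h2 := Finset.card_image_le (s := X.filter fun y => y < x ∧ bad y x) (f := φ)
    have h3 := Finset.card_image_le (s := univ.filter fun y => y < x ∧ I x y) (f := φ)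
    omega
  have hA : Q ≤ 2 * Acc.card := by
    have h1 : Forbᶜ.card ≤ Acc.card := by
      refine Finset.card_le_card_of_injOn (fun q => (q, ⟨_, hfull q⟩)) ?_ ?_
      · intro q hq
        have hq' : q ∉ Forb := by simpa using hq
        rw [hForb, mem_union, not_or] at hq'
        simp only [hAcc, mem_coe, mem_filter, mem_univ, true_and]
        rw [acc_succ_iff, acc_congr (x : ℕ) (hu (q, ⟨_, hfull q⟩)) (hu' (q, ⟨_, hfull q⟩))]
        simp only [Function.update_self]
        refine ⟨hxX, ?_, ?_, ?_⟩
        · intro y hy hIy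
          rw [Function.update_of_ne hy.ne]
          rintro rfl
          exact hq'.2 (mem_image_of_mem _ (by simp [hy, hIy]))
        · intro y hy hyq hby
          have hyx : y < x := acc_lt hy
          rw [Function.update_of_ne hyx.ne] at hyq
          subst hyq
          have hyX : y ∈ X := ((acc_succ_iff y).mp (acc_at hy)).1
          exact hq'.1 (mem_image_of_mem _ (by simp [hyx, hby, hyX]))
        · congr 1
          refine Finset.filter_congr fun y hy => ?_
          have hyx : y < x := acc_lt hy
          rw [Function.update_of_ne hyx.ne]
      · intro q _ q' _ h
        exact (Prod.ext_iff.mp h).1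
    rw [Finset.card_compl, Fintype.card_fin] at h1
    omega
  have hA' : (Q : ℝ) ≤ 2 * Acc.card := by exact_mod_cast hA
  have : (Q : ℝ) * c * (1 - 1 / (4 * c)) = Q * c - Q / 4 := by
    field_simp
  rw [this]
  simp only [sum_const, card_univ, Fintype.card_prod, Fintype.card_fin, nsmul_eq_mul, mul_one,
    Nat.cast_mul]
  linarith

open Classical in
/-- If no line is full at the end, the product of the factors is large: every eligible point
contributes a factor exceeding one, and few points are accepted. -/
lemma wt_prod {t : ℕ} (hc : 1 ≤ c) (hX : X.card = t)
    (hfull : ∀ q, ((acc φ χ X bad I m).filter fun y => φ y = q).card < c)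
    (hI : ∀ x, 4 * (univ.filter fun y => y < x ∧ I x y).card ≤ Q)
    (hb : 8 * ∑ x ∈ X, (X.filter fun y => y < x ∧ bad y x).card ≤ t * Q) (hQ : 0 < Q) {ℓ : ℕ}
    (hℓ : 2 * ℓ ≤ t) :
    (1 / (1 - 1 / (4 * (c : ℝ)))) ^ ℓ * (1 / 2) ^ (Q * c) ≤ ∏ x, wt φ χ X bad I x := by
  classical
  have hc' : (1 : ℝ) ≤ c := by exact_mod_cast hc
  have hpos : (0 : ℝ) < 1 - 1 / (4 * c) := by
    rw [sub_pos, div_lt_one (by positivity)]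
    linarith
  set A := acc φ χ X bad I m with hA
  set E : Finset (Fin m) := X.filter fun x => 4 * (X.filter fun y => y < x ∧ bad y x).card ≤ Q
    with hE
  have hEe : ∀ x, x ∈ E ↔ Elig φ χ X bad I x := by
    intro x
    rw [hE, mem_filter]
    constructor
    · rintro ⟨h1, h2⟩
      refine ⟨h1, fun q => ?_, h2, hI x⟩
      refine lt_of_le_of_lt (Finset.card_le_card ?_) (hfull q)
      exact Finset.filter_subset_filter _ (acc_mono x.2.le)
    · rintro ⟨h1, -, h2, -⟩
      exact ⟨h1, h2⟩
  have hEcard : ℓ ≤ E.card := by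
    have h1 : E.card + (X.filter fun x => ¬ 4 * (X.filter fun y => y < x ∧ bad y x).card ≤ Q).card =
        t := by
      rw [hE, Finset.card_filter_add_card_filter_not, hX]
    set N := X.filter fun x => ¬ 4 * (X.filter fun y => y < x ∧ bad y x).card ≤ Q with hN
    have h2 : N.card * Q ≤ 4 * ∑ x ∈ X, (X.filter fun y => y < x ∧ bad y x).card := by
      calc N.card * Q = ∑ x ∈ N, Q := by simp
        _ ≤ ∑ x ∈ N, 4 * (X.filter fun y => y < x ∧ bad y x).card :=
          Finset.sum_le_sum fun x hx => by
            have := (mem_filter.mp hx).2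
            omega
        _ ≤ ∑ x ∈ X, 4 * (X.filter fun y => y < x ∧ bad y x).card :=
          Finset.sum_le_sum_of_subset (filter_subset _ _)
        _ = _ := by rw [Finset.mul_sum]
    have h3 : 2 * N.card ≤ t := by
      refine Nat.le_of_mul_le_mul_right ?_ hQ
      calc 2 * N.card * Q = 2 * (N.card * Q) := by ring
        _ ≤ _ := by omega
    omega
  have hAcard : A.card ≤ Q * c := by
    rw [Finset.card_eq_sum_card_fiberwise (f := φ) (t := univ) (fun _ _ => mem_univ _)]
    calc _ ≤ ∑ q : Fin Q, c := Finset.sum_le_sum fun q _ => (hfull q).le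
      _ = _ := by simp
  have hone : 1 ≤ 1 / (1 - 1 / (4 * (c : ℝ))) := by
    rw [le_div_iff₀ hpos]
    have : (0 : ℝ) ≤ 1 / (4 * c) := by positivity
    linarith
  have hle : ∀ x, (if x ∈ E then 1 / (1 - 1 / (4 * (c : ℝ))) else 1) *
      (if x ∈ A then (1 / 2 : ℝ) else 1) ≤ wt φ χ X bad I x := by
    intro x
    unfold wt
    by_cases he : x ∈ E
    · rw [if_pos he, if_pos ((hEe x).mp he)]
      have : x ∈ acc φ χ X bad I (x + 1) ↔ x ∈ A :=
        ⟨fun h => acc_mono (show (x : ℕ) + 1 ≤ m from x.2) h, fun h => acc_at h⟩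
      simp only [this]
      apply le_of_eq
      ring
    · rw [if_neg he, if_neg (fun h => he ((hEe x).mpr h))]
      split_ifs <;> norm_num
  calc _ ≤ (1 / (1 - 1 / (4 * (c : ℝ)))) ^ E.card * (1 / 2) ^ A.card :=
        mul_le_mul (pow_le_pow_right₀ hone hEcard)
          (pow_le_pow_of_le_one (by norm_num) (by norm_num) hAcard) (by positivity) (by positivity)
    _ = ∏ x, (if x ∈ E then 1 / (1 - 1 / (4 * (c : ℝ))) else 1) *
          (if x ∈ A then (1 / 2 : ℝ) else 1) := by
      rw [Finset.prod_mul_distrib, Finset.prod_ite_mem, Finset.prod_ite_mem]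
      simp
    _ ≤ _ := Finset.prod_le_prod (fun x _ => by
        refine mul_nonneg ?_ ?_ <;> split_ifs <;> positivity) fun x _ => hle x

end process

/-! ### Failure probability of a fixed vertex set -/

section positive
variable {V : Type} {r D m Q c : ℕ}

/-- Order in which the coordinates are exposed when colour `i` of system `κ` is analysed: first
everything else, then the layers of that colour one after the other. -/
def rkp (κ : Bool) (i : Fin r) (a : (Bool × Fin r × Fin D) × Fin m) : ℕ :=
  if a.1.1 = κ ∧ a.1.2.1 = i then 1 + (a.1.2.2 : ℕ) * m + a.2 else 0

lemma rkp_self (κ : Bool) (i : Fin r) (s : Fin D) (x : Fin m) :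
    rkp κ i ((κ, i, s), x) = 1 + (s : ℕ) * m + x := by
  simp [rkp]

lemma rkp_lower {κ : Bool} {i : Fin r} {s s' : Fin D} (h : s' < s) (x y : Fin m) :
    rkp κ i ((κ, i, s'), y) < rkp κ i ((κ, i, s), x) := by
  rw [rkp_self, rkp_self]
  have h1 : ((s' : ℕ) + 1) * m ≤ s * m := Nat.mul_le_mul_right _ h
  have := y.2
  rw [Nat.add_mul] at h1
  omega

lemma rkp_other {κ κ' : Bool} {i j : Fin r} {s s' : Fin D} (h : κ' ≠ κ ∨ j ≠ i) (x y : Fin m) :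
    rkp κ i ((κ', j, s'), y) < rkp κ i ((κ, i, s), x) := by
  rw [rkp_self, rkp, if_neg]
  · omega
  · rintro ⟨h1, h2⟩
    exact h.elim (fun h => h h1) (fun h => h h2)

variable {ω ω' : Obj r D m Q c} {pr : Bool → V → Fin m} {κ : Bool} {i : Fin r} {s : Fin D}
  {x : Fin m}

lemma Met_congr (h : ∀ a, rkp κ i a < rkp κ i ((κ, i, s), x) → ω a = ω' a) :
    Met ω κ i s = Met ω' κ i s := by
  funext u w
  refine propext (exists_congr fun s' => and_congr_right fun hs => ?_)
  rw [ph, ph, ph, ph, h _ (rkp_lower hs _ _), h _ (rkp_lower hs _ _)]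

lemma Bad_congr (h : ∀ a, rkp κ i a < rkp κ i ((κ, i, s), x) → ω a = ω' a) :
    Bad ω pr κ i s = Bad ω' pr κ i s := by
  have hn : (!κ) ≠ κ := by cases κ <;> simp
  funext u w
  refine propext (or_congr (or_congr ?_ ?_) (or_congr ?_ ?_))
  · refine exists_congr fun j => and_congr_right fun hj => exists_congr fun s' => ?_
    rw [ph, ph, ph, ph, h _ (rkp_other (Or.inr hj.ne) _ _), h _ (rkp_other (Or.inr hj.ne) _ _)]
  · refine exists_congr fun z => exists_congr fun s₁ => and_congr_right fun h₁ =>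
      exists_congr fun s₂ => and_congr_right fun h₂ => ?_
    rw [ph, ph, ph, ph, ph, ph, ph, ph, h _ (rkp_lower h₁ _ _), h _ (rkp_lower h₁ _ _),
      h _ (rkp_lower h₂ _ _), h _ (rkp_lower h₂ _ _)]
  · refine exists_congr fun j => exists_congr fun s' => ?_
    rw [ph, ph, ph, ph, h _ (rkp_other (Or.inl hn) _ _), h _ (rkp_other (Or.inl hn) _ _)]
  · refine exists_congr fun z => exists_congr fun s₁ => exists_congr fun s₂ => ?_
    rw [ph, ph, ph, ph, ph, ph, ph, ph, h _ (rkp_other (Or.inl hn) _ _),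
      h _ (rkp_other (Or.inl hn) _ _), h _ (rkp_other (Or.inl hn) _ _),
      h _ (rkp_other (Or.inl hn) _ _)]

open Classical in
/-- The factor attached to one coordinate. -/
noncomputable def wtc (pr : Bool → V → Fin m) (κ : Bool) (i : Fin r) (X : Finset (Fin m))
    (σ : Fin m → V) (a : (Bool × Fin r × Fin D) × Fin m) (ω : Obj r D m Q c) : ℝ :=
  if a.1.1 = κ ∧ a.1.2.1 = i then
    wt (ph ω κ i a.1.2.2) (ch ω κ i a.1.2.2) X
      (fun y x => Bad ω pr κ i a.1.2.2 (σ y) (σ x)) (Met ω κ i a.1.2.2) a.2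
  else 1

open Classical in
/-- The event that colour `i` has no clique of size `c` on the given set of vertices, although
there are few obstructions in each layer of system `κ`. -/
def Fails (ω : Obj r D m Q c) (pr : Bool → V → Fin m) (κ : Bool) (i : Fin r) (X : Finset (Fin m))
    (σ : Fin m → V) : Prop :=
  (∀ s x, 4 * (univ.filter fun y => y < x ∧ Met ω κ i s x y).card ≤ Q) ∧
  (∀ s, 8 * ∑ x ∈ X, (X.filter fun y => y < x ∧ Bad ω pr κ i s (σ y) (σ x)).card ≤ X.card * Q) ∧
  ¬ ∃ S ⊆ X.image σ, S.card = c ∧ ∀ u ∈ S, ∀ w ∈ S, u ≠ w → (gr ω pr i).Adj u w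

lemma Fails.not_full {X : Finset (Fin m)} {σ : Fin m → V} (hσ : ∀ x ∈ X, pr κ (σ x) = x)
    (h : Fails ω pr κ i X σ) (s : Fin D) (q : Fin Q) :
    ((acc (ph ω κ i s) (ch ω κ i s) X (fun y x => Bad ω pr κ i s (σ y) (σ x)) (Met ω κ i s)
      m).filter fun y => ph ω κ i s y = q).card < c := by
  classical
  by_contra hc
  rw [not_lt] at hc
  obtain ⟨S, hS, hcard⟩ := Finset.exists_subset_card_eq hc
  have hSX : S ⊆ X := fun x hx =>
    ((acc_succ_iff x).mp (acc_at (mem_filter.mp (hS hx)).1)).1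
  refine h.2.2 ⟨S.image σ, Finset.image_subset_image hSX, ?_, ?_⟩
  · rw [Finset.card_image_of_injOn, hcard]
    intro x hx y hy hxy
    have := congrArg (pr κ) hxy
    rwa [hσ x (hSX hx), hσ y (hSX hy)] at this
  · have key : ∀ x ∈ S, ∀ y ∈ S, y < x → EdgeAt ω pr κ i s (σ y) (σ x) := by
      intro x hx y hy hlt
      have hx' := mem_filter.mp (hS hx)
      have hy' := mem_filter.mp (hS hy)
      obtain ⟨h1, h2⟩ := acc_pair hx'.1 hy'.1 hlt (hy'.2.trans hx'.2.symm)
      have ax := (acc_succ_iff x).mp (acc_at hx'.1)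
      have ay := (acc_succ_iff y).mp (acc_at hy'.1)
      refine ⟨?_, ?_, h1, ?_, ?_⟩
      · rw [hσ x (hSX hx), hσ y (hSX hy), hx'.2, hy'.2]
      · rw [hσ x (hSX hx), hσ y (hSX hy)]
        intro he
        rw [he] at h2
        exact lt_irrefl _ h2
      · rw [hσ y (hSX hy)]
        exact ay.2.1
      · rw [hσ x (hSX hx)]
        exact ax.2.1
    intro u hu w hw huw
    obtain ⟨x, hx, rfl⟩ := mem_image.mp hu
    obtain ⟨y, hy, rfl⟩ := mem_image.mp hw
    rcases lt_trichotomy x y with hl | rfl | hl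
    · exact ⟨κ, s, key y hy x hx hl⟩
    · exact absurd rfl huw
    · exact ⟨κ, s, (key x hx y hy hl).symm⟩

/-- The probability of failure on a fixed set of vertices is at most `2 ^ (-D Q)`. -/
lemma Pr_fails (hc : 1 ≤ c) (hQ : 0 < Q) (pr : Bool → V → Fin m) (κ : Bool) (i : Fin r)
    (X : Finset (Fin m)) (σ : Fin m → V) (hσ : ∀ x ∈ X, pr κ (σ x) = x) (ℓ : ℕ)
    (hℓ : 2 * ℓ ≤ X.card)
    (hnum : (2 : ℝ) ^ (Q * (c + 1)) ≤ (1 / (1 - 1 / (4 * (c : ℝ)))) ^ ℓ) :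
    Pr (fun ω : Obj r D m Q c => Fails ω pr κ i X σ) ≤ (1 / 2) ^ (D * Q) := by
  classical
  have hsum := seq_mgf (ι := (Bool × Fin r × Fin D) × Fin m) (Λ := Fin Q × Fin c) (rkp κ i)
    (wtc pr κ i X σ) (fun _ => 1) ?_ (fun _ => zero_le_one) ?_ ?_
  rotate_left
  · intro a ω
    unfold wtc
    split_ifs
    · exact wt_nonneg hc _
    · exact zero_le_one
  · rintro ⟨⟨κ', j, s⟩, x⟩ ω ω' h
    unfold wtc
    split_ifs with hcond
    swap
    · rfl
    dsimp only at hcond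
    obtain ⟨rfl, rfl⟩ := hcond
    dsimp only
    rw [Met_congr (x := x) (fun a ha => h a (Or.inr ha)),
      Bad_congr (x := x) (fun a ha => h a (Or.inr ha))]
    have hy : ∀ y ≤ x, ω ((κ', j, s), y) = ω' ((κ', j, s), y) := by
      intro y hy
      rcases hy.lt_or_eq with hl | rfl
      · refine h _ (Or.inr ?_)
        rw [rkp_self, rkp_self]
        rw [Fin.lt_def] at hl
        omega
      · exact h _ (Or.inl rfl)
    exact wt_congr x (fun y hyx => by rw [ph, ph, hy y hyx]) (fun y hyx => by rw [ch, ch, hy y hyx])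
  · rintro ⟨⟨κ', j, s⟩, x⟩ ω
    unfold wtc
    by_cases hcond : κ' = κ ∧ j = i
    swap
    · simp [hcond]
    obtain ⟨rfl, rfl⟩ := hcond
    simp only [and_self, if_true]
    have hu : ∀ v, ∀ a, rkp κ' j a < rkp κ' j ((κ', j, s), x) →
        Function.update ω ((κ', j, s), x) v a = ω a := by
      intro v a ha
      rw [Function.update_of_ne]
      rintro rfl
      exact lt_irrefl _ ha
    have hph : ∀ v, ph (Function.update ω ((κ', j, s), x) v) κ' j s =
        Function.update (ph ω κ' j s) x v.1 := by
      intro v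
      funext y
      by_cases hy : y = x
      · subst hy
        simp [ph]
      · rw [ph, Function.update_of_ne (by simp [hy]), Function.update_of_ne hy, ph]
    have hch : ∀ v, ch (Function.update ω ((κ', j, s), x) v) κ' j s =
        Function.update (ch ω κ' j s) x v.2 := by
      intro v
      funext y
      by_cases hy : y = x
      · subst hy
        simp [ch]
      · rw [ch, Function.update_of_ne (by simp [hy]), Function.update_of_ne hy, ch]
    have := fun v => Met_congr (hu v)
    have := fun v => Bad_congr (pr := pr) (hu v)
    simp only [*]
    refine (wt_avg hc x).trans ?_
    simp
  have hmark := Pr_markov (fun ω => ∏ a, wtc pr κ i X σ a ω) ?_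
    (fun ω : Obj r D m Q c => Fails ω pr κ i X σ) (B := 2 ^ (D * Q)) (C := 1) (by positivity) ?_
    (by simpa using hsum) zero_le_one
  · rw [one_div, ← inv_pow, ← one_div] at hmark
    exact hmark
  · intro ω
    refine Finset.prod_nonneg fun a _ => ?_
    unfold wtc
    split_ifs
    · exact wt_nonneg hc _
    · exact zero_le_one
  · intro ω hF
    have hlayer : ∀ s : Fin D, (2 : ℝ) ^ Q ≤ ∏ x, wtc pr κ i X σ ((κ, i, s), x) ω := by
      intro s
      have h1 := wt_prod (X := X) (t := X.card) hc rfl (hF.not_full hσ s) (hF.1 s) (hF.2.1 s) hQ hℓ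
      have h2 : (2 : ℝ) ^ Q ≤ (1 / (1 - 1 / (4 * (c : ℝ)))) ^ ℓ * (1 / 2) ^ (Q * c) := by
        calc (2 : ℝ) ^ Q = 2 ^ (Q * (c + 1)) * (1 / 2) ^ (Q * c) := by
              rw [Nat.mul_add, mul_one, pow_add, mul_right_comm, ← mul_pow]
              norm_num
          _ ≤ _ := mul_le_mul_of_nonneg_right hnum (by positivity)
      refine (h2.trans h1).trans (le_of_eq ?_)
      refine Finset.prod_congr rfl fun x _ => ?_
      simp [wtc]
    rw [Fintype.prod_prod_type, Fintype.prod_prod_type]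
    calc (2 : ℝ) ^ (D * Q) = ∏ s : Fin D, (2 : ℝ) ^ Q := by simp [← pow_mul, mul_comm]
      _ ≤ ∏ s : Fin D, ∏ x, wtc pr κ i X σ ((κ, i, s), x) ω :=
        Finset.prod_le_prod (fun _ _ => by positivity) fun s _ => hlayer s
      _ = _ := by
        rw [Finset.prod_eq_single κ, Fintype.prod_prod_type, Finset.prod_eq_single i]
        · intro j _ hj
          simp [wtc, hj]
        · simp
        · intro κ' _ hk
          simp [wtc, hk]
        · simp

end positive

/-! ### Tail bounds for lines and collinear pairs -/

section tails
variable {Lay : Type*} [Fintype Lay] [DecidableEq Lay] {m Q c : ℕ}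

/-- Averages of functions of the line only. -/
lemma sum_line (F : Fin Q → ℝ) : ∑ v : Fin Q × Fin c, F v.1 = c * ∑ q, F q := by
  rw [Fintype.sum_prod_type]
  simp [Finset.mul_sum]

/-- Tail bound for the size of one line. -/
lemma tail_line (hQ : 0 < Q) (l : Lay) (q : Fin Q) (ℓ : ℕ) :
    Pr (fun ω : Lay × Fin m → Fin Q × Fin c =>
      ℓ < (univ.filter fun x => (ω (l, x)).1 = q).card) ≤ Real.exp (m / Q) / 2 ^ ℓ := by
  classical
  have hQ' : (0 : ℝ) < Q := by exact_mod_cast hQ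
  have hsum := seq_mgf (ι := Lay × Fin m) (Λ := Fin Q × Fin c) (fun _ => 0)
    (fun a ω => if a.1 = l then (if (ω a).1 = q then 2 else 1) else 1)
    (fun a => if a.1 = l then 1 + 1 / (Q : ℝ) else 1) ?_ ?_ ?_ ?_
  rotate_left
  · intro a ω
    split_ifs <;> norm_num
  · intro a
    split_ifs <;> positivity
  · intro a ω ω' h
    rw [h a (Or.inl rfl)]
  · rintro ⟨l', x⟩ ω
    by_cases hl : l' = l
    · simp only [hl, if_true, Function.update_self]
      rw [sum_line (fun q' => if q' = q then 2 else 1)]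
      have : ∑ q', (if q' = q then (2 : ℝ) else 1) = Q + 1 := by
        have : ∀ q', (if q' = q then (2 : ℝ) else 1) = 1 + if q' = q then 1 else 0 := by
          intro q'
          split_ifs <;> norm_num
        simp [this, Finset.sum_add_distrib]
      rw [this]
      apply le_of_eq
      simp
      field_simp
    · simp [hl]
  have hprod : ∏ a : Lay × Fin m, (if a.1 = l then 1 + 1 / (Q : ℝ) else 1) ≤ Real.exp (m / Q) := by
    rw [Fintype.prod_prod_type, Finset.prod_eq_single l]
    · simp only [if_true, prod_const, card_univ, Fintype.card_fin]
      calc (1 + 1 / (Q : ℝ)) ^ m ≤ (Real.exp (1 / Q)) ^ m := by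
            refine pow_le_pow_left₀ (by positivity) ?_ _
            rw [add_comm]
            exact Real.add_one_le_exp _
        _ = _ := by
            rw [← Real.exp_nat_mul]
            congr 1
            ring
    · intro l' _ h
      simp [h]
    · simp
  refine Pr_markov _ ?_ _ (by positivity) ?_ (hsum.trans
    (mul_le_mul_of_nonneg_right hprod (by positivity))) (Real.exp_nonneg _)
  · intro ω
    refine Finset.prod_nonneg fun a _ => ?_
    split_ifs <;> norm_num
  · intro ω h
    rw [Fintype.prod_prod_type, Finset.prod_eq_single l]
    · simp only [if_true]
      rw [← Finset.prod_filter, Finset.prod_const]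
      exact pow_le_pow_right₀ (by norm_num) h.le
    · intro l' _ h
      simp [h]
    · simp

/-- Number of points of `S` below `x` on the line of `x` in layer `l`. -/
def below (S : Finset (Fin m)) (ω : Lay × Fin m → Fin Q × Fin c) (l : Lay) (x : Fin m) : ℕ :=
  (S.filter fun y => y < x ∧ (ω (l, y)).1 = (ω (l, x)).1).card

/-- Tail bound for the number of collinear pairs of `S` in the layers of `lay`, when lines have at
most `ℓ` points: by convexity the factor `Θ ^ (d / ℓ)` of a point joining `d ≤ ℓ` smaller ones is
at most `1 + Θ d / ℓ`. -/
lemma tail_pairs (hQ : 0 < Q) (lay : Finset Lay) (S : Finset (Fin m)) {ℓ : ℕ} (hℓ : 0 < ℓ) {Θ : ℝ}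
    (hΘ : 1 ≤ Θ) (β : ℝ) :
    Pr (fun ω : Lay × Fin m → Fin Q × Fin c =>
      (∀ l q, (univ.filter fun x => (ω (l, x)).1 = q).card ≤ ℓ) ∧
        β * ℓ < ((∑ l ∈ lay, ∑ x ∈ S, below S ω l x : ℕ) : ℝ)) ≤
      Real.exp (lay.card * (S.card : ℝ) ^ 2 * Θ / (Q * ℓ)) / Θ ^ β := by
  classical
  have hQ' : (0 : ℝ) < Q := by exact_mod_cast hQ
  have hℓ' : (0 : ℝ) < ℓ := by exact_mod_cast hℓ
  have hΘ0 : 0 < Θ := by linarith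
  have hsum := seq_mgf (ι := Lay × Fin m) (Λ := Fin Q × Fin c) (fun a => a.2)
    (fun a ω => if a.1 ∈ lay ∧ a.2 ∈ S then
      Θ ^ ((min (below S ω a.1 a.2) ℓ : ℕ) / ℓ : ℝ) else 1)
    (fun a => if a.1 ∈ lay ∧ a.2 ∈ S then 1 + Θ * S.card / (Q * ℓ) else 1) ?_ ?_ ?_ ?_
  rotate_left
  · intro a ω
    split_ifs <;> positivity
  · intro a
    split_ifs <;> positivity
  · rintro ⟨l, x⟩ ω ω' h
    have : below S ω l x = below S ω' l x := by
      unfold below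
      congr 1
      refine Finset.filter_congr fun y _ => and_congr_right fun hy => ?_
      rw [h (l, x) (Or.inl rfl), h (l, y) (Or.inr hy)]
    simp only [this]
  · rintro ⟨l, x⟩ ω
    by_cases hl : l ∈ lay ∧ x ∈ S
    swap
    · simp [hl]
    simp only [hl, and_self, if_true]
    set F : Fin Q → ℝ := fun q => ((S.filter fun y => y < x ∧ (ω (l, y)).1 = q).card : ℝ) with hF
    have hb : ∀ v : Fin Q × Fin c, (below S (Function.update ω (l, x) v) l x : ℝ) = F v.1 := by
      intro v
      rw [hF, below]
      congr 2
      refine Finset.filter_congr fun y _ => and_congr_right fun hy => ?_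
      rw [Function.update_self, Function.update_of_ne]
      simp [hy.ne]
    have hle : ∀ v : Fin Q × Fin c,
        Θ ^ ((min (below S (Function.update ω (l, x) v) l x) ℓ : ℕ) / ℓ : ℝ) ≤
          1 + Θ / ℓ * F v.1 := by
      intro v
      rw [← hb v]
      set d := below S (Function.update ω (l, x) v) l x
      have h1 : ((min d ℓ : ℕ) / ℓ : ℝ) ≤ 1 := by
        rw [div_le_one hℓ']
        exact_mod_cast min_le_right _ _
      have h2 := rpow_one_add_le_one_add_mul_self (s := Θ - 1) (by linarith)
        (p := ((min d ℓ : ℕ) / ℓ : ℝ)) (by positivity) h1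
      rw [add_sub_cancel] at h2
      refine h2.trans ?_
      have h3 : ((min d ℓ : ℕ) : ℝ) ≤ d := by exact_mod_cast min_le_left _ _
      have h4 : ((min d ℓ : ℕ) / ℓ : ℝ) * (Θ - 1) ≤ (d / ℓ : ℝ) * Θ :=
        mul_le_mul (div_le_div_of_nonneg_right h3 hℓ'.le) (by linarith) (by linarith)
          (by positivity)
      calc _ ≤ 1 + (d / ℓ : ℝ) * Θ := by linarith
        _ = _ := by ring
    have hFs : ∑ q, F q ≤ S.card := by
      rw [hF]
      dsimp only
      rw [← Nat.cast_sum, Nat.cast_le]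
      have := Finset.card_eq_sum_card_fiberwise (f := fun y => (ω (l, y)).1)
        (s := S.filter fun y => y < x) (t := univ) (fun _ _ => mem_univ _)
      simp only [Finset.filter_filter] at this
      rw [← this]
      exact Finset.card_filter_le _ _
    calc _ ≤ ∑ v : Fin Q × Fin c, (1 + Θ / ℓ * F v.1) := Finset.sum_le_sum fun v _ => hle v
      _ = c * (Q + Θ / ℓ * ∑ q, F q) := by
        rw [sum_line (fun q => 1 + Θ / ℓ * F q), Finset.sum_add_distrib, ← Finset.mul_sum]
        simp
      _ ≤ c * (Q + Θ / ℓ * S.card) := by gcongr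
      _ = _ := by
        simp only [Fintype.card_prod, Fintype.card_fin, Nat.cast_mul]
        field_simp
  have hprod : ∏ a : Lay × Fin m, (if a.1 ∈ lay ∧ a.2 ∈ S then 1 + Θ * S.card / (Q * ℓ) else 1) ≤
      Real.exp (lay.card * (S.card : ℝ) ^ 2 * Θ / (Q * ℓ)) := by
    have : (univ.filter fun a : Lay × Fin m => a.1 ∈ lay ∧ a.2 ∈ S) = lay ×ˢ S := by
      ext a
      simp
    rw [← Finset.prod_filter, this, Finset.prod_const, Finset.card_product]
    calc (1 + Θ * S.card / (Q * ℓ)) ^ (lay.card * S.card) ≤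
          (Real.exp (Θ * S.card / (Q * ℓ))) ^ (lay.card * S.card) := by
          refine pow_le_pow_left₀ (by positivity) ?_ _
          rw [add_comm]
          exact Real.add_one_le_exp _
      _ = _ := by
          rw [← Real.exp_nat_mul]
          congr 1
          push_cast
          ring
  refine Pr_markov _ ?_ _ (by positivity) ?_ (hsum.trans
    (mul_le_mul_of_nonneg_right hprod (by positivity))) (Real.exp_nonneg _)
  · intro ω
    refine Finset.prod_nonneg fun a _ => ?_
    split_ifs <;> positivity
  · rintro ω ⟨hline, h⟩
    have hmin : ∀ l x, min (below S ω l x) ℓ = below S ω l x := by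
      intro l x
      refine min_eq_left ((Finset.card_le_card ?_).trans (hline l (ω (l, x)).1))
      intro y hy
      rw [mem_filter] at hy
      simp [hy.2.2]
    have : (univ.filter fun a : Lay × Fin m => a.1 ∈ lay ∧ a.2 ∈ S) = lay ×ˢ S := by
      ext a
      simp
    rw [← Finset.prod_filter, this, ← Real.rpow_sum_of_pos hΘ0]
    refine Real.rpow_le_rpow_of_exponent_le hΘ ?_
    simp only [hmin]
    rw [← Finset.sum_div, le_div_iff₀ hℓ', Finset.sum_product]
    refine h.le.trans (le_of_eq ?_)
    push_cast
    rfl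

end tails

/-! ### Tail bounds for excess incidences -/

section linefam
variable {Lay : Type*} [Fintype Lay] [DecidableEq Lay] {m Q c : ℕ}

/-- Number of lines of the family `J` through a point with position vector `v`. A line is a pair
of a layer and an index. -/
def dg (J : Finset (Lay × Fin Q)) (v : Lay → Fin Q × Fin c) : ℕ :=
  (J.filter fun p => (v p.1).1 = p.2).card

/-- Excess incidence: sum, over the points on some line of `J`, of the number of lines of `J'`
through the point, minus one. -/
def excess (J J' : Finset (Lay × Fin Q)) (ω : Lay × Fin m → Fin Q × Fin c) : ℕ :=
  ∑ x, if 1 ≤ dg J (fun l => ω (l, x)) then dg J' (fun l => ω (l, x)) - 1 else 0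

lemma dg_le (J : Finset (Lay × Fin Q)) (v : Lay → Fin Q × Fin c) (l l' : Lay) :
    dg J v ≤ 2 + ∑ s, if s = l ∨ s = l' then 0 else
      (univ.filter fun q => (s, q) ∈ J ∧ (v s).1 = q).card := by
  classical
  have h1 : dg J v = ∑ s, (univ.filter fun q => (s, q) ∈ J ∧ (v s).1 = q).card := by
    unfold dg
    rw [Finset.card_eq_sum_card_fiberwise (f := Prod.fst) (t := univ) (fun _ _ => mem_univ _)]
    refine Finset.sum_congr rfl fun s _ => ?_
    refine Finset.card_bij (fun p _ => p.2) ?_ ?_ ?_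
    · rintro ⟨s', q⟩ h
      simp only [mem_filter] at h
      obtain ⟨⟨h1, h2⟩, rfl⟩ := h
      simp [h1, h2]
    · rintro ⟨s', q⟩ h ⟨s'', q'⟩ h' heq
      simp only [mem_filter] at h h'
      obtain ⟨⟨h1, h2⟩, rfl⟩ := h
      obtain ⟨⟨h1', h2'⟩, rfl⟩ := h'
      dsimp only at heq
      rw [heq]
    · intro q h
      simp only [mem_filter, mem_univ, true_and] at h
      exact ⟨(s, q), by simp [h], rfl⟩
  have hle1 : ∀ s, (univ.filter fun q => (s, q) ∈ J ∧ (v s).1 = q).card ≤ 1 := by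
    intro s
    rw [Finset.card_le_one]
    intro a ha b hb
    simp only [mem_filter, mem_univ, true_and] at ha hb
    rw [← ha.2, ← hb.2]
  rw [h1]
  have h2 : ∀ s, (univ.filter fun q => (s, q) ∈ J ∧ (v s).1 = q).card ≤
      (if s = l then 1 else 0) + (if s = l' then 1 else 0) + if s = l ∨ s = l' then 0 else
        (univ.filter fun q => (s, q) ∈ J ∧ (v s).1 = q).card := by
    intro s
    have := hle1 s
    by_cases h1 : s = l
    · simp [h1] at this ⊢
      omega
    · by_cases h2 : s = l'
      · simp [h2] at this ⊢
        omega
      · simp [h1, h2]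
  refine (Finset.sum_le_sum fun s _ => h2 s).trans ?_
  rw [Finset.sum_add_distrib, Finset.sum_add_distrib]
  simp

/-- Average of `Θ` to the excess at one point, on the event that the point lies on two given
lines. -/
lemma avg_two (hQ : 0 < Q) (J : Finset (Lay × Fin Q)) {Θ : ℝ} (hΘ : 1 ≤ Θ)
    (hJ : Θ * J.card ≤ Q) {l l' : Lay} (hl : l ≠ l') (a b : Fin Q) :
    ∑ v : Lay → Fin Q × Fin c, (if (v l).1 = a ∧ (v l').1 = b then Θ ^ (dg J v - 1) else 0) ≤
      3 * Θ / (Q : ℝ) ^ 2 * Fintype.card (Lay → Fin Q × Fin c) := by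
  classical
  have hQ' : (0 : ℝ) < Q := by exact_mod_cast hQ
  have hΘ0 : 0 < Θ := by linarith
  let w : Lay → Fin Q × Fin c → ℝ := fun s x =>
    if s = l then (if x.1 = a then 1 else 0) else if s = l' then (if x.1 = b then 1 else 0)
    else Θ ^ (univ.filter fun q => (s, q) ∈ J ∧ x.1 = q).card
  have hw0 : ∀ s x, 0 ≤ w s x := by
    intro s x
    simp only [w]
    split_ifs <;> positivity
  have h1 : ∀ v : Lay → Fin Q × Fin c,
      (if (v l).1 = a ∧ (v l').1 = b then Θ ^ (dg J v - 1) else 0) ≤ Θ * ∏ s, w s (v s) := by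
    intro v
    split_ifs with h
    swap
    · exact mul_nonneg hΘ0.le (Finset.prod_nonneg fun s _ => hw0 s _)
    have : ∏ s, w s (v s) = Θ ^ (∑ s, if s = l ∨ s = l' then 0 else
        (univ.filter fun q => (s, q) ∈ J ∧ (v s).1 = q).card) := by
      rw [← Finset.prod_pow_eq_pow_sum]
      refine Finset.prod_congr rfl fun s _ => ?_
      simp only [w]
      by_cases h1 : s = l
      · subst h1
        simp [h.1]
      · by_cases h2 : s = l'
        · subst h2
          simp [h1, h.2]
        · simp [h1, h2]
    rw [this, ← pow_succ']
    refine pow_le_pow_right₀ hΘ ?_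
    have := dg_le J v l l'
    omega
  let js : Lay → ℕ := fun s => (univ.filter fun q => (s, q) ∈ J).card
  have hjs : ∑ s, js s = J.card := by
    rw [Finset.card_eq_sum_card_fiberwise (s := J) (f := Prod.fst) (t := univ)
      (fun _ _ => mem_univ _)]
    refine Finset.sum_congr rfl fun s _ => ?_
    refine Finset.card_bij (fun q _ => (s, q)) ?_ ?_ ?_
    · intro q h
      simpa using h
    · intro q _ q' _ h
      exact (Prod.ext_iff.mp h).2
    · rintro ⟨s', q⟩ h
      simp only [mem_filter] at h
      obtain ⟨h1, rfl⟩ := h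
      exact ⟨q, by simpa using h1, rfl⟩
  let cs : Lay → ℝ := fun s => if s = l then 1 / Q else if s = l' then 1 / Q else
    1 + Θ * js s / Q
  have hcs0 : ∀ s, 0 ≤ cs s := by
    intro s
    simp only [cs]
    split_ifs <;> positivity
  have h2 : ∀ s, ∑ x, w s x ≤ cs s * ((Q : ℝ) * c) := by
    intro s
    simp only [w, cs]
    by_cases h1 : s = l
    · simp only [h1, if_true]
      rw [sum_line (fun q => if q = a then (1 : ℝ) else 0)]
      apply le_of_eq
      simp
      field_simp
    by_cases h2 : s = l'
    · simp only [if_neg h1, if_pos h2]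
      rw [sum_line (fun q => if q = b then (1 : ℝ) else 0)]
      apply le_of_eq
      simp
      field_simp
    · simp only [if_neg h1, if_neg h2]
      rw [sum_line (fun q' => Θ ^ (univ.filter fun q => (s, q) ∈ J ∧ q' = q).card)]
      have : ∀ q' : Fin Q, Θ ^ (univ.filter fun q => (s, q) ∈ J ∧ q' = q).card ≤
          1 + Θ * if (s, q') ∈ J then 1 else 0 := by
        intro q'
        split_ifs with h
        · have : (univ.filter fun q => (s, q) ∈ J ∧ q' = q) = {q'} := by
            ext q
            simp only [mem_filter, mem_univ, true_and, mem_singleton]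
            constructor
            · exact fun h => h.2.symm
            · rintro rfl
              exact ⟨h, rfl⟩
          rw [this]
          simp
        · have : (univ.filter fun q => (s, q) ∈ J ∧ q' = q) = ∅ := by
            ext q
            simp only [mem_filter, mem_univ, true_and, notMem_empty, iff_false, not_and]
            rintro h' rfl
            exact h h'
          rw [this]
          simp
      calc _ ≤ c * ∑ q' : Fin Q, (1 + Θ * if (s, q') ∈ J then 1 else 0) := by
            gcongr with q'
            exact this q'
        _ = c * (Q + Θ * js s) := by
            rw [Finset.sum_add_distrib, ← Finset.mul_sum]
            simp [js]
        _ = _ := by field_simp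
  have h3 : ∏ s, cs s ≤ 3 / (Q : ℝ) ^ 2 := by
    have hle : ∀ s, cs s ≤ (if s = l then 1 / (Q : ℝ) else 1) * (if s = l' then 1 / (Q : ℝ) else 1)
        * Real.exp (Θ * js s / Q) := by
      intro s
      have he : 1 + Θ * js s / Q ≤ Real.exp (Θ * js s / Q) := by
        rw [add_comm]
        exact Real.add_one_le_exp _
      have he1 : 1 ≤ Real.exp (Θ * js s / Q) := Real.one_le_exp (by positivity)
      simp only [cs]
      by_cases h1 : s = l
      · simp only [h1, if_true, if_neg hl]
        rw [h1] at he1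
        rw [mul_one]
        exact le_mul_of_one_le_right (by positivity) he1
      by_cases h2 : s = l'
      · simp only [if_neg h1, if_pos h2]
        rw [one_mul]
        exact le_mul_of_one_le_right (by positivity) he1
      · simp only [if_neg h1, if_neg h2]
        simpa using he
    refine (Finset.prod_le_prod (fun s _ => hcs0 s) fun s _ => hle s).trans ?_
    rw [Finset.prod_mul_distrib, Finset.prod_mul_distrib, ← Real.exp_sum, ← Finset.sum_div,
      ← Finset.mul_sum, ← Nat.cast_sum, hjs]
    have he : Real.exp (Θ * J.card / Q) ≤ 3 := by
      calc _ ≤ Real.exp 1 := Real.exp_le_exp.mpr (by rwa [div_le_one hQ'])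
        _ ≤ 3 := by
          have := Real.exp_one_lt_d9
          linarith
    simp only [Finset.prod_ite_eq', mem_univ, if_true]
    calc _ ≤ 1 / (Q : ℝ) * (1 / Q) * 3 := mul_le_mul_of_nonneg_left he (by positivity)
      _ = _ := by
        field_simp
  calc _ ≤ ∑ v : Lay → Fin Q × Fin c, Θ * ∏ s, w s (v s) := Finset.sum_le_sum fun v _ => h1 v
    _ = Θ * ∏ s, ∑ x, w s x := by
      rw [← Finset.mul_sum, Finset.prod_univ_sum, Fintype.piFinset_univ]
    _ ≤ Θ * ∏ s, (cs s * ((Q : ℝ) * c)) := by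
      refine mul_le_mul_of_nonneg_left ?_ hΘ0.le
      exact Finset.prod_le_prod (fun s _ => Finset.sum_nonneg fun x _ => hw0 s x) fun s _ => h2 s
    _ = Θ * (∏ s, cs s) * Fintype.card (Lay → Fin Q × Fin c) := by
      rw [Finset.prod_mul_distrib]
      simp
      ring
    _ ≤ Θ * (3 / (Q : ℝ) ^ 2) * Fintype.card (Lay → Fin Q × Fin c) := by gcongr
    _ = _ := by ring

/-- Average of `Θ` to the excess at one point. -/
lemma avg_excess (hQ : 0 < Q) (J J' : Finset (Lay × Fin Q)) {Θ : ℝ} (hΘ : 1 ≤ Θ)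
    (hJ : Θ * J'.card ≤ Q) :
    ∑ v : Lay → Fin Q × Fin c, Θ ^ (if 1 ≤ dg J v then dg J' v - 1 else 0) ≤
      (1 + 3 * Θ * J.card * J'.card / (Q : ℝ) ^ 2) * Fintype.card (Lay → Fin Q × Fin c) := by
  classical
  have hΘ0 : 0 < Θ := by linarith
  have h1 : ∀ v : Lay → Fin Q × Fin c, Θ ^ (if 1 ≤ dg J v then dg J' v - 1 else 0) ≤
      1 + ∑ p ∈ J, ∑ p' ∈ J', if p.1 ≠ p'.1 then
        (if (v p.1).1 = p.2 ∧ (v p'.1).1 = p'.2 then Θ ^ (dg J' v - 1) else 0) else 0 := by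
    intro v
    have hnn : ∀ p p' : Lay × Fin Q, 0 ≤ if p.1 ≠ p'.1 then
        (if (v p.1).1 = p.2 ∧ (v p'.1).1 = p'.2 then Θ ^ (dg J' v - 1) else 0) else 0 := by
      intro p p'
      split_ifs <;> positivity
    have hs0 := Finset.sum_nonneg fun p (_ : p ∈ J) => Finset.sum_nonneg
      fun p' (_ : p' ∈ J') => hnn p p'
    split_ifs with h
    swap
    · simpa using hs0
    by_cases h2 : dg J' v ≤ 1
    · rw [Nat.sub_eq_zero_of_le h2, pow_zero] at hs0 ⊢
      linarith
    obtain ⟨p, hp⟩ := Finset.card_pos.mp (show 0 < (J.filter fun p => (v p.1).1 = p.2).card from h)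
    rw [mem_filter] at hp
    obtain ⟨p', hp', hne⟩ := Finset.exists_mem_ne
      (show 1 < (J'.filter fun p => (v p.1).1 = p.2).card from not_le.mp h2) p
    rw [mem_filter] at hp'
    have hll : p.1 ≠ p'.1 := by
      intro he
      apply hne
      refine Prod.ext he.symm ?_
      rw [← hp'.2, ← hp.2, he]
    have h3 : Θ ^ (dg J' v - 1) ≤ ∑ p ∈ J, ∑ p' ∈ J', if p.1 ≠ p'.1 then
        (if (v p.1).1 = p.2 ∧ (v p'.1).1 = p'.2 then Θ ^ (dg J' v - 1) else 0) else 0 := by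
      calc Θ ^ (dg J' v - 1) = if p.1 ≠ p'.1 then
          (if (v p.1).1 = p.2 ∧ (v p'.1).1 = p'.2 then Θ ^ (dg J' v - 1) else 0) else 0 := by
            rw [if_pos hll, if_pos ⟨hp.2, hp'.2⟩]
        _ ≤ _ := Finset.single_le_sum (f := fun p' : Lay × Fin Q => if p.1 ≠ p'.1 then
          (if (v p.1).1 = p.2 ∧ (v p'.1).1 = p'.2 then Θ ^ (dg J' v - 1) else 0) else 0)
            (fun p' _ => hnn p p') hp'.1
        _ ≤ _ := Finset.single_le_sum (f := fun p : Lay × Fin Q => ∑ p' ∈ J', if p.1 ≠ p'.1 then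
          (if (v p.1).1 = p.2 ∧ (v p'.1).1 = p'.2 then Θ ^ (dg J' v - 1) else 0) else 0)
            (fun p _ => Finset.sum_nonneg fun p' _ => hnn p p') hp.1
    linarith
  calc _ ≤ _ := Finset.sum_le_sum fun v _ => h1 v
    _ = Fintype.card (Lay → Fin Q × Fin c) + ∑ p ∈ J, ∑ p' ∈ J', ∑ v : Lay → Fin Q × Fin c,
        if p.1 ≠ p'.1 then
        (if (v p.1).1 = p.2 ∧ (v p'.1).1 = p'.2 then Θ ^ (dg J' v - 1) else 0) else 0 := by
      rw [Finset.sum_add_distrib, Finset.sum_comm]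
      congr 1
      · rw [Finset.sum_const, Finset.card_univ, nsmul_eq_mul, mul_one]
      · exact Finset.sum_congr rfl fun p _ => Finset.sum_comm
    _ ≤ Fintype.card (Lay → Fin Q × Fin c) + ∑ p ∈ J, ∑ p' ∈ J',
        3 * Θ / (Q : ℝ) ^ 2 * Fintype.card (Lay → Fin Q × Fin c) := by
      gcongr with p _ p' _
      by_cases h : p.1 ≠ p'.1
      · simp only [if_pos h]
        exact avg_two hQ J' hΘ hJ h p.2 p'.2
      · simp only [if_neg h]
        simp only [Finset.sum_const_zero]
        positivity
    _ = _ := by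
      simp only [Finset.sum_const, nsmul_eq_mul]
      ring

/-- Tail bound for the excess of two nested families of lines. -/
lemma tail_excess (hQ : 0 < Q) (J J' : Finset (Lay × Fin Q)) {Θ : ℝ} (hΘ : 1 ≤ Θ)
    (hJ : Θ * J'.card ≤ Q) (B : ℝ) :
    Pr (fun ω : Lay × Fin m → Fin Q × Fin c => B < (excess J J' ω : ℝ)) ≤
      Real.exp (3 * m * Θ * J.card * J'.card / (Q : ℝ) ^ 2) / Θ ^ B := by
  classical
  have hΘ0 : 0 < Θ := by linarith
  let e : (Lay × Fin m → Fin Q × Fin c) ≃ (Fin m → Lay → Fin Q × Fin c) :=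
    ⟨fun ω x l => ω (l, x), fun f p => f p.2 p.1, fun _ => rfl, fun _ => rfl⟩
  refine Pr_markov (fun ω => Θ ^ (excess J J' ω)) (fun ω => by positivity) _ (by positivity) ?_ ?_
    (Real.exp_nonneg _)
  · intro ω h
    rw [← Real.rpow_natCast]
    exact Real.rpow_le_rpow_of_exponent_le hΘ h.le
  · have h1 : ∑ ω : Lay × Fin m → Fin Q × Fin c, Θ ^ (excess J J' ω) =
        ∑ f : Fin m → Lay → Fin Q × Fin c,
          ∏ x, Θ ^ (if 1 ≤ dg J (f x) then dg J' (f x) - 1 else 0) := by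
      rw [← Equiv.sum_comp e]
      refine Finset.sum_congr rfl fun ω _ => ?_
      rw [Finset.prod_pow_eq_pow_sum]
      rfl
    have h2 := Finset.prod_univ_sum (fun _ : Fin m => (univ : Finset (Lay → Fin Q × Fin c)))
      (fun _ v => Θ ^ (if 1 ≤ dg J v then dg J' v - 1 else 0))
    rw [Fintype.piFinset_univ] at h2
    rw [h1, ← h2, Finset.prod_const, Finset.card_univ, Fintype.card_fin, Fintype.card_congr e,
      Fintype.card_fun, Fintype.card_fin]
    push_cast
    have h3 := avg_excess (c := c) hQ J J' hΘ hJ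
    calc _ ≤ ((1 + 3 * Θ * J.card * J'.card / (Q : ℝ) ^ 2) *
          Fintype.card (Lay → Fin Q × Fin c)) ^ m := by
          refine pow_le_pow_left₀ (Finset.sum_nonneg fun v _ => by positivity) h3 _
      _ = (1 + 3 * Θ * J.card * J'.card / (Q : ℝ) ^ 2) ^ m *
          (Fintype.card (Lay → Fin Q × Fin c) : ℝ) ^ m := by rw [mul_pow]
      _ ≤ Real.exp (3 * m * Θ * J.card * J'.card / (Q : ℝ) ^ 2) *
          (Fintype.card (Lay → Fin Q × Fin c) : ℝ) ^ m := by
          gcongr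
          calc _ ≤ (Real.exp (3 * Θ * J.card * J'.card / (Q : ℝ) ^ 2)) ^ m := by
                refine pow_le_pow_left₀ (by positivity) ?_ _
                rw [add_comm]
                exact Real.add_one_le_exp _
            _ = _ := by
                rw [← Real.exp_nat_mul]
                congr 1
                ring

end linefam

/-! ### Counting paths of two lines -/

lemma level_card {n ℓ : ℕ} (h : n ≤ ℓ) : ((Icc 1 ℓ).filter fun τ => τ ≤ n).card = n := by
  have : (Icc 1 ℓ).filter (fun τ => τ ≤ n) = Icc 1 n := by
    ext τ
    simp only [mem_filter, mem_Icc]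
    omega
  rw [this]
  simp

lemma level_sum {n ℓ : ℕ} (h : n ≤ ℓ) : ∑ τ ∈ (Icc 1 ℓ).filter (fun τ => τ ≤ n), τ ≤ n ^ 2 := by
  calc _ ≤ ∑ τ ∈ (Icc 1 ℓ).filter (fun τ => τ ≤ n), n :=
        Finset.sum_le_sum fun τ hτ => (mem_filter.mp hτ).2
    _ = n ^ 2 := by rw [Finset.sum_const, level_card h, smul_eq_mul, sq]

section det
set_option linter.unusedSectionVars false
variable {Lay : Type*} [Fintype Lay] [DecidableEq Lay] {m Q c : ℕ}

/-- Number of points of `S` on the line `p`. -/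
def onl (S : Finset (Fin m)) (ω : Lay × Fin m → Fin Q × Fin c) (p : Lay × Fin Q) : ℕ :=
  (S.filter fun x => (ω (p.1, x)).1 = p.2).card

/-- The lines, in the layers of `lay`, with at least `τ` points of `S`. -/
def rich (S : Finset (Fin m)) (lay : Finset Lay) (ω : Lay × Fin m → Fin Q × Fin c) (τ : ℕ) :
    Finset (Lay × Fin Q) :=
  (lay ×ˢ univ).filter fun p => τ ≤ onl S ω p

/-- Pairs of distinct lines through a common point, the first with at least `τ` and the second with
at least `τ'` points of `S`. -/
def crossings (S : Finset (Fin m)) (lay : Finset Lay) (ω : Lay × Fin m → Fin Q × Fin c)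
    (τ τ' : ℕ) : ℕ :=
  ∑ z : Fin m, ∑ l ∈ lay, ∑ l' ∈ lay.erase l,
    (if τ ≤ onl S ω (l, (ω (l, z)).1) then 1 else 0) *
      (if τ' ≤ onl S ω (l', (ω (l', z)).1) then 1 else 0)

variable {S : Finset (Fin m)} {lay : Finset Lay} {ω : Lay × Fin m → Fin Q × Fin c} {ℓ : ℕ}

lemma sum_onl (S : Finset (Fin m)) (ω : Lay × Fin m → Fin Q × Fin c) (l : Lay) :
    ∑ q, onl S ω (l, q) = S.card := by
  unfold onl
  rw [Finset.card_eq_sum_card_fiberwise (s := S) (f := fun x => (ω (l, x)).1) (t := univ)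
    (fun _ _ => mem_univ _)]

lemma sum_onl_sq (S : Finset (Fin m)) (ω : Lay × Fin m → Fin Q × Fin c) (l : Lay) :
    ∑ q, onl S ω (l, q) ^ 2 = S.card + 2 * ∑ x ∈ S, below S ω l x := by
  have h1 : ∑ q, onl S ω (l, q) ^ 2 =
      ∑ x ∈ S, (S.filter fun y => (ω (l, y)).1 = (ω (l, x)).1).card := by
    rw [← Finset.sum_fiberwise_of_maps_to (s := S) (t := univ) (g := fun x => (ω (l, x)).1)
      (fun _ _ => mem_univ _)]
    refine Finset.sum_congr rfl fun q _ => ?_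
    rw [sq]
    conv_lhs => rw [onl, ← smul_eq_mul, ← Finset.sum_const]
    refine Finset.sum_congr rfl fun x hx => ?_
    rw [(mem_filter.mp hx).2]
  have h2 : ∀ x ∈ S, (S.filter fun y => (ω (l, y)).1 = (ω (l, x)).1).card =
      1 + below S ω l x + (S.filter fun y => x < y ∧ (ω (l, x)).1 = (ω (l, y)).1).card := by
    intro x hx
    have : (S.filter fun y => (ω (l, y)).1 = (ω (l, x)).1) =
        ({x} ∪ S.filter fun y => y < x ∧ (ω (l, y)).1 = (ω (l, x)).1) ∪
          (S.filter fun y => x < y ∧ (ω (l, x)).1 = (ω (l, y)).1) := by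
      ext y
      simp only [mem_union, mem_filter, mem_singleton]
      constructor
      · rintro ⟨h1, h2⟩
        rcases lt_trichotomy y x with h | h | h
        · exact Or.inl (Or.inr ⟨h1, h, h2⟩)
        · exact Or.inl (Or.inl h)
        · exact Or.inr ⟨h1, h, h2.symm⟩
      · rintro ((rfl | h) | h)
        · exact ⟨hx, rfl⟩
        · exact ⟨h.1, h.2.2⟩
        · exact ⟨h.1, h.2.2.symm⟩
    rw [this, Finset.card_union_of_disjoint, Finset.card_union_of_disjoint]
    · rfl
    · rw [Finset.disjoint_singleton_left]
      simp
    · rw [Finset.disjoint_left]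
      intro y hy hy'
      simp only [mem_union, mem_filter, mem_singleton] at hy hy'
      rcases hy with rfl | hy
      · exact lt_irrefl _ hy'.2.1
      · exact lt_asymm hy.2.1 hy'.2.1
  have h3 : ∑ x ∈ S, (S.filter fun y => x < y ∧ (ω (l, x)).1 = (ω (l, y)).1).card =
      ∑ x ∈ S, below S ω l x := by
    simp only [below, Finset.card_filter]
    rw [Finset.sum_comm]
  rw [h1, Finset.sum_congr rfl h2, Finset.sum_add_distrib, Finset.sum_add_distrib, h3]
  simp
  ring

lemma crossings_comm (τ τ' : ℕ) : crossings S lay ω τ τ' = crossings S lay ω τ' τ := by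
  unfold crossings
  refine Finset.sum_congr rfl fun z _ => ?_
  rw [Finset.sum_comm' (t' := lay) (s' := fun l' => lay.erase l')]
  · refine Finset.sum_congr rfl fun l _ => Finset.sum_congr rfl fun l' _ => mul_comm _ _
  · intro x y
    simp only [mem_erase]
    tauto

lemma dg_rich (z : Fin m) (τ : ℕ) : dg (rich S lay ω τ) (fun l => ω (l, z)) =
    (lay.filter fun l => τ ≤ onl S ω (l, (ω (l, z)).1)).card := by
  unfold dg rich
  symm
  refine Finset.card_bij (fun l _ => (l, (ω (l, z)).1)) ?_ ?_ ?_
  · intro l hl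
    rw [mem_filter] at hl
    simp [hl]
  · intro l _ l' _ h
    exact (Prod.ext_iff.mp h).1
  · rintro ⟨l, q⟩ h
    simp only [mem_filter, mem_product, mem_univ, and_true] at h
    obtain ⟨⟨h1, h2⟩, rfl⟩ := h
    exact ⟨l, by simp [h1, h2], rfl⟩

lemma rich_anti {τ τ' : ℕ} (h : τ' ≤ τ) : rich S lay ω τ ⊆ rich S lay ω τ' :=
  Finset.monotone_filter_right _ fun _ _ hp => h.trans hp

/-- At a point, each line of level `τ` crosses all lines of level `τ'` but itself. -/
lemma crossings_eq {τ τ' : ℕ} (h : τ' ≤ τ) : crossings S lay ω τ τ' =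
    ∑ z : Fin m, dg (rich S lay ω τ) (fun l => ω (l, z)) *
      (dg (rich S lay ω τ') (fun l => ω (l, z)) - 1) := by
  unfold crossings
  refine Finset.sum_congr rfl fun z _ => ?_
  rw [dg_rich, dg_rich, ← smul_eq_mul, ← Finset.sum_const, Finset.sum_filter]
  refine Finset.sum_congr rfl fun l hl => ?_
  rw [← Finset.mul_sum]
  split_ifs with h1
  swap
  · simp
  rw [one_mul, ← Finset.card_filter]
  have : ((lay.erase l).filter fun l' => τ' ≤ onl S ω (l', (ω (l', z)).1)) =
      (lay.filter fun l' => τ' ≤ onl S ω (l', (ω (l', z)).1)).erase l := by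
    rw [Finset.filter_erase]
  rw [this, Finset.card_erase_of_mem]
  rw [mem_filter]
  exact ⟨hl, h.trans h1⟩

/-- Crossings of nested families of lines are controlled by excesses. -/
lemma crossings_le_excess {τ τ' : ℕ} (h : τ' ≤ τ) : crossings S lay ω τ τ' ≤
    excess (rich S lay ω τ) (rich S lay ω τ') ω +
      lay.card * excess (rich S lay ω τ) (rich S lay ω τ) ω := by
  rw [crossings_eq h, excess, excess, Finset.mul_sum, ← Finset.sum_add_distrib]
  refine Finset.sum_le_sum fun z _ => ?_
  have hq : dg (rich S lay ω τ') (fun l => ω (l, z)) ≤ lay.card := by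
    rw [dg_rich]
    exact Finset.card_filter_le _ _
  set p := dg (rich S lay ω τ) (fun l => ω (l, z))
  set q := dg (rich S lay ω τ') (fun l => ω (l, z))
  by_cases hp : 1 ≤ p
  · simp only [if_pos hp]
    obtain ⟨p', hp'⟩ := Nat.exists_eq_add_of_le hp
    rw [hp', Nat.add_sub_cancel_left, Nat.add_mul, one_mul]
    have : p' * (q - 1) ≤ lay.card * p' := by
      rw [mul_comm]
      exact Nat.mul_le_mul_right _ (by omega)
    omega
  · simp [show p = 0 by omega]

/-- A line has at most `ℓ` points, and each is on one line per layer. -/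
lemma crossings_le_trivial {τ τ' : ℕ} (h : τ' ≤ τ)
    (hline : ∀ l q, (univ.filter fun x => (ω (l, x)).1 = q).card ≤ ℓ) :
    crossings S lay ω τ τ' ≤ lay.card * ℓ * (rich S lay ω τ).card := by
  rw [crossings_eq h]
  calc _ ≤ ∑ z : Fin m, dg (rich S lay ω τ) (fun l => ω (l, z)) * lay.card := by
        refine Finset.sum_le_sum fun z _ => Nat.mul_le_mul_left _ ?_
        rw [dg_rich]
        exact (Nat.sub_le _ _).trans (Finset.card_filter_le _ _)
    _ = lay.card * ∑ z : Fin m, dg (rich S lay ω τ) (fun l => ω (l, z)) := by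
        rw [← Finset.sum_mul, mul_comm]
    _ = lay.card * ∑ p ∈ rich S lay ω τ, (univ.filter fun z => (ω (p.1, z)).1 = p.2).card := by
        congr 1
        simp only [dg, Finset.card_filter]
        rw [Finset.sum_comm]
    _ ≤ lay.card * ∑ p ∈ rich S lay ω τ, ℓ := by
        gcongr with p
        exact hline _ _
    _ = _ := by
        rw [Finset.sum_const, smul_eq_mul]
        ring

/-- Number of pairs of points of `S` joined by a path of two lines, counted with multiplicity. -/
def paths (S : Finset (Fin m)) (lay : Finset Lay) (ω : Lay × Fin m → Fin Q × Fin c) : ℕ :=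
  ∑ z : Fin m, ∑ l ∈ lay, ∑ l' ∈ lay.erase l,
    onl S ω (l, (ω (l, z)).1) * onl S ω (l', (ω (l', z)).1)

lemma paths_eq (hon : ∀ p, onl S ω p ≤ ℓ) :
    paths S lay ω = ∑ τ ∈ Icc 1 ℓ, ∑ τ' ∈ Icc 1 ℓ, crossings S lay ω τ τ' := by
  have h : ∀ p, onl S ω p = ∑ τ ∈ Icc 1 ℓ, if τ ≤ onl S ω p then 1 else 0 := by
    intro p
    rw [← Finset.card_filter, level_card (hon p)]
  unfold paths crossings
  have : ∀ z l l', onl S ω (l, (ω (l, z)).1) * onl S ω (l', (ω (l', z)).1) =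
      ∑ p ∈ Icc 1 ℓ ×ˢ Icc 1 ℓ, (if p.1 ≤ onl S ω (l, (ω (l, z)).1) then 1 else 0) *
      (if p.2 ≤ onl S ω (l', (ω (l', z)).1) then 1 else 0) := by
    intro z l l'
    conv_lhs => rw [h (l, _), h (l', _), Finset.sum_mul_sum, ← Finset.sum_product']
  simp only [this]
  symm
  refine (Finset.sum_product' (Icc 1 ℓ) (Icc 1 ℓ) _).symm.trans ?_
  refine Finset.sum_comm.trans (Finset.sum_congr rfl fun z _ => ?_)
  refine Finset.sum_comm.trans (Finset.sum_congr rfl fun l _ => ?_)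
  exact Finset.sum_comm

lemma sum_rich (hon : ∀ p, onl S ω p ≤ ℓ) :
    ∑ τ ∈ Icc 1 ℓ, (rich S lay ω τ).card = lay.card * S.card := by
  simp only [rich, Finset.card_filter]
  rw [Finset.sum_comm, Finset.sum_product]
  calc _ = ∑ l ∈ lay, ∑ q, onl S ω (l, q) := by
        refine Finset.sum_congr rfl fun l _ => Finset.sum_congr rfl fun q _ => ?_
        rw [← Finset.card_filter, level_card (hon _)]
    _ = _ := by simp [sum_onl]

/-- The lines of level `τ`, weighted by `τ`, are controlled by the collinear pairs of `S`. -/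
lemma sum_mul_rich (hon : ∀ p, onl S ω p ≤ ℓ) :
    ∑ τ ∈ Icc 1 ℓ, τ * (rich S lay ω τ).card ≤
      lay.card * S.card + 2 * ∑ l ∈ lay, ∑ x ∈ S, below S ω l x := by
  simp only [rich, Finset.card_filter, Finset.mul_sum]
  rw [Finset.sum_comm, Finset.sum_product]
  calc _ ≤ ∑ l ∈ lay, ∑ q, onl S ω (l, q) ^ 2 := by
        refine Finset.sum_le_sum fun l _ => Finset.sum_le_sum fun q _ => ?_
        simp only [mul_ite, mul_one, mul_zero]
        rw [← Finset.sum_filter]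
        exact level_sum (hon _)
    _ = _ := by simp [sum_onl_sq, Finset.sum_add_distrib, Finset.mul_sum]

/-- Bound on the number of two-line paths. Rich lines are split into levels; for a level with few
lines the excess bound applies, and the few levels with many lines are bounded trivially. -/
lemma paths_bound (hQ : 0 < Q) {K₃ a Θ T : ℝ} (hΘ : 0 < Θ)
    (hK : 0 ≤ K₃) (ha : 0 ≤ a)
    (hline : ∀ l q, (univ.filter fun x => (ω (l, x)).1 = q).card ≤ ℓ)
    (hbelow : ((∑ l ∈ lay, ∑ x ∈ S, below S ω l x : ℕ) : ℝ) ≤ T * S.card)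
    (hX : ∀ J J' : Finset (Lay × Fin Q), J ⊆ J' → Θ * J'.card ≤ Q →
      (excess J J' ω : ℝ) ≤ K₃ * J'.card + a * J.card * J'.card) :
    (paths S lay ω : ℝ) ≤ 2 * (ℓ * K₃ * (lay.card * S.card) +
      lay.card * K₃ * (lay.card * S.card + 2 * T * S.card) +
      (1 + lay.card) * a * (lay.card * S.card) ^ 2 +
      lay.card * ℓ * (lay.card * S.card) * (Θ * lay.card * S.card / Q)) := by
  classical
  have hQ' : (0 : ℝ) < Q := by exact_mod_cast hQ
  have hon : ∀ p, onl S ω p ≤ ℓ := fun p =>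
    (Finset.card_le_card (Finset.filter_subset_filter _ (subset_univ S))).trans (hline p.1 p.2)
  set D : ℝ := (lay.card : ℝ) with hD
  have hD0 : 0 ≤ D := by positivity
  set σ : ℝ := (S.card : ℝ) with hσ
  set n : ℕ → ℝ := fun τ => (rich S lay ω τ).card with hn
  have hn0 : ∀ τ, 0 ≤ n τ := fun τ => by positivity
  have hsn : ∑ τ ∈ Icc 1 ℓ, n τ = D * σ := by
    have := sum_rich (S := S) (lay := lay) (ω := ω) hon
    rw [hn, hD, hσ, ← Nat.cast_mul, ← this]
    push_cast
    rfl
  have hsn2 : ∑ τ ∈ Icc 1 ℓ, (τ : ℝ) * n τ ≤ D * σ + 2 * T * σ := by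
    have := sum_mul_rich (S := S) (lay := lay) (ω := ω) hon
    have h2 : ((∑ τ ∈ Icc 1 ℓ, τ * (rich S lay ω τ).card : ℕ) : ℝ) ≤
        ((lay.card * S.card + 2 * ∑ l ∈ lay, ∑ x ∈ S, below S ω l x : ℕ) : ℝ) := by
      exact_mod_cast this
    rw [Nat.cast_sum, Nat.cast_add, Nat.cast_mul, Nat.cast_mul 2] at h2
    simp only [Nat.cast_mul] at h2
    refine h2.trans ?_
    rw [Nat.cast_two]
    linarith
  -- levels with too many lines for the excess bound; there are few of them
  let light : Finset ℕ := (Icc 1 ℓ).filter fun τ => ¬ Θ * n τ ≤ Q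
  have hlight : (light.card : ℝ) ≤ Θ * D * σ / Q := by
    rw [le_div_iff₀ hQ']
    calc (light.card : ℝ) * Q = ∑ τ ∈ light, (Q : ℝ) := by simp
      _ ≤ ∑ τ ∈ light, Θ * n τ := Finset.sum_le_sum fun τ hτ =>
          (not_le.mp (mem_filter.mp hτ).2).le
      _ ≤ ∑ τ ∈ Icc 1 ℓ, Θ * n τ := Finset.sum_le_sum_of_subset_of_nonneg (filter_subset _ _)
          fun τ _ _ => mul_nonneg hΘ.le (hn0 τ)
      _ = _ := by
          rw [← Finset.mul_sum, hsn]
          ring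
  let b : ℕ → ℕ → ℝ := fun τ τ' => K₃ * n τ' + (if τ' ≤ τ then D * K₃ * n τ else 0) +
    (1 + D) * a * (n τ * n τ') + if τ' ∈ light then D * ℓ * n τ else 0
  have hb0 : ∀ τ τ', 0 ≤ b τ τ' := by
    intro τ τ'
    have := hn0 τ
    have := hn0 τ'
    simp only [b]
    split_ifs <;> positivity
  have hI : ∀ τ, ∀ τ' ∈ Icc 1 ℓ, τ' ≤ τ → (crossings S lay ω τ τ' : ℝ) ≤ b τ τ' := by
    intro τ τ' hτ' h
    have h0 := hn0 τ
    have h0' := hn0 τ'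
    have hnn : n τ ≤ n τ' := by
      simp only [hn]
      exact_mod_cast Finset.card_le_card (rich_anti h)
    simp only [b, if_pos h]
    by_cases hl : τ' ∈ light
    · rw [if_pos hl]
      have h1 := crossings_le_trivial (S := S) (lay := lay) h hline
      have h2 : (crossings S lay ω τ τ' : ℝ) ≤ D * ℓ * n τ := by
        simp only [hn, hD]
        exact_mod_cast h1
      have : 0 ≤ K₃ * n τ' + D * K₃ * n τ + (1 + D) * a * (n τ * n τ') := by positivity
      linarith
    · rw [if_neg hl]
      have hl' : Θ * n τ' ≤ Q := by
        by_contra hc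
        exact hl (mem_filter.mpr ⟨hτ', hc⟩)
      have h1 := crossings_le_excess (S := S) (lay := lay) (ω := ω) h
      have h2 : (crossings S lay ω τ τ' : ℝ) ≤ excess (rich S lay ω τ) (rich S lay ω τ') ω +
          D * excess (rich S lay ω τ) (rich S lay ω τ) ω := by
        rw [hD]
        exact_mod_cast h1
      have h3 := hX _ _ (rich_anti (S := S) (lay := lay) (ω := ω) h) hl'
      have h4 := hX (rich S lay ω τ) _ (Finset.Subset.refl _)
        ((mul_le_mul_of_nonneg_left hnn hΘ.le).trans hl')
      have h5 : D * (excess (rich S lay ω τ) (rich S lay ω τ) ω : ℝ) ≤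
          D * (K₃ * n τ + a * n τ * n τ') := by
        refine mul_le_mul_of_nonneg_left (h4.trans ?_) hD0
        have := mul_le_mul_of_nonneg_left hnn (mul_nonneg ha h0)
        simp only [hn] at this ⊢
        linarith
      calc (crossings S lay ω τ τ' : ℝ) ≤ (K₃ * n τ' + a * n τ * n τ') +
            D * (K₃ * n τ + a * n τ * n τ') := h2.trans (add_le_add h3 h5)
        _ = _ := by ring
  have hsum : (paths S lay ω : ℝ) ≤ 2 * ∑ τ ∈ Icc 1 ℓ, ∑ τ' ∈ Icc 1 ℓ, b τ τ' := by
    rw [paths_eq hon, two_mul]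
    conv_rhs =>
      arg 2
      rw [Finset.sum_comm]
    rw [← Finset.sum_add_distrib, Nat.cast_sum]
    refine Finset.sum_le_sum fun τ hτ => ?_
    rw [← Finset.sum_add_distrib, Nat.cast_sum]
    refine Finset.sum_le_sum fun τ' hτ' => ?_
    have h1 := hb0 τ τ'
    have h2 := hb0 τ' τ
    rcases le_total τ' τ with h | h
    · have := hI τ τ' hτ' h
      linarith
    · have := hI τ' τ hτ h
      rw [crossings_comm]
      linarith
  refine hsum.trans (mul_le_mul_of_nonneg_left ?_ (by norm_num))
  simp only [b, Finset.sum_add_distrib]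
  refine add_le_add (add_le_add (add_le_add ?_ ?_) ?_) ?_
  · rw [Finset.sum_const, ← Finset.mul_sum, hsn]
    simp
    ring_nf
    rfl
  · calc _ ≤ ∑ τ ∈ Icc 1 ℓ, D * K₃ * (τ * n τ) := by
          refine Finset.sum_le_sum fun τ hτ => ?_
          rw [← Finset.sum_filter, Finset.sum_const, level_card (mem_Icc.mp hτ).2]
          apply le_of_eq
          rw [nsmul_eq_mul]
          ring
      _ ≤ _ := by
          rw [← Finset.mul_sum]
          exact mul_le_mul_of_nonneg_left hsn2 (by positivity)
  · apply le_of_eq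
    simp only [← Finset.mul_sum]
    rw [← hsn, ← Finset.sum_mul]
    ring
  · calc _ = ∑ τ ∈ Icc 1 ℓ, D * ℓ * n τ * light.card := by
          refine Finset.sum_congr rfl fun τ _ => ?_
          rw [← Finset.sum_filter, Finset.filter_mem_eq_inter,
            Finset.inter_eq_right.mpr (filter_subset _ _), Finset.sum_const, nsmul_eq_mul]
          ring
      _ = D * ℓ * (D * σ) * light.card := by
          rw [← Finset.sum_mul, ← Finset.mul_sum, hsn]
      _ ≤ _ := mul_le_mul_of_nonneg_left hlight (by positivity)

end det

/-! ### Near pairs and fibres -/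

section near
variable {r D m Q c : ℕ}

/-- The layers of system `κ`. -/
def layS (r D : ℕ) (κ : Bool) : Finset (Bool × Fin r × Fin D) := univ.filter fun l => l.1 = κ

/-- The layers of colour `i` of system `κ`. -/
def layC (D : ℕ) {r : ℕ} (κ : Bool) (i : Fin r) : Finset (Bool × Fin r × Fin D) :=
  univ.filter fun l => l.1 = κ ∧ l.2.1 = i

lemma card_layS (κ : Bool) : (layS r D κ).card = r * D := by
  have : layS r D κ = {κ} ×ˢ (univ : Finset (Fin r × Fin D)) := by
    ext ⟨a, b⟩
    simp only [layS, mem_filter, mem_univ, true_and, mem_product, mem_singleton, and_true]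
  rw [this, Finset.card_product]
  simp

lemma card_layC (κ : Bool) (i : Fin r) : (layC D κ i).card = D := by
  have : layC D κ i = {κ} ×ˢ ({i} ×ˢ (univ : Finset (Fin D))) := by
    ext ⟨a, b, d⟩
    simp only [layC, mem_filter, mem_univ, true_and, mem_product, mem_singleton, and_true]
  rw [this, Finset.card_product, Finset.card_product]
  simp

lemma card_collinear {Lay : Type*} [Fintype Lay] [DecidableEq Lay] (S : Finset (Fin m))
    (ω : Lay × Fin m → Fin Q × Fin c) (l : Lay) :
    ((S ×ˢ S).filter fun p => p.1 ≠ p.2 ∧ (ω (l, p.1)).1 = (ω (l, p.2)).1).card ≤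
      2 * ∑ x ∈ S, below S ω l x := by
  have h1 : ∀ (P : Fin m × Fin m → Prop) [DecidablePred P], ((S ×ˢ S).filter P).card =
      ∑ x ∈ S, (S.filter fun y => P (x, y)).card := by
    intro P _
    simp only [Finset.card_filter]
    rw [Finset.sum_product]
  have h2 : ((S ×ˢ S).filter fun p => p.1 ≠ p.2 ∧ (ω (l, p.1)).1 = (ω (l, p.2)).1) ⊆
      ((S ×ˢ S).filter fun p => p.2 < p.1 ∧ (ω (l, p.2)).1 = (ω (l, p.1)).1) ∪
        ((S ×ˢ S).filter fun p => p.1 < p.2 ∧ (ω (l, p.1)).1 = (ω (l, p.2)).1) := by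
    intro p
    simp only [mem_union, mem_filter]
    rintro ⟨hp, hne, h⟩
    rcases lt_or_gt_of_ne hne with hl | hl
    · exact Or.inr ⟨hp, hl, h⟩
    · exact Or.inl ⟨hp, hl, h.symm⟩
  refine (Finset.card_le_card h2).trans ((Finset.card_union_le _ _).trans ?_)
  rw [two_mul]
  refine add_le_add (le_of_eq (h1 _)) (le_of_eq ?_)
  simp only [below, Finset.card_filter]
  rw [Finset.sum_product, Finset.sum_comm]

open Classical in
/-- Near pairs are collinear in some layer, or joined by a path of two lines of different layers. -/
lemma card_near (S : Finset (Fin m)) (ω : Obj r D m Q c) (κ : Bool) (i : Fin r) :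
    ((S ×ˢ S).filter fun p => p.1 ≠ p.2 ∧ Near ω κ i p.1 p.2).card ≤
      2 * ∑ l ∈ layS r D κ, ∑ x ∈ S, below S ω l x + paths S (layC D κ i) ω := by
  have hsub : ((S ×ˢ S).filter fun p => p.1 ≠ p.2 ∧ Near ω κ i p.1 p.2) ⊆
      ((layS r D κ).biUnion fun l =>
        (S ×ˢ S).filter fun p => p.1 ≠ p.2 ∧ (ω (l, p.1)).1 = (ω (l, p.2)).1) ∪
      (univ.biUnion fun z : Fin m => (layC D κ i).biUnion fun l =>
        ((layC D κ i).erase l).biUnion fun l' =>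
          (S.filter fun x => (ω (l, x)).1 = (ω (l, z)).1) ×ˢ
            (S.filter fun y => (ω (l', y)).1 = (ω (l', z)).1)) := by
    rintro ⟨x, y⟩ h
    simp only [mem_filter, mem_product] at h
    obtain ⟨⟨hx, hy⟩, hne, hN⟩ := h
    have hcol : Col ω κ x y → (x, y) ∈ (layS r D κ).biUnion fun l =>
        (S ×ˢ S).filter fun p => p.1 ≠ p.2 ∧ (ω (l, p.1)).1 = (ω (l, p.2)).1 := by
      rintro ⟨j, s, h⟩
      refine mem_biUnion.mpr ⟨(κ, j, s), by simp [layS], ?_⟩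
      simp only [mem_filter, mem_product]
      exact ⟨⟨hx, hy⟩, hne, h⟩
    rw [mem_union]
    rcases hN with hc | ⟨z, s₁, s₂, h₁, h₂⟩
    · exact Or.inl (hcol hc)
    · by_cases hs : s₁ = s₂
      · subst hs
        exact Or.inl (hcol ⟨i, s₁, h₁.trans h₂⟩)
      · right
        refine mem_biUnion.mpr ⟨z, mem_univ _, mem_biUnion.mpr ⟨(κ, i, s₁), by simp [layC],
          mem_biUnion.mpr ⟨(κ, i, s₂), ?_, ?_⟩⟩⟩
        · simp [layC, Ne.symm hs]
        · simp only [mem_product, mem_filter]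
          exact ⟨⟨hx, h₁⟩, hy, h₂.symm⟩
  refine (Finset.card_le_card hsub).trans ((Finset.card_union_le _ _).trans (add_le_add ?_ ?_))
  · rw [Finset.mul_sum]
    exact Finset.card_biUnion_le.trans (Finset.sum_le_sum fun l _ => card_collinear S ω l)
  · unfold paths
    refine Finset.card_biUnion_le.trans (Finset.sum_le_sum fun z _ => ?_)
    refine Finset.card_biUnion_le.trans (Finset.sum_le_sum fun l _ => ?_)
    refine Finset.card_biUnion_le.trans (Finset.sum_le_sum fun l' _ => ?_)
    rw [Finset.card_product]
    rfl

/-- A point has met at most `ℓ` points in each layer. -/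
lemma card_met {ℓ : ℕ} (ω : Obj r D m Q c) (κ : Bool) (i : Fin r)
    (hline : ∀ l q, (univ.filter fun x => (ω (l, x)).1 = q).card ≤ ℓ) (s : Fin D) (x : Fin m)
    (P : Fin m → Prop) [DecidablePred P] (hP : ∀ y, P y → Met ω κ i s x y) :
    (univ.filter P).card ≤ D * ℓ := by
  classical
  have : univ.filter P ⊆ (univ : Finset (Fin D)).biUnion fun s' =>
      univ.filter fun y => (ω ((κ, i, s'), y)).1 = (ω ((κ, i, s'), x)).1 := by
    intro y hy
    obtain ⟨s', -, h⟩ := hP y (mem_filter.mp hy).2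
    refine mem_biUnion.mpr ⟨s', mem_univ _, ?_⟩
    simp only [mem_filter, mem_univ, true_and]
    exact h
  refine (Finset.card_le_card this).trans (Finset.card_biUnion_le.trans ?_)
  calc _ ≤ ∑ _s : Fin D, ℓ := Finset.sum_le_sum fun s' _ => hline _ _
    _ = _ := by simp

end near

section lumps
variable {V : Type} [Fintype V] {m : ℕ}

/-- A set all of whose fibres are small can be split evenly into transversals: order it by fibres
and label it cyclically. -/
lemma balanced (p : V → Fin m) (T : Finset V) {b : ℕ} (hb : 0 < b)
    (hfib : ∀ x, ∀ F ⊆ T, (∀ u ∈ F, p u = x) → F.card ≤ b) :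
    ∃ lab : V → ℕ, (∀ u, lab u < b) ∧
      (∀ u ∈ T, ∀ v ∈ T, lab u = lab v → p u = p v → u = v) ∧
      ∀ j, ∀ F ⊆ T, (∀ u ∈ F, lab u = j) → F.card ≤ T.card / b + 1 := by
  classical
  let e := Fintype.equivFin V
  let N := Fintype.card V
  let key : V → ℕ := fun u => (p u : ℕ) * N + e u
  have hdiv : ∀ u, key u / N = p u := by
    intro u
    have : (e u : ℕ) < N := (e u).2
    simp only [key]
    rw [mul_comm, Nat.mul_add_div (by omega), Nat.div_eq_of_lt this, add_zero]
  have hinj : ∀ u v, key u = key v → u = v := by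
    intro u v h
    have h1 : (p u : ℕ) = p v := by rw [← hdiv u, ← hdiv v, h]
    simp only [key, h1] at h
    exact e.injective (Fin.ext (by omega))
  let rk : V → ℕ := fun u => (T.filter fun v => key v < key u).card
  have hmono : ∀ u ∈ T, ∀ v, key u < key v → rk u < rk v := by
    intro u hu v h
    refine Finset.card_lt_card (Finset.ssubset_iff_subset_ne.mpr
      ⟨Finset.monotone_filter_right _ fun w _ hw => hw.trans h, ?_⟩)
    intro he
    have : u ∈ T.filter fun w => key w < key v := mem_filter.mpr ⟨hu, h⟩
    rw [← he] at this
    exact lt_irrefl _ (mem_filter.mp this).2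
  have hrinj : ∀ u ∈ T, ∀ v ∈ T, rk u = rk v → u = v := by
    intro u hu v hv h
    rcases lt_trichotomy (key u) (key v) with hl | hl | hl
    · exact absurd h (hmono u hu v hl).ne
    · exact hinj _ _ hl
    · exact absurd h (hmono v hv u hl).ne'
  have hrlt : ∀ u ∈ T, rk u < T.card := by
    intro u hu
    refine Finset.card_lt_card (Finset.ssubset_iff_subset_ne.mpr ⟨filter_subset _ _, fun he => ?_⟩)
    have : u ∈ T.filter fun v => key v < key u := by rwa [he]
    exact lt_irrefl _ (mem_filter.mp this).2
  have hsame : ∀ u ∈ T, ∀ v ∈ T, key u < key v → p u = p v → rk v < rk u + b := by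
    intro u hu v hv h hp
    have hF := hfib (p u) (T.filter fun w => key u ≤ key w ∧ key w ≤ key v) (filter_subset _ _) ?_
    · have : (T.filter fun w => key w < key v) ⊆ (T.filter fun w => key w < key u) ∪
          ((T.filter fun w => key u ≤ key w ∧ key w ≤ key v).erase v) := by
        intro w
        simp only [mem_union, mem_filter, mem_erase]
        rintro ⟨hw, h1⟩
        by_cases h2 : key w < key u
        · exact Or.inl ⟨hw, h2⟩
        · exact Or.inr ⟨fun he => by rw [he] at h1; exact lt_irrefl _ h1, hw, not_lt.mp h2, h1.le⟩
      have h3 := (Finset.card_le_card this).trans (Finset.card_union_le _ _)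
      have hvm : v ∈ T.filter fun w => key u ≤ key w ∧ key w ≤ key v :=
        mem_filter.mpr ⟨hv, h.le, le_rfl⟩
      rw [Finset.card_erase_of_mem hvm] at h3
      have : 0 < (T.filter fun w => key u ≤ key w ∧ key w ≤ key v).card :=
        Finset.card_pos.mpr ⟨v, hvm⟩
      simp only [rk]
      omega
    · intro w hw
      obtain ⟨-, h1, h2⟩ := mem_filter.mp hw
      apply Fin.ext
      have h1' := Nat.div_le_div_right (c := N) h1
      have h2' := Nat.div_le_div_right (c := N) h2
      rw [hdiv, hdiv] at h1' h2'
      rw [← hp] at h2'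
      omega
  refine ⟨fun u => rk u % b, fun u => Nat.mod_lt _ hb, ?_, ?_⟩
  · intro u hu v hv hl hp
    dsimp only at hl
    have key2 : ∀ x y : ℕ, x < y → y < x + b → x % b ≠ y % b := by
      intro x y h1 h2 h3
      have := (Nat.modEq_iff_dvd' h1.le).mp h3
      have := Nat.le_of_dvd (by omega) this
      omega
    rcases lt_trichotomy (key u) (key v) with h | h | h
    · exact absurd hl (key2 _ _ (hmono u hu v h) (hsame u hu v hv h hp))
    · exact hinj _ _ h
    · exact absurd hl.symm (key2 _ _ (hmono v hv u h) (hsame v hv u hu h hp.symm))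
  · intro j F hF hj
    have := Finset.card_le_card_of_injOn (s := F) (t := range (T.card / b + 1))
      (fun u => rk u / b) ?_ ?_
    · simpa using this
    · intro u hu
      have := Nat.div_le_div_right (c := b) (hrlt u (hF hu)).le
      simp only [coe_range, Set.mem_Iio]
      omega
    · intro u hu v hv h
      dsimp only at h
      refine hrinj u (hF hu) v (hF hv) ?_
      have h1 : rk u % b = rk v % b := (hj u hu).trans (hj v hv).symm
      rw [← Nat.div_add_mod (rk u) b, ← Nat.div_add_mod (rk v) b, h, h1]

open Classical in
/-- Pairs related through their images, for a set with small fibres. -/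
lemma lump (p : V → Fin m) (T : Finset V) {b : ℕ} (hb : 0 < b)
    (hfib : ∀ x, ∀ F ⊆ T, (∀ u ∈ F, p u = x) → F.card ≤ b) (R : Fin m → Fin m → Prop) {q : ℕ}
    (hq : T.card / b + 1 ≤ q) {A : ℝ}
    (hA : ∀ S : Finset (Fin m), S.card ≤ 2 * q →
      (((S ×ˢ S).filter fun x => x.1 ≠ x.2 ∧ R x.1 x.2).card : ℝ) ≤ A) :
    (((T ×ˢ T).filter fun x => R (p x.1) (p x.2)).card : ℝ) ≤ (b : ℝ) ^ 2 * A + T.card * b := by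
  obtain ⟨lab, hlt, hli, hls⟩ := balanced p T hb hfib
  have hsub : ((T ×ˢ T).filter fun x => R (p x.1) (p x.2)) ⊆
      ((range b ×ˢ range b).biUnion fun j => (T ×ˢ T).filter fun x =>
        (lab x.1 = j.1 ∧ lab x.2 = j.2) ∧ p x.1 ≠ p x.2 ∧ R (p x.1) (p x.2)) ∪
      T.biUnion fun u => {u} ×ˢ (T.filter fun w => p w = p u) := by
    rintro ⟨u, w⟩ h
    simp only [mem_filter, mem_product] at h
    obtain ⟨⟨hu, hw⟩, hR⟩ := h
    rw [mem_union]
    by_cases hp : p u = p w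
    · right
      refine mem_biUnion.mpr ⟨u, hu, ?_⟩
      simp [hw, hp]
    · left
      refine mem_biUnion.mpr ⟨(lab u, lab w), by simp [hlt], ?_⟩
      simp [hu, hw, hp, hR]
  have h1 : ∀ j ∈ range b ×ˢ range b, (((T ×ˢ T).filter fun x =>
        (lab x.1 = j.1 ∧ lab x.2 = j.2) ∧ p x.1 ≠ p x.2 ∧ R (p x.1) (p x.2)).card : ℝ) ≤ A := by
    intro j _
    let S : Finset (Fin m) := (T.filter fun u => lab u = j.1).image p ∪
      (T.filter fun u => lab u = j.2).image p
    have hS : S.card ≤ 2 * q := by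
      have h1 := hls j.1 _ (filter_subset _ _) fun u hu => (mem_filter.mp hu).2
      have h2 := hls j.2 _ (filter_subset _ _) fun u hu => (mem_filter.mp hu).2
      have h3 := Finset.card_union_le ((T.filter fun u => lab u = j.1).image p)
        ((T.filter fun u => lab u = j.2).image p)
      have h4 := Finset.card_image_le (s := T.filter fun u => lab u = j.1) (f := p)
      have h5 := Finset.card_image_le (s := T.filter fun u => lab u = j.2) (f := p)
      simp only [S]
      omega
    refine le_trans ?_ (hA S hS)
    rw [Nat.cast_le]
    refine Finset.card_le_card_of_injOn (fun x => (p x.1, p x.2)) ?_ ?_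
    · rintro ⟨u, w⟩ h
      simp only [coe_filter, mem_product, Set.mem_ofPred_eq] at h
      obtain ⟨⟨hu, hw⟩, ⟨hl1, hl2⟩, hne, hR⟩ := h
      simp only [coe_filter, mem_product, Set.mem_ofPred_eq]
      refine ⟨⟨mem_union_left _ (mem_image.mpr ⟨u, mem_filter.mpr ⟨hu, hl1⟩, rfl⟩),
        mem_union_right _ (mem_image.mpr ⟨w, mem_filter.mpr ⟨hw, hl2⟩, rfl⟩)⟩, hne, hR⟩
    · rintro ⟨u, w⟩ h ⟨u', w'⟩ h' he
      simp only [coe_filter, mem_product, Set.mem_ofPred_eq] at h h'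
      have he1 := (Prod.ext_iff.mp he).1
      have he2 := (Prod.ext_iff.mp he).2
      dsimp only at he1 he2
      rw [hli u h.1.1 u' h'.1.1 (h.2.1.1.trans h'.2.1.1.symm) he1,
        hli w h.1.2 w' h'.1.2 (h.2.1.2.trans h'.2.1.2.symm) he2]
  have h2 : ((T.biUnion fun u => {u} ×ˢ (T.filter fun w => p w = p u)).card : ℝ) ≤
      T.card * b := by
    rw [← Nat.cast_mul, Nat.cast_le]
    refine Finset.card_biUnion_le.trans ?_
    rw [← smul_eq_mul, ← Finset.sum_const]
    refine Finset.sum_le_sum fun u _ => ?_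
    rw [Finset.card_product, Finset.card_singleton, one_mul]
    exact hfib (p u) _ (filter_subset _ _) fun w hw => (mem_filter.mp hw).2
  calc (((T ×ˢ T).filter fun x => R (p x.1) (p x.2)).card : ℝ) ≤
        ((((range b ×ˢ range b).biUnion fun j => (T ×ˢ T).filter fun x =>
        (lab x.1 = j.1 ∧ lab x.2 = j.2) ∧ p x.1 ≠ p x.2 ∧ R (p x.1) (p x.2)).card +
      (T.biUnion fun u => {u} ×ˢ (T.filter fun w => p w = p u)).card : ℕ) : ℝ) := by
        rw [Nat.cast_le]
        exact (Finset.card_le_card hsub).trans (Finset.card_union_le _ _)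
    _ ≤ (b : ℝ) ^ 2 * A + T.card * b := by
        rw [Nat.cast_add]
        refine add_le_add ?_ h2
        have h3 : ((((range b ×ˢ range b).biUnion fun j => (T ×ˢ T).filter fun x =>
          (lab x.1 = j.1 ∧ lab x.2 = j.2) ∧ p x.1 ≠ p x.2 ∧ R (p x.1) (p x.2)).card : ℕ) : ℝ) ≤
            ∑ j ∈ range b ×ˢ range b, (((T ×ˢ T).filter fun x =>
          (lab x.1 = j.1 ∧ lab x.2 = j.2) ∧ p x.1 ≠ p x.2 ∧ R (p x.1) (p x.2)).card : ℝ) := by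
          exact_mod_cast Finset.card_biUnion_le
        refine h3.trans ((Finset.sum_le_sum h1).trans ?_)
        rw [Finset.sum_const, Finset.card_product, nsmul_eq_mul]
        simp [sq]

end lumps

/-! ### Tame objects -/

section good
variable {r D m Q c : ℕ}

/-- The properties of the random lines used below: no line has more than `ℓ` points, small point
sets have few collinear pairs, within one system and within one colour, and small families of lines
have small excess. -/
structure Tame (ω : Obj r D m Q c) (t ℓ : ℕ) (T₂ B₂ T₃ Θ K₃ a : ℝ) : Prop where
  line : ∀ l q, (univ.filter fun x => (ω (l, x)).1 = q).card ≤ ℓ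
  sys : ∀ κ, ∀ S : Finset (Fin m), S.card ≤ t →
    ((∑ l ∈ layS r D κ, ∑ x ∈ S, below S ω l x : ℕ) : ℝ) ≤ T₂ * S.card + B₂ * (S.card : ℝ) ^ 2
  col : ∀ κ i, ∀ S : Finset (Fin m), S.card ≤ t →
    ((∑ l ∈ layC D κ i, ∑ x ∈ S, below S ω l x : ℕ) : ℝ) ≤ T₃ * S.card
  exc : ∀ J J' : Finset ((Bool × Fin r × Fin D) × Fin Q), J ⊆ J' → Θ * J'.card ≤ Q →
    (excess J J' ω : ℝ) ≤ K₃ * J'.card + a * J.card * J'.card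

variable {ω : Obj r D m Q c} {t ℓ : ℕ} {T₂ B₂ T₃ Θ K₃ a : ℝ}

open Classical in
/-- A small set of points of a tame object has few near pairs. -/
lemma Tame.near (h : Tame ω t ℓ T₂ B₂ T₃ Θ K₃ a) (hQ : 0 < Q) (hΘ : 0 < Θ) (hK : 0 ≤ K₃)
    (ha : 0 ≤ a) (κ : Bool) (i : Fin r) (S : Finset (Fin m)) (hS : S.card ≤ t) :
    (((S ×ˢ S).filter fun p => p.1 ≠ p.2 ∧ Near ω κ i p.1 p.2).card : ℝ) ≤
      (2 * B₂ + 2 * (1 + D) * a * D ^ 2 + 2 * D ^ 3 * ℓ * Θ / Q) * (S.card : ℝ) ^ 2 +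
        (2 * T₂ + 2 * ℓ * K₃ * D + 2 * D * K₃ * (D + 2 * T₃)) * S.card := by
  have h1 : (((S ×ˢ S).filter fun p => p.1 ≠ p.2 ∧ Near ω κ i p.1 p.2).card : ℝ) ≤
      2 * ((∑ l ∈ layS r D κ, ∑ x ∈ S, below S ω l x : ℕ) : ℝ) + paths S (layC D κ i) ω := by
    exact_mod_cast card_near S ω κ i
  have h2 := h.sys κ S hS
  have h3 := paths_bound hQ hΘ hK ha h.line (h.col κ i S hS) h.exc
  rw [card_layC] at h3
  refine h1.trans ((add_le_add (mul_le_mul_of_nonneg_left h2 (by norm_num)) h3).trans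
    (le_of_eq ?_))
  ring

/-- Few pairs of lifts of the points of `X` are bad. -/
lemma Tame.bad {V : Type} [Fintype V] (h : Tame ω t ℓ T₂ B₂ T₃ Θ K₃ a) (hQ : 0 < Q) (hΘ : 0 < Θ)
    (hK : 0 ≤ K₃) (ha : 0 ≤ a) (hT₂ : 0 ≤ T₂) (hB₂ : 0 ≤ B₂) (hT₃ : 0 ≤ T₃)
    (pr : Bool → V → Fin m) {b q : ℕ} (hb : 0 < b)
    (hfib : ∀ κ x, ∀ F : Finset V, (∀ u ∈ F, pr κ u = x) → F.card ≤ b)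
    (hq : t / b + 1 ≤ q) (hqt : 2 * q ≤ t)
    (hnum : (b : ℝ) ^ 2 * ((2 * B₂ + 2 * (1 + D) * a * D ^ 2 + 2 * D ^ 3 * ℓ * Θ / Q) * (2 * q) ^ 2 +
        (2 * T₂ + 2 * ℓ * K₃ * D + 2 * D * K₃ * (D + 2 * T₃)) * (2 * q)) + t * b ≤ t * Q / 16)
    (κ : Bool) (i : Fin r) (X : Finset (Fin m)) (σ : Fin m → V) (hσ : ∀ x ∈ X, pr κ (σ x) = x)
    (hX : X.card = t) (s : Fin D) (P : Fin m → Fin m → Prop) [∀ x, DecidablePred (P x)]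
    (hP : ∀ x y, P x y → Bad ω pr κ i s (σ y) (σ x)) :
    8 * ∑ x ∈ X, (X.filter fun y => P x y).card ≤ X.card * Q := by
  classical
  let T := X.image σ
  have hT : T.card = t := by
    rw [Finset.card_image_of_injOn, hX]
    intro x hx y hy he
    rw [← hσ x hx, ← hσ y hy, he]
  have hl : ∀ κ', (((T ×ˢ T).filter fun x => Near ω κ' i (pr κ' x.1) (pr κ' x.2)).card : ℝ) ≤
      t * Q / 16 := by
    intro κ'
    have := lump (pr κ') T hb (fun x F _ hF => hfib κ' x F hF) (Near ω κ' i) (q := q)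
      (by rw [hT]; exact hq)
      (A := (2 * B₂ + 2 * (1 + D) * a * D ^ 2 + 2 * D ^ 3 * ℓ * Θ / Q) * (2 * q) ^ 2 +
        (2 * T₂ + 2 * ℓ * K₃ * D + 2 * D * K₃ * (D + 2 * T₃)) * (2 * q)) ?_
    · rw [hT] at this
      exact this.trans hnum
    · intro S hS
      have hS' : (S.card : ℝ) ≤ 2 * q := by exact_mod_cast hS
      refine (h.near hQ hΘ hK ha κ' i S (hS.trans hqt)).trans ?_
      gcongr
  have hsum : ∑ x ∈ X, (X.filter fun y => P x y).card ≤
      ((T ×ˢ T).filter fun x => Near ω κ i (pr κ x.1) (pr κ x.2)).card +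
      ((T ×ˢ T).filter fun x => Near ω (!κ) i (pr (!κ) x.1) (pr (!κ) x.2)).card := by
    have h1 : ∑ x ∈ X, (X.filter fun y => P x y).card =
        ((X ×ˢ X).filter fun p => P p.1 p.2).card := by
      simp only [Finset.card_filter]
      rw [Finset.sum_product]
    rw [h1]
    refine le_trans ?_ (Finset.card_union_le _ _)
    refine Finset.card_le_card_of_injOn (fun p => (σ p.2, σ p.1)) ?_ ?_
    · rintro ⟨x, y⟩ hp
      simp only [coe_filter, mem_product, Set.mem_ofPred_eq] at hp
      obtain ⟨⟨hx, hy⟩, hp⟩ := hp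
      rw [mem_coe, mem_union, mem_filter, mem_filter]
      have hm : (σ y, σ x) ∈ T ×ˢ T :=
        mem_product.mpr ⟨mem_image_of_mem σ hy, mem_image_of_mem σ hx⟩
      rcases hP x y hp with hb | hb
      · exact Or.inl ⟨hm, hb.near⟩
      · exact Or.inr ⟨hm, hb⟩
    · rintro ⟨x, y⟩ hp ⟨x', y'⟩ hp' he
      simp only [coe_filter, mem_product, Set.mem_ofPred_eq] at hp hp'
      have he1 := (Prod.ext_iff.mp he).1
      have he2 := (Prod.ext_iff.mp he).2
      dsimp only at he1 he2
      rw [← hσ x hp.1.1, ← hσ x' hp'.1.1, ← hσ y hp.1.2, ← hσ y' hp'.1.2, he1, he2]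
  have hR : ((∑ x ∈ X, (X.filter fun y => P x y).card : ℕ) : ℝ) ≤ t * Q / 16 + t * Q / 16 := by
    refine le_trans ?_ (add_le_add (hl κ) (hl !κ))
    exact_mod_cast hsum
  rw [hX]
  have : ((8 * ∑ x ∈ X, (X.filter fun y => P x y).card : ℕ) : ℝ) ≤ ((t * Q : ℕ) : ℝ) := by
    rw [Nat.cast_mul, Nat.cast_mul]
    push_cast at hR ⊢
    linarith
  exact_mod_cast this

/-- A set of vertices that does not fail contains the desired clique. -/
lemma Tame.clique {V : Type} [Fintype V] [DecidableEq V] (h : Tame ω t ℓ T₂ B₂ T₃ Θ K₃ a)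
    (hQ : 0 < Q) (hΘ : 0 < Θ)
    (hK : 0 ≤ K₃) (ha : 0 ≤ a) (hT₂ : 0 ≤ T₂) (hB₂ : 0 ≤ B₂) (hT₃ : 0 ≤ T₃)
    (pr : Bool → V → Fin m) {b q : ℕ} (hb : 0 < b)
    (hfib : ∀ κ x, ∀ F : Finset V, (∀ u ∈ F, pr κ u = x) → F.card ≤ b)
    (hq : t / b + 1 ≤ q) (hqt : 2 * q ≤ t)
    (hnum : (b : ℝ) ^ 2 * ((2 * B₂ + 2 * (1 + D) * a * D ^ 2 + 2 * D ^ 3 * ℓ * Θ / Q) * (2 * q) ^ 2 +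
        (2 * T₂ + 2 * ℓ * K₃ * D + 2 * D * K₃ * (D + 2 * T₃)) * (2 * q)) + t * b ≤ t * Q / 16)
    (hmet : 4 * (D * ℓ) ≤ Q)
    (κ : Bool) (i : Fin r) (X : Finset (Fin m)) (σ : Fin m → V) (hσ : ∀ x ∈ X, pr κ (σ x) = x)
    (hX : X.card = t) (hf : ¬ Fails ω pr κ i X σ) :
    ∃ S ⊆ X.image σ, S.card = c ∧ ∀ u ∈ S, ∀ w ∈ S, u ≠ w → (gr ω pr i).Adj u w := by
  classical
  by_contra hc
  refine hf ⟨fun s x => ?_, fun s => ?_, ?_⟩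
  · refine le_trans (Nat.mul_le_mul_left 4 ?_) hmet
    exact card_met ω κ i h.line s x _ fun y hy => hy.2
  · exact h.bad hQ hΘ hK ha hT₂ hB₂ hT₃ pr hb hfib hq hqt hnum κ i X σ hσ hX s _ fun x y hy => hy.2
  · convert hc

end good

/-! ### Union bounds -/

lemma exp_le_two {x : ℝ} (hx : 0 ≤ x) : Real.exp x ≤ 2 ^ (2 * x) := by
  rw [Real.rpow_def_of_pos (by norm_num), Real.exp_le_exp]
  have := Real.log_two_gt_d9
  nlinarith

/-- Union bound over the nonempty subsets of a set, with weights exponential in the size. -/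
lemma union_sets {Ω α : Type*} [Fintype Ω] [DecidableEq α] (s : Finset α) (p : Finset α → Ω → Prop)
    {y : ℝ} (hy : 0 ≤ y) (h : ∀ S ⊆ s, S.Nonempty → Pr (p S) ≤ y ^ S.card)
    (hys : y * s.card ≤ 1) :
    Pr (fun ω => ∃ S ∈ s.powerset.erase ∅, p S ω) ≤ 2 * (y * s.card) := by
  classical
  refine (Pr_exists _ p (fun S => y ^ S.card) ?_).trans ?_
  · intro S hS
    rw [mem_erase, mem_powerset] at hS
    exact h S hS.2 (Finset.nonempty_iff_ne_empty.mpr hS.1)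
  · have h1 : ∑ S ∈ s.powerset, y ^ S.card = (y + 1) ^ s.card := by
      rw [← Finset.sum_pow_mul_eq_add_pow]
      simp
    have h2 : ∑ S ∈ s.powerset.erase ∅, y ^ S.card + 1 = (y + 1) ^ s.card := by
      rw [← h1, ← Finset.sum_erase_add _ _ (Finset.empty_mem_powerset s)]
      simp
    have h3 : (y + 1) ^ s.card ≤ Real.exp (y * s.card) := by
      rw [mul_comm, Real.exp_nat_mul]
      exact pow_le_pow_left₀ (by positivity) (Real.add_one_le_exp y) _
    have h0 : 0 ≤ y * s.card := by positivity
    have h4 := Real.abs_exp_sub_one_le (x := y * s.card) (by rwa [abs_of_nonneg h0])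
    rw [abs_of_nonneg h0] at h4
    have := (abs_le.mp h4).2
    linarith

section events
variable {r D m Q c : ℕ}

/-- Some line is long with small probability. -/
lemma pr_line (hQ : 0 < Q) (ℓ : ℕ) :
    Pr (fun ω : Obj r D m Q c => ∃ p ∈ (univ : Finset ((Bool × Fin r × Fin D) × Fin Q)),
      ℓ < (univ.filter fun x => (ω (p.1, x)).1 = p.2).card) ≤
      (2 * (r * D) * Q : ℕ) * (Real.exp (m / Q) / 2 ^ ℓ) := by
  have h := fun p : (Bool × Fin r × Fin D) × Fin Q => tail_line (m := m) (c := c) hQ p.1 p.2 ℓ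
  refine (Pr_exists_const _ _ (Real.exp (m / Q) / 2 ^ ℓ) fun p _ => h p).trans ?_
  rw [Finset.card_univ]
  simp

/-- The event that all lines are short. -/
def Short (ω : Obj r D m Q c) (ℓ : ℕ) : Prop :=
  ∀ l q, (univ.filter fun x => (ω (l, x)).1 = q).card ≤ ℓ

/-- With small probability, lines are short but some set has too many collinear pairs in the layers
of a system. -/
lemma pr_sys (hQ : 0 < Q) {ℓ : ℕ} (hℓ : 0 < ℓ) (lam : ℕ) (hy : (m : ℝ) ≤ 2 ^ (2 * lam)) :
    Pr (fun ω : Obj r D m Q c => ∃ κ ∈ (univ : Finset Bool),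
      ∃ S ∈ (univ : Finset (Fin m)).powerset.erase ∅, Short ω ℓ ∧
        2 * ℓ * lam * S.card + 4 * (r * D) / Q * (S.card : ℝ) ^ 2 <
          ((∑ l ∈ layS r D κ, ∑ x ∈ S, below S ω l x : ℕ) : ℝ)) ≤ 4 * (m / 2 ^ (2 * lam)) := by
  have hQ' : (0 : ℝ) < Q := by exact_mod_cast hQ
  have hℓ' : (0 : ℝ) < ℓ := by exact_mod_cast hℓ
  have h2 : (0 : ℝ) < 2 ^ (2 * lam) := by positivity
  refine (Pr_exists_const _ _ (2 * (1 / 2 ^ (2 * lam) * (univ : Finset (Fin m)).card))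
    fun κ _ => ?_).trans ?_
  · refine union_sets (Ω := Obj r D m Q c) univ _ (by positivity) ?_ ?_
    · intro S _ _
      have h := tail_pairs (m := m) (c := c) hQ (layS r D κ) S hℓ (one_le_two)
        (2 * lam * S.card + 4 * (r * D) * (S.card : ℝ) ^ 2 / (Q * ℓ))
      refine le_trans (Pr_mono ?_) (h.trans ?_)
      · rintro ω ⟨h1, h2⟩
        refine ⟨h1, lt_of_le_of_lt (le_of_eq ?_) h2⟩
        field_simp
      · rw [card_layS, div_le_iff₀ (by positivity)]
        refine (exp_le_two (by positivity)).trans ?_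
        rw [Real.rpow_add (by norm_num), ← mul_assoc]
        have e1 : (2 : ℝ) ^ (2 * lam * S.card : ℝ) = (2 ^ (2 * lam)) ^ S.card := by
          rw [← pow_mul, ← Real.rpow_natCast]
          push_cast
          rfl
        rw [e1, div_pow, one_pow, one_div, inv_mul_cancel₀ (by positivity), one_mul]
        apply le_of_eq
        congr 1
        push_cast
        ring
    · rw [Finset.card_univ, Fintype.card_fin, one_div, inv_mul_le_one₀ h2]
      exact hy
  · simp
    apply le_of_eq
    ring

/-- With small probability, lines are short but some set of at most `t` points has too many collinear
pairs in the layers of one colour. -/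
lemma pr_col (hQ : 0 < Q) {ℓ : ℕ} (hℓ : 0 < ℓ) (t h Kc ν : ℕ) {μ : ℝ}
    (hμ : 2 * (D * t * 2 ^ h / (Q * ℓ)) ≤ μ) (hν : μ + ν ≤ h * Kc) (hy : (m : ℝ) ≤ 2 ^ ν) :
    Pr (fun ω : Obj r D m Q c => ∃ a ∈ (univ : Finset (Bool × Fin r)),
      ∃ S ∈ (univ : Finset (Fin m)).powerset.erase ∅, Short ω ℓ ∧ S.card ≤ t ∧
        Kc * ℓ * S.card <
          ((∑ l ∈ layC D a.1 a.2, ∑ x ∈ S, below S ω l x : ℕ) : ℝ)) ≤ 4 * r * (m / 2 ^ ν) := by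
  have hQ' : (0 : ℝ) < Q := by exact_mod_cast hQ
  have hℓ' : (0 : ℝ) < ℓ := by exact_mod_cast hℓ
  have h2 : (0 : ℝ) < 2 ^ ν := by positivity
  refine (Pr_exists_const _ _ (2 * (1 / 2 ^ ν * (univ : Finset (Fin m)).card))
    fun a _ => ?_).trans ?_
  · refine union_sets (Ω := Obj r D m Q c) univ _ (by positivity) ?_ ?_
    · intro S _ _
      by_cases hSt : S.card ≤ t
      swap
      · refine le_trans (le_of_eq ?_) (by positivity : (0 : ℝ) ≤ (1 / 2 ^ ν) ^ S.card)
        simp [Pr, hSt]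
      have hh := tail_pairs (m := m) (c := c) hQ (layC D a.1 a.2) S hℓ (Θ := 2 ^ h)
        (one_le_pow₀ one_le_two) (Kc * S.card)
      refine le_trans (Pr_mono ?_) (hh.trans ?_)
      · rintro ω ⟨h1, -, h2⟩
        refine ⟨h1, lt_of_le_of_lt (le_of_eq ?_) h2⟩
        ring
      · rw [card_layC, div_le_iff₀ (by positivity)]
        refine (exp_le_two (by positivity)).trans ?_
        have e1 : ((1 / 2 ^ ν) ^ S.card : ℝ) = 2 ^ (-(ν : ℝ) * S.card) := by
          rw [Real.rpow_mul (by norm_num), Real.rpow_neg (by norm_num), Real.rpow_natCast,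
            Real.rpow_natCast, one_div]
        rw [e1, ← Real.rpow_natCast 2 h, ← Real.rpow_mul (by norm_num),
          ← Real.rpow_add (by norm_num), Real.rpow_natCast]
        refine Real.rpow_le_rpow_of_exponent_le one_le_two ?_
        have hS' : (S.card : ℝ) ≤ t := by exact_mod_cast hSt
        calc 2 * (D * (S.card : ℝ) ^ 2 * 2 ^ h / (Q * ℓ)) =
              2 * (D * S.card * 2 ^ h / (Q * ℓ)) * S.card := by ring
          _ ≤ 2 * (D * t * 2 ^ h / (Q * ℓ)) * S.card := by gcongr
          _ ≤ (h * Kc - ν) * S.card := by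
              refine mul_le_mul_of_nonneg_right ?_ (by positivity)
              linarith
          _ = _ := by ring
    · rw [Finset.card_univ, Fintype.card_fin, one_div, inv_mul_le_one₀ h2]
      exact hy
  · simp
    apply le_of_eq
    ring

/-- With small probability, some small families of lines have large excess. -/
lemma pr_exc (hQ : 0 < Q) (h K₃ ν : ℕ) {a : ℝ} (ha : 6 * m * 2 ^ h / (Q : ℝ) ^ 2 ≤ h * a)
    (hν : 1 + ν ≤ h * K₃) (hy : ((2 * (r * D) * Q : ℕ) : ℝ) ≤ 2 ^ ν) :
    Pr (fun ω : Obj r D m Q c =>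
      ∃ J' ∈ (univ : Finset ((Bool × Fin r × Fin D) × Fin Q)).powerset.erase ∅,
      ∃ J ∈ J'.powerset, (2 : ℝ) ^ h * J'.card ≤ Q ∧
        (K₃ : ℝ) * J'.card + a * J.card * J'.card < (excess J J' ω : ℝ)) ≤
      2 * ((2 * (r * D) * Q : ℕ) / 2 ^ ν) := by
  have hQ' : (0 : ℝ) < Q := by exact_mod_cast hQ
  have h2 : (0 : ℝ) < 2 ^ ν := by positivity
  have hcard : (univ : Finset ((Bool × Fin r × Fin D) × Fin Q)).card = 2 * (r * D) * Q := by
    rw [Finset.card_univ]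
    simp
  refine (union_sets (Ω := Obj r D m Q c) univ _ (y := 1 / 2 ^ ν) (by positivity) ?_ ?_).trans ?_
  · intro J' _ _
    by_cases hJ : (2 : ℝ) ^ h * J'.card ≤ Q
    swap
    · refine le_trans (le_of_eq ?_) (by positivity : (0 : ℝ) ≤ (1 / 2 ^ ν) ^ J'.card)
      simp [Pr, hJ]
    refine (Pr_exists_const (Ω := Obj r D m Q c) _ _ ((1 / 2 ^ (1 + ν)) ^ J'.card)
      fun J _ => ?_).trans ?_
    · have hh := tail_excess (c := c) (m := m) hQ J J' (Θ := 2 ^ h) (one_le_pow₀ one_le_two) hJ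
        (K₃ * J'.card + a * J.card * J'.card)
      refine le_trans (Pr_mono fun ω hω => hω.2) (hh.trans ?_)
      rw [div_le_iff₀ (by positivity)]
      refine (exp_le_two (by positivity)).trans ?_
      have e1 : ((1 / 2 ^ (1 + ν)) ^ J'.card : ℝ) = 2 ^ (-((1 + ν : ℕ) : ℝ) * J'.card) := by
        rw [Real.rpow_mul (by norm_num), Real.rpow_neg (by norm_num), Real.rpow_natCast,
          Real.rpow_natCast, one_div]
      rw [e1, ← Real.rpow_natCast 2 h, ← Real.rpow_mul (by norm_num),
        ← Real.rpow_add (by norm_num), Real.rpow_natCast]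
      refine Real.rpow_le_rpow_of_exponent_le one_le_two ?_
      have hν' : ((1 + ν : ℕ) : ℝ) ≤ h * K₃ := by exact_mod_cast hν
      have k1 := mul_le_mul_of_nonneg_right hν' (Nat.cast_nonneg' J'.card : (0 : ℝ) ≤ J'.card)
      have k2 := mul_le_mul_of_nonneg_right ha
        (by positivity : (0 : ℝ) ≤ (J.card : ℝ) * J'.card)
      calc 2 * (3 * m * 2 ^ h * J.card * J'.card / (Q : ℝ) ^ 2) =
            6 * m * 2 ^ h / (Q : ℝ) ^ 2 * (J.card * J'.card) := by ring
        _ ≤ h * a * (J.card * J'.card) := k2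
        _ ≤ _ := by linarith
    · rw [Finset.card_powerset, Nat.cast_pow, ← mul_pow]
      apply le_of_eq
      congr 1
      rw [pow_add]
      push_cast
      field_simp
  · rw [hcard, one_div, inv_mul_le_one₀ h2]
    exact hy
  · rw [hcard]
    apply le_of_eq
    ring

open Classical in
/-- Union bound over all transversal sets of `t` vertices. -/
lemma pr_fails {V : Type} [Fintype V] [Nonempty V] (hc : 1 ≤ c) (hQ : 0 < Q)
    (pr : Bool → V → Fin m) (t ν : ℕ) (hn : (Fintype.card V : ℝ) ≤ 2 ^ ν) (ℓ : ℕ) (hℓ : 2 * ℓ ≤ t)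
    (hnum : (2 : ℝ) ^ (Q * (c + 1)) ≤ (1 / (1 - 1 / (4 * (c : ℝ)))) ^ ℓ) :
    Pr (fun ω : Obj r D m Q c => ∃ a ∈ (univ : Finset (Bool × Fin r)),
      ∃ T ∈ (univ.powersetCard t).filter fun T : Finset V => Set.InjOn (pr a.1) T,
        Fails ω pr a.1 a.2 (T.image (pr a.1)) (Function.invFunOn (pr a.1) T)) ≤
      2 * r * (2 ^ (ν * t) / 2 ^ (D * Q)) := by
  refine (Pr_exists_const _ _ (2 ^ (ν * t) / 2 ^ (D * Q)) fun a _ => ?_).trans ?_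
  · refine (Pr_exists_const _ _ ((1 / 2) ^ (D * Q)) fun T hT => ?_).trans ?_
    · rw [mem_filter, mem_powersetCard] at hT
      refine Pr_fails hc hQ pr a.1 a.2 _ _ ?_ ℓ ?_ hnum
      · intro x hx
        obtain ⟨u, hu, rfl⟩ := mem_image.mp hx
        exact Function.invFunOn_eq (s := (T : Set V)) ⟨u, hu, rfl⟩
      · rw [Finset.card_image_of_injOn hT.2, hT.1.2]
        exact hℓ
    · rw [one_div, inv_pow, ← div_eq_mul_inv]
      refine div_le_div_of_nonneg_right ?_ (by positivity)
      have h1 : (((univ : Finset V).powersetCard t).filter fun T : Finset V =>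
          Set.InjOn (pr a.1) T).card ≤ (Fintype.card V) ^ t := by
        refine (Finset.card_filter_le _ _).trans ?_
        rw [Finset.card_powersetCard, Finset.card_univ]
        exact Nat.choose_le_pow _ _
      calc _ ≤ ((Fintype.card V ^ t : ℕ) : ℝ) := by exact_mod_cast h1
        _ ≤ _ := by
          rw [Nat.cast_pow, pow_mul]
          exact pow_le_pow_left₀ (by positivity) hn _
  · rw [Finset.card_univ]
    simp

end events

/-! ### Existence of the family of graphs -/

section combine
variable {r D m Q c : ℕ}

/-- Existence of a tame object none of whose transversal sets fails. -/
lemma exists_tame {V : Type} [Fintype V] [DecidableEq V] [Nonempty V] (hc : 1 ≤ c) (hQ : 0 < Q)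
    (pr : Bool → V → Fin m) {ℓ lam t h Kc K₃ ν η : ℕ} {μ a : ℝ} (hℓ : 0 < ℓ)
    (hm : (m : ℝ) ≤ 2 ^ (2 * lam)) (hm' : (m : ℝ) ≤ 2 ^ ν)
    (hμ : 2 * (D * t * 2 ^ h / (Q * ℓ)) ≤ μ) (hν : μ + ν ≤ h * Kc)
    (ha : 6 * m * 2 ^ h / (Q : ℝ) ^ 2 ≤ h * a) (hν' : 1 + ν ≤ h * K₃)
    (hL : ((2 * (r * D) * Q : ℕ) : ℝ) ≤ 2 ^ ν)
    (hn : (Fintype.card V : ℝ) ≤ 2 ^ η) (ℓ' : ℕ) (hℓ' : 2 * ℓ' ≤ t)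
    (hnum : (2 : ℝ) ^ (Q * (c + 1)) ≤ (1 / (1 - 1 / (4 * (c : ℝ)))) ^ ℓ')
    (hsum : (2 * (r * D) * Q : ℕ) * (Real.exp (m / Q) / 2 ^ ℓ) + (4 * (m / 2 ^ (2 * lam)) +
      (4 * r * (m / 2 ^ ν) + (2 * ((2 * (r * D) * Q : ℕ) / 2 ^ ν) +
        2 * r * (2 ^ (η * t) / 2 ^ (D * Q))))) < (1 : ℝ)) :
    ∃ ω : Obj r D m Q c, Tame ω t ℓ (2 * ℓ * lam) (4 * (r * D) / Q) (Kc * ℓ) (2 ^ h) K₃ a ∧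
      ∀ κ i, ∀ T : Finset V, T.card = t → Set.InjOn (pr κ) T →
        ¬ Fails ω pr κ i (T.image (pr κ)) (Function.invFunOn (pr κ) T) := by
  classical
  have hne : Nonempty (Obj r D m Q c) := ⟨fun _ => (⟨0, hQ⟩, ⟨0, hc⟩)⟩
  have p1 := pr_line (r := r) (D := D) (m := m) (c := c) hQ ℓ
  have p2 := pr_sys (r := r) (D := D) (m := m) (c := c) hQ hℓ lam hm
  have p3 := pr_col (r := r) (D := D) (m := m) (c := c) hQ hℓ t h Kc ν hμ hν hm'
  have p4 := pr_exc (r := r) (D := D) (m := m) (c := c) hQ h K₃ ν ha hν' hL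
  have p5 := pr_fails (r := r) (D := D) (m := m) (c := c) hc hQ pr t η hn ℓ' hℓ' hnum
  obtain ⟨ω, hω⟩ := Pr_lt_one (lt_of_le_of_lt ((Pr_or _ _).trans (add_le_add p1 ((Pr_or _ _).trans
    (add_le_add p2 ((Pr_or _ _).trans (add_le_add p3 ((Pr_or _ _).trans (add_le_add p4 p5))))))))
    hsum)
  simp only [not_or] at hω
  obtain ⟨h1, h2, h3, h4, h5⟩ := hω
  have hshort : Short ω ℓ := by
    intro l q
    by_contra hlt
    exact h1 ⟨(l, q), mem_univ _, not_le.mp hlt⟩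
  refine ⟨ω, ⟨hshort, ?_, ?_, ?_⟩, ?_⟩
  · intro κ S _
    by_cases hS : S = ∅
    · simp [hS]
    by_contra hlt
    exact h2 ⟨κ, mem_univ _, S, mem_erase.mpr ⟨hS, by simp⟩, hshort, not_le.mp hlt⟩
  · intro κ i S hSt
    by_cases hS : S = ∅
    · simp [hS]
    by_contra hlt
    exact h3 ⟨(κ, i), mem_univ _, S, mem_erase.mpr ⟨hS, by simp⟩, hshort, hSt, not_le.mp hlt⟩
  · intro J J' hJ hle
    by_cases hS : J' = ∅
    · subst hS
      simp [excess, dg]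
    by_contra hlt
    exact h4 ⟨J', mem_erase.mpr ⟨hS, by simp⟩, J, mem_powerset.mpr hJ, hle, not_le.mp hlt⟩
  · intro κ i T hT hinj hF
    exact h5 ⟨(κ, i), mem_univ _, T, mem_filter.mpr ⟨mem_powersetCard.mpr ⟨subset_univ _, hT⟩,
      hinj⟩, hF⟩

/-- The graphs of a suitable object force a monochromatic clique in every colouring of the
vertices. -/
lemma exists_family {V : Type} [Fintype V] [DecidableEq V] [Nonempty V] (hc : 1 ≤ c) (hQ : 0 < Q)
    (pr : Bool → V → Fin m) {ℓ lam t h Kc K₃ ν η : ℕ} {μ a : ℝ} (hℓ : 0 < ℓ)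
    (hm : (m : ℝ) ≤ 2 ^ (2 * lam)) (hm' : (m : ℝ) ≤ 2 ^ ν)
    (hμ : 2 * (D * t * 2 ^ h / (Q * ℓ)) ≤ μ) (hν : μ + ν ≤ h * Kc)
    (ha : 6 * m * 2 ^ h / (Q : ℝ) ^ 2 ≤ h * a) (hν' : 1 + ν ≤ h * K₃)
    (hL : ((2 * (r * D) * Q : ℕ) : ℝ) ≤ 2 ^ ν)
    (hn : (Fintype.card V : ℝ) ≤ 2 ^ η) (ℓ' : ℕ) (hℓ' : 2 * ℓ' ≤ t)
    (hnum : (2 : ℝ) ^ (Q * (c + 1)) ≤ (1 / (1 - 1 / (4 * (c : ℝ)))) ^ ℓ')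
    (hsum : (2 * (r * D) * Q : ℕ) * (Real.exp (m / Q) / 2 ^ ℓ) + (4 * (m / 2 ^ (2 * lam)) +
      (4 * r * (m / 2 ^ ν) + (2 * ((2 * (r * D) * Q : ℕ) / 2 ^ ν) +
        2 * r * (2 ^ (η * t) / 2 ^ (D * Q))))) < (1 : ℝ))
    (ha0 : 0 ≤ a) {b q : ℕ} (hb : 0 < b)
    (hfib : ∀ κ x, ∀ F : Finset V, (∀ u ∈ F, pr κ u = x) → F.card ≤ b)
    (hq : t / b + 1 ≤ q) (hqt : 2 * q ≤ t)
    (hlump : (b : ℝ) ^ 2 * ((2 * (4 * (r * D) / Q) + 2 * (1 + D) * a * D ^ 2 +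
        2 * D ^ 3 * ℓ * 2 ^ h / Q) * (2 * q) ^ 2 +
        (2 * (2 * ℓ * lam) + 2 * ℓ * K₃ * D + 2 * D * K₃ * (D + 2 * (Kc * ℓ))) * (2 * q)) + t * b ≤
          t * Q / 16)
    (hmet : 4 * (D * ℓ) ≤ Q)
    (hgrid : ∀ T : Finset V, T.card = 16 * t → ∃ κ, t ≤ (T.image (pr κ)).card)
    (hr : 0 < r) (hpig : r * (16 * t) ≤ Fintype.card V) :
    ∃ ω : Obj r D m Q c, ∀ f : V → Fin r, ∃ (i : Fin r) (S : Finset V), S.card = c ∧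
      (∀ u ∈ S, f u = i) ∧ ∀ u ∈ S, ∀ w ∈ S, u ≠ w → (gr ω pr i).Adj u w := by
  classical
  obtain ⟨ω, hω, hF⟩ := exists_tame hc hQ pr hℓ hm hm' hμ hν ha hν' hL hn ℓ' hℓ' hnum hsum
  refine ⟨ω, fun f => ?_⟩
  have hrne : (univ : Finset (Fin r)).Nonempty := ⟨⟨0, hr⟩, mem_univ _⟩
  -- a large colour class, and a transversal of it for one of the projections
  obtain ⟨i, -, hi⟩ := Finset.exists_le_card_fiber_of_mul_le_card_of_maps_to
    (s := (univ : Finset V)) (t := univ) (f := f) (n := 16 * t) (fun _ _ => mem_univ _) hrne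
    (by simpa using hpig)
  obtain ⟨T, hTi, hT⟩ := Finset.exists_subset_card_eq hi
  obtain ⟨κ, hκ⟩ := hgrid T hT
  obtain ⟨T', hT'sub, hT'img, hT'inj⟩ : ∃ T' ⊆ T, T'.image (pr κ) = T.image (pr κ) ∧
      Set.InjOn (pr κ) T' := by
    obtain ⟨T', h1, h2⟩ := Finset.exists_subset_injOn_image_eq_of_surjOn (f := pr κ)
      T (T.image (pr κ)) (by
        intro x hx
        simpa using hx)
    exact ⟨T', by exact_mod_cast h1, h2.2, h2.1⟩
  have hcard : t ≤ T'.card := by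
    rw [← Finset.card_image_of_injOn hT'inj, hT'img]
    exact hκ
  obtain ⟨T₀, hT₀, hT₀c⟩ := Finset.exists_subset_card_eq hcard
  have hinj : Set.InjOn (pr κ) T₀ := hT'inj.mono (by exact_mod_cast hT₀)
  have hsec : ∀ x ∈ T₀.image (pr κ), Function.invFunOn (pr κ) T₀ x ∈ T₀ ∧
      pr κ (Function.invFunOn (pr κ) T₀ x) = x := by
    intro x hx
    obtain ⟨u, hu, rfl⟩ := mem_image.mp hx
    have h1 : ∃ a ∈ (T₀ : Set V), pr κ a = pr κ u := ⟨u, hu, rfl⟩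
    exact ⟨mem_coe.mp (Function.invFunOn_mem h1), Function.invFunOn_eq h1⟩
  obtain ⟨S, hS, hSc, hclq⟩ := hω.clique hQ (by positivity) (by positivity) ha0 (by positivity)
    (by positivity) (by positivity) pr hb hfib hq hqt hlump hmet κ i (T₀.image (pr κ)) _
    (fun x hx => (hsec x hx).2) (by rw [Finset.card_image_of_injOn hinj, hT₀c])
    (hF κ i T₀ hT₀c hinj)
  refine ⟨i, S, hSc, fun u hu => ?_, hclq⟩
  obtain ⟨x, hx, rfl⟩ := mem_image.mp (hS hu)
  have := hTi (hT'sub (hT₀ (hsec x hx).1))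
  exact (mem_filter.mp this).2

end combine

/-! ### The random grid -/

section grid

/-- Chernoff bound for the number of points of `W` that a random map sends into `A`. -/
lemma tail_map {V : Type*} [Fintype V] [DecidableEq V] {m : ℕ} (W : Finset V) (A : Finset (Fin m))
    {y : ℝ} (hy : 1 ≤ y) (τ : ℕ) :
    Pr (fun ω : V → Fin m => τ ≤ (W.filter fun v => ω v ∈ A).card) ≤
      Real.exp (y * (W.card * A.card / m)) / y ^ τ := by
  classical
  have hy0 : 0 < y := by linarith
  refine Pr_markov (fun ω : V → Fin m => ∏ v, if v ∈ W ∧ ω v ∈ A then y else 1) ?_ _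
    (by positivity) ?_ ?_ (by positivity)
  · intro ω
    refine Finset.prod_nonneg fun v _ => ?_
    split_ifs <;> linarith
  · intro ω hω
    rw [Finset.prod_ite, Finset.prod_const, Finset.prod_const_one, mul_one]
    refine pow_le_pow_right₀ hy (hω.trans (le_of_eq ?_))
    congr 1
    ext v
    simp
  · have h := seq_mgf (ι := V) (Λ := Fin m) (fun _ => 0)
      (fun v ω => if v ∈ W ∧ ω v ∈ A then y else 1)
      (fun v => if v ∈ W then Real.exp (y * (A.card / m)) else 1) ?_ ?_ ?_ ?_
    · refine h.trans (le_of_eq ?_)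
      rw [Finset.prod_ite_mem, Finset.univ_inter, Finset.prod_const, ← Real.exp_nat_mul]
      congr 2
      ring
    · intro j ω
      split_ifs <;> linarith
    · intro j
      split_ifs <;> positivity
    · intro j ω ω' h
      have : ω j = ω' j := h j (Or.inl rfl)
      simp only [this]
    · intro j ω
      by_cases hj : j ∈ W
      swap
      · simp [hj]
      simp only [hj, true_and, Function.update_self, if_true, Fintype.card_fin]
      rcases Nat.eq_zero_or_pos m with rfl | hm
      · simp
      have hm' : (0 : ℝ) < m := by exact_mod_cast hm
      have h1 : ∑ x : Fin m, (if x ∈ A then y else 1) = m + (y - 1) * A.card := by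
        have : ∀ x : Fin m, (if x ∈ A then y else 1) = 1 + if x ∈ A then y - 1 else 0 := by
          intro x
          split_ifs <;> ring
        simp only [this, Finset.sum_add_distrib]
        simp
        ring
      rw [h1]
      have h2 := Real.add_one_le_exp (y * (A.card / m))
      have h3 : (y * (A.card / m) + 1) * m ≤ Real.exp (y * (A.card / m)) * m :=
        mul_le_mul_of_nonneg_right h2 hm'.le
      have h4 : (y * (A.card / m) + 1) * m = y * A.card + m := by
        field_simp
      have h5 : (0 : ℝ) ≤ A.card := by positivity
      linarith

/-- A random second projection of a grid: its fibres are not much larger than those of the first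
projection, and every set of `16 * t` points has `t` distinct images under one of the two
projections. -/
lemma exists_grid {m b t : ℕ} (hb : 8 ≤ b) (hm : m = 16 * t * b ^ 2) (ht : 1 ≤ t)
    (hmb : m ≤ b ^ 7) :
    ∃ π : Fin m × Fin b → Fin m, (∀ x, ∀ F : Finset (Fin m × Fin b), (∀ u ∈ F, π u = x) →
      F.card ≤ 8 * b) ∧ ∀ T : Finset (Fin m × Fin b), T.card = 16 * t →
        t ≤ (T.image Prod.fst).card ∨ t ≤ (T.image π).card := by
  classical
  have hm0 : 0 < m := by
    rw [hm]
    positivity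
  have hm0' : (0 : ℝ) < m := by exact_mod_cast hm0
  have hb0' : (0 : ℝ) < b := by
    have : 0 < b := by omega
    exact_mod_cast this
  have hb8 : (8 : ℝ) ≤ b := by exact_mod_cast hb
  have ht0 : (0 : ℝ) < t := by exact_mod_cast ht
  have htm : t ≤ m := by
    rw [hm]
    nlinarith [show 0 < b ^ 2 by positivity]
  set p₁ : Fin m → (Fin m × Fin b → Fin m) → Prop := fun x ω =>
    8 * b ≤ ((univ : Finset (Fin m × Fin b)).filter fun v => ω v ∈ ({x} : Finset (Fin m))).card
    with hp₁
  set p₂ : Finset (Fin m) × Finset (Fin m) → (Fin m × Fin b → Fin m) → Prop := fun A ω =>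
    16 * t ≤ ((A.1 ×ˢ (univ : Finset (Fin b))).filter fun v => ω v ∈ A.2).card with hp₂
  set P := (univ : Finset (Fin m)).powersetCard t with hP
  have h₁ : Pr (fun ω => ∃ x ∈ (univ : Finset (Fin m)), p₁ x ω) ≤ 1 / 4 := by
    refine le_trans (Pr_exists _ p₁ (fun _ => 1 / (2 : ℝ) ^ (10 * b)) ?_) ?_
    · intro x _
      refine (tail_map univ {x} (y := 4) (by norm_num) (8 * b)).trans ?_
      have e1 : (4 : ℝ) * (((univ : Finset (Fin m × Fin b)).card : ℝ) *
          (({x} : Finset (Fin m)).card : ℝ) / m) = b * 4 := by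
        simp only [card_univ, Fintype.card_prod, Fintype.card_fin, card_singleton]
        push_cast
        field_simp
      rw [e1, Real.exp_nat_mul, div_le_div_iff₀ (by positivity) (by positivity), one_mul,
        pow_mul, pow_mul, ← mul_pow]
      refine pow_le_pow_left₀ (by positivity) ?_ _
      have : Real.exp 4 = Real.exp 1 ^ 4 := by
        rw [← Real.exp_nat_mul]
        norm_num
      rw [this]
      have h3 : Real.exp 1 ^ 4 ≤ (2.8 : ℝ) ^ 4 :=
        pow_le_pow_left₀ (by positivity) (by linarith [Real.exp_one_lt_d9]) _
      have : (2.8 : ℝ) ^ 4 ≤ 64 := by norm_num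
      calc Real.exp 1 ^ 4 * 2 ^ 10 ≤ 64 * 2 ^ 10 := by nlinarith
        _ = 4 ^ 8 := by norm_num
    · rw [Finset.sum_const, nsmul_eq_mul, card_univ, Fintype.card_fin, mul_one_div,
        div_le_iff₀ (by positivity)]
      have h3 : b ≤ 2 ^ b := Nat.lt_two_pow_self.le
      have h4 : m ≤ 2 ^ (7 * b) := by
        rw [mul_comm, pow_mul]
        exact hmb.trans (Nat.pow_le_pow_left h3 _)
      have h5 : (m : ℝ) ≤ 2 ^ (7 * b) := by exact_mod_cast h4
      have h6 : (2 : ℝ) ^ (10 * b) = 2 ^ (7 * b) * 2 ^ (3 * b) := by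
        rw [← pow_add]
        ring_nf
      have h7 : (2 : ℝ) ^ 2 ≤ 2 ^ (3 * b) := pow_le_pow_right₀ (by norm_num) (by omega)
      rw [h6]
      nlinarith [show (0 : ℝ) < 2 ^ (7 * b) by positivity]
  have h₂ : Pr (fun ω => ∃ A ∈ P ×ˢ P, p₂ A ω) ≤ 1 / 4 := by
    refine le_trans (Pr_exists _ p₂ (fun _ => Real.exp (t / 16) / (b : ℝ) ^ (16 * t)) ?_) ?_
    · intro A hA
      rw [mem_product, hP, mem_powersetCard, mem_powersetCard] at hA
      refine (tail_map (A.1 ×ˢ univ) A.2 (y := b) (by linarith) (16 * t)).trans (le_of_eq ?_)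
      congr 2
      rw [card_product, hA.1.2, hA.2.2, card_univ, Fintype.card_fin, hm]
      push_cast
      field_simp
    · rw [Finset.sum_const, nsmul_eq_mul, card_product, hP, card_powersetCard, card_univ,
        Fintype.card_fin, ← mul_div_assoc, div_le_iff₀ (by positivity)]
      have h3 : (m.choose t) ≤ b ^ (7 * t) := by
        rw [pow_mul]
        exact (Nat.choose_le_pow m t).trans (Nat.pow_le_pow_left hmb _)
      have h3' : ((m.choose t * m.choose t : ℕ) : ℝ) ≤ b ^ (14 * t) := by
        have : m.choose t * m.choose t ≤ b ^ (14 * t) := by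
          rw [show 14 * t = 7 * t + 7 * t by ring, pow_add]
          exact Nat.mul_le_mul h3 h3
        exact_mod_cast this
      have h4 : Real.exp (t / 16) ≤ 4 ^ t := by
        rw [show (t : ℝ) / 16 = t * (1 / 16) by ring, Real.exp_nat_mul]
        refine pow_le_pow_left₀ (by positivity) ?_ _
        exact (Real.exp_le_exp.mpr (by norm_num)).trans (by linarith [Real.exp_one_lt_d9] :
          Real.exp 1 ≤ 4)
      have h5 : (b : ℝ) ^ (16 * t) = b ^ (14 * t) * (b ^ 2) ^ t := by
        rw [← pow_mul, ← pow_add]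
        ring_nf
      have h6 : (4 : ℝ) ^ t * 4 ≤ (b ^ 2) ^ t := by
        have h7 : (16 : ℝ) ^ t ≤ (b ^ 2) ^ t := pow_le_pow_left₀ (by norm_num) (by nlinarith) _
        have h8 : (4 : ℝ) ^ 1 ≤ 4 ^ t := pow_le_pow_right₀ (by norm_num) ht
        have h9 : (16 : ℝ) ^ t = 4 ^ t * 4 ^ t := by
          rw [← mul_pow]
          norm_num
        nlinarith [show (0 : ℝ) < 4 ^ t by positivity]
      rw [h5]
      calc ((m.choose t * m.choose t : ℕ) : ℝ) * Real.exp (t / 16) ≤ b ^ (14 * t) * 4 ^ t := by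
            gcongr
        _ ≤ _ := by nlinarith [show (0 : ℝ) < (b : ℝ) ^ (14 * t) by positivity]
  have h₃ : Pr (fun ω : Fin m × Fin b → Fin m => (∃ x ∈ (univ : Finset (Fin m)), p₁ x ω) ∨
      ∃ A ∈ P ×ˢ P, p₂ A ω) < 1 := by
    have := Pr_or (fun ω : Fin m × Fin b → Fin m => ∃ x ∈ (univ : Finset (Fin m)), p₁ x ω)
      (fun ω => ∃ A ∈ P ×ˢ P, p₂ A ω)
    linarith
  have : Nonempty (Fin m × Fin b → Fin m) := ⟨fun _ => ⟨0, hm0⟩⟩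
  obtain ⟨π, hπ⟩ := Pr_lt_one h₃
  push Not at hπ
  refine ⟨π, fun x F hF => ?_, fun T hT => ?_⟩
  · have h5 := hπ.1 x (mem_univ _)
    rw [hp₁] at h5
    push Not at h5
    refine (Finset.card_le_card fun u hu => ?_).trans h5.le
    simp [hF u hu]
  · by_contra! hcon
    obtain ⟨A, hA, hAc⟩ := Finset.exists_superset_card_eq (s := T.image Prod.fst) (n := t)
      hcon.1.le (by simpa using htm)
    obtain ⟨A', hA', hAc'⟩ := Finset.exists_superset_card_eq (s := T.image π) (n := t)
      hcon.2.le (by simpa using htm)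
    have h5 := hπ.2 (A, A') (by simp [hP, mem_powersetCard, hAc, hAc'])
    rw [hp₂] at h5
    push Not at h5
    rw [← hT] at h5
    refine absurd (Finset.card_le_card fun u hu => ?_) (not_le.mpr h5)
    simp only [mem_filter, mem_product, mem_univ, and_true]
    exact ⟨hA (mem_image_of_mem _ hu), hA' (mem_image_of_mem _ hu)⟩

end grid

/-! ### Numerical estimates -/

section numerics

set_option maxHeartbeats 800000 in
/-- For the chosen parameters few pairs of vertices are bad. The number `w` stands for `2 ^ h`, the
base of the exponential moments, and fibres have at most `8 * b` elements. -/
lemma lump_num {K g ρ b w r D Q t q lam K₃ Kc ℓ a : ℝ} (hK : 8 ≤ K) (hg : 1 ≤ g) (hρ : 1 ≤ ρ)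
    (hb : 1 ≤ b) (hw : 0 ≤ w) (hgρ : g ≤ ρ) (hstar : w * g ^ 2 ≤ K ^ 32 * b) (hr0 : 0 ≤ r)
    (hr : r ≤ ρ * b)
    (hD : D = K ^ 8 * g) (hQ : Q = K ^ 80 * ρ * b * g) (ht : t = K ^ 3 * Q)
    (ha : a = 6 * (16 * t * ρ) * w / Q ^ 2) (hℓ : ℓ = K ^ 6 * ρ) (hlam : lam = K ^ 4 * g)
    (hK₃ : K₃ = K ^ 10) (hKc : Kc = K ^ 11) (hq0 : 0 ≤ q) (hq : 2 * q ≤ t / (2 * b)) :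
    (8 * b) ^ 2 * ((2 * (4 * (r * D) / Q) + 2 * (1 + D) * a * D ^ 2 +
        2 * D ^ 3 * ℓ * w / Q) * (2 * q) ^ 2 +
        (2 * (2 * ℓ * lam) + 2 * ℓ * K₃ * D + 2 * D * K₃ * (D + 2 * (Kc * ℓ))) * (2 * q)) +
        t * (8 * b) ≤ t * Q / 16 := by
  have hK0 : 0 < K := by linarith
  have hg0 : 0 < g := by linarith
  have hρ0 : 0 < ρ := by linarith
  have hb0 : 0 < b := by linarith
  have hQ0 : 0 < Q := by rw [hQ]; positivity
  have ht0 : 0 < t := by rw [ht]; positivity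
  have hD1 : 1 ≤ D := by
    rw [hD]
    exact one_le_mul_of_one_le_of_one_le (one_le_pow₀ (by linarith)) hg
  have hw2 : w * g ^ 2 / b ≤ K ^ 32 := by rwa [div_le_iff₀ hb0]
  set A₁ := 2 * (4 * (r * D) / Q) + 2 * (1 + D) * a * D ^ 2 + 2 * D ^ 3 * ℓ * w / Q with hA₁
  set A₂ := 2 * (2 * ℓ * lam) + 2 * ℓ * K₃ * D + 2 * D * K₃ * (D + 2 * (Kc * ℓ)) with hA₂
  have ha0 : 0 ≤ a := by rw [ha]; positivity
  have hD0 : 0 < D := by linarith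
  have hA₁0 : 0 ≤ A₁ := by
    have : 0 ≤ ℓ := by rw [hℓ]; positivity
    rw [hA₁]
    positivity
  have hA₂0 : 0 ≤ A₂ := by
    rw [hA₂, hℓ, hlam, hK₃, hKc]
    positivity
  -- the three parts of the quadratic coefficient
  have p1 : r * D / Q ≤ 1 / K ^ 18 := by
    calc r * D / Q ≤ (ρ * b) * D / Q := by gcongr
      _ = 1 / K ^ 72 := by
        rw [hD, hQ]
        field_simp
      _ ≤ 1 / K ^ 18 := one_div_le_one_div_of_le (by positivity)
        (pow_le_pow_right₀ (by linarith) (by norm_num))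
  have p2 : (1 + D) * a * D ^ 2 ≤ 192 / K ^ 18 := by
    calc (1 + D) * a * D ^ 2 ≤ (D + D) * a * D ^ 2 := by gcongr
      _ = 192 * (w * g ^ 2 / b) * (1 / K ^ 53) := by
        rw [ha, ht, hD, hQ]
        field_simp
        ring
      _ ≤ 192 * K ^ 32 * (1 / K ^ 53) := by gcongr
      _ = 192 / K ^ 21 := by
        field_simp
      _ ≤ 192 / K ^ 18 := div_le_div_of_nonneg_left (by norm_num) (by positivity)
        (pow_le_pow_right₀ (by linarith) (by norm_num))
  have p3 : D ^ 3 * ℓ * w / Q ≤ 1 / K ^ 18 := by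
    calc D ^ 3 * ℓ * w / Q = (w * g ^ 2 / b) * (1 / K ^ 50) := by
          rw [hℓ, hD, hQ]
          field_simp
      _ ≤ K ^ 32 * (1 / K ^ 50) := by gcongr
      _ = 1 / K ^ 18 := by
        field_simp
  have hA₁le : A₁ ≤ 394 / K ^ 18 := by
    have : A₁ = 8 * (r * D / Q) + 2 * ((1 + D) * a * D ^ 2) + 2 * (D ^ 3 * ℓ * w / Q) := by
      rw [hA₁]
      ring
    rw [this]
    have e : (394 : ℝ) / K ^ 18 = 8 * (1 / K ^ 18) + 2 * (192 / K ^ 18) + 2 * (1 / K ^ 18) := by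
      ring
    rw [e]
    linarith
  have hKpow : ∀ i j : ℕ, i ≤ j → K ^ i ≤ K ^ j := fun i j h =>
    pow_le_pow_right₀ (by linarith) h
  have hA₂le : A₂ ≤ 12 * K ^ 35 * (ρ * g) := by
    have h1 : g * g ≤ ρ * g := by gcongr
    have e : A₂ = 4 * K ^ 10 * (ρ * g) + 2 * K ^ 24 * (ρ * g) + 2 * K ^ 26 * (g * g) +
        4 * K ^ 35 * (ρ * g) := by
      rw [hA₂, hℓ, hlam, hK₃, hKc, hD]
      ring
    have h2 : K ^ 10 * (ρ * g) ≤ K ^ 35 * (ρ * g) :=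
      mul_le_mul_of_nonneg_right (hKpow 10 35 (by norm_num)) (by positivity)
    have h3 : K ^ 24 * (ρ * g) ≤ K ^ 35 * (ρ * g) :=
      mul_le_mul_of_nonneg_right (hKpow 24 35 (by norm_num)) (by positivity)
    have h4 : K ^ 26 * (g * g) ≤ K ^ 35 * (ρ * g) :=
      mul_le_mul (hKpow 26 35 (by norm_num)) h1 (by positivity) (by positivity)
    rw [e]
    linarith
  have s1 : 16 * A₁ * t ≤ Q / 64 := by
    have h1 : A₁ * K ^ 3 ≤ 1 / 1024 := by
      calc A₁ * K ^ 3 ≤ 394 / K ^ 18 * K ^ 3 := by gcongr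
        _ = 394 / K ^ 15 := by field_simp
        _ ≤ 394 / 8 ^ 15 := by gcongr
        _ ≤ 1 / 1024 := by norm_num
    calc 16 * A₁ * t = 16 * (A₁ * K ^ 3) * Q := by
          rw [ht]
          ring
      _ ≤ 16 * (1 / 1024) * Q := by gcongr
      _ = Q / 64 := by ring
  have h80 : (8 : ℝ) ^ 45 * K ^ 35 ≤ K ^ 80 := by
    rw [show K ^ 80 = K ^ 45 * K ^ 35 by ring]
    gcongr
  have s2 : 32 * b * A₂ ≤ Q / 64 := by
    have h1 : 32 * b * A₂ ≤ 384 * (K ^ 35 * (ρ * b * g)) := by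
      calc 32 * b * A₂ ≤ 32 * b * (12 * K ^ 35 * (ρ * g)) := by gcongr
        _ = _ := by ring
    have h2 : 32768 * (K ^ 35 * (ρ * b * g)) ≤ Q := by
      calc 32768 * (K ^ 35 * (ρ * b * g)) ≤ 8 ^ 45 * (K ^ 35 * (ρ * b * g)) := by
            gcongr
            norm_num
        _ = 8 ^ 45 * K ^ 35 * (ρ * b * g) := by ring
        _ ≤ K ^ 80 * (ρ * b * g) := by gcongr
        _ = Q := by
          rw [hQ]
          ring
    linarith
  have s3 : 8 * b ≤ Q / 64 := by
    have h1 : 1 ≤ ρ * g := one_le_mul_of_one_le_of_one_le hρ hg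
    have h3 : 512 * b ≤ Q := by
      calc 512 * b = 8 ^ 3 * 1 * b := by norm_num
        _ ≤ 8 ^ 80 * 1 * b := by
          gcongr
          · norm_num
          · norm_num
        _ ≤ K ^ 80 * (ρ * g) * b := by gcongr
        _ = Q := by
          rw [hQ]
          ring
    linarith
  have hq2 : (2 * q) ^ 2 ≤ (t / (2 * b)) ^ 2 := by gcongr
  calc (8 * b) ^ 2 * (A₁ * (2 * q) ^ 2 + A₂ * (2 * q)) + t * (8 * b)
      ≤ (8 * b) ^ 2 * (A₁ * (t / (2 * b)) ^ 2 + A₂ * (t / (2 * b))) + t * (8 * b) := by gcongr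
    _ = t * (16 * A₁ * t + 32 * b * A₂ + 8 * b) := by
      field_simp
      ring
    _ ≤ t * (Q / 64 + Q / 64 + Q / 64) := by gcongr
    _ = t * Q * (3 / 64) := by ring
    _ ≤ t * Q * (1 / 16) := mul_le_mul_of_nonneg_left (by norm_num) (by positivity)
    _ = t * Q / 16 := by ring

/-- The `4 * K ^ 2 * Q` eligible points of a layer in which no line is full outweigh the factors
`1 / 2` of its accepted points. -/
lemma class_num {c K Q : ℕ} (hc : 1 ≤ c) (hcK : c + 1 ≤ K) :
    (2 : ℝ) ^ (Q * (c + 1)) ≤ (1 / (1 - 1 / (4 * (c : ℝ)))) ^ (4 * K ^ 2 * Q) := by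
  have hc' : (1 : ℝ) ≤ c := by exact_mod_cast hc
  set x : ℝ := 1 / (4 * (c : ℝ)) with hx
  have hx0 : 0 < x := by positivity
  have hx1 : x ≤ 1 / 4 := by
    rw [hx]
    exact one_div_le_one_div_of_le (by norm_num) (by linarith)
  have h1 : 1 + x ≤ 1 / (1 - x) := by
    rw [le_div_iff₀ (by linarith)]
    nlinarith
  have h2 : (2 : ℝ) ≤ (1 + x) ^ (4 * c) := by
    have := one_add_mul_le_pow (a := x) (by linarith) (4 * c)
    have e : ((4 * c : ℕ) : ℝ) * x = 1 := by
      rw [hx]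
      push_cast
      field_simp
    rw [e] at this
    linarith
  calc (2 : ℝ) ^ (Q * (c + 1)) ≤ ((1 + x) ^ (4 * c)) ^ (Q * (c + 1)) :=
        pow_le_pow_left₀ (by norm_num) h2 _
    _ = (1 + x) ^ (4 * c * (Q * (c + 1))) := (pow_mul _ _ _).symm
    _ ≤ (1 + x) ^ (4 * K ^ 2 * Q) := by
      refine pow_le_pow_right₀ (by linarith) ?_
      calc 4 * c * (Q * (c + 1)) = 4 * (c * (c + 1)) * Q := by ring
        _ ≤ 4 * (K * K) * Q := by
          gcongr
          omega
        _ = _ := by ring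
    _ ≤ _ := pow_le_pow_left₀ (by linarith) h1 _

/-- The union bound: all the failure probabilities together are less than one. -/
lemma sum_num {L m r Λ ρ ℓ Q t DQ K : ℕ} (hΛ : 6 ≤ Λ) (hL : (L : ℝ) ≤ 2 ^ Λ)
    (hm : (m : ℝ) ≤ 2 ^ Λ) (hr : (r : ℝ) ≤ 2 ^ Λ) (hmQ : (m : ℝ) / Q = 16 * K ^ 3 * ρ)
    (hℓ : Λ + 32 * K ^ 3 * ρ + 4 ≤ ℓ) (hDQ : 2 * Λ + Λ * t ≤ DQ) :
    L * (Real.exp (m / Q) / 2 ^ ℓ) + (4 * (m / 2 ^ (2 * Λ)) +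
      (4 * r * (m / 2 ^ (4 * Λ)) + (2 * ((L : ℝ) / 2 ^ (4 * Λ)) +
        2 * r * (2 ^ (Λ * t) / 2 ^ DQ)))) < (1 : ℝ) := by
  have hz : (64 : ℝ) ≤ 2 ^ Λ := by
    have := pow_le_pow_right₀ (one_le_two : (1 : ℝ) ≤ 2) hΛ
    linarith
  have e2 : (2 : ℝ) ^ (2 * Λ) = 2 ^ Λ * 2 ^ Λ := by rw [← pow_add]; ring_nf
  have e4 : (2 : ℝ) ^ (4 * Λ) = 2 ^ Λ * 2 ^ Λ * (2 ^ Λ * 2 ^ Λ) := by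
    rw [← pow_add, ← pow_add]
    ring_nf
  have t1 : L * (Real.exp (m / Q) / 2 ^ ℓ) ≤ 1 / 16 := by
    have h1 : Real.exp (m / Q) ≤ 2 ^ (32 * K ^ 3 * ρ) := by
      refine (exp_le_two (by positivity)).trans ?_
      rw [hmQ, ← Real.rpow_natCast 2]
      refine Real.rpow_le_rpow_of_exponent_le (by norm_num) (le_of_eq ?_)
      push_cast
      ring
    have h2 : (2 : ℝ) ^ (Λ + 32 * K ^ 3 * ρ + 4) ≤ 2 ^ ℓ :=
      pow_le_pow_right₀ (by norm_num) hℓ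
    rw [← mul_div_assoc, div_le_iff₀ (by positivity)]
    have h3 : L * Real.exp (m / Q) ≤ 2 ^ Λ * 2 ^ (32 * K ^ 3 * ρ) := by gcongr
    rw [pow_add, pow_add] at h2
    linarith
  have t2 : 4 * ((m : ℝ) / 2 ^ (2 * Λ)) ≤ 1 / 16 := by
    rw [e2, ← mul_div_assoc, div_le_iff₀ (by positivity)]
    nlinarith
  have t3 : 4 * r * ((m : ℝ) / 2 ^ (4 * Λ)) ≤ 1 / 16 := by
    rw [e4, ← mul_div_assoc, div_le_iff₀ (by positivity)]
    have h1 : (r : ℝ) * m ≤ 2 ^ Λ * 2 ^ Λ := by gcongr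
    have h2 : (64 : ℝ) * 64 ≤ 2 ^ Λ * 2 ^ Λ := mul_le_mul hz hz (by norm_num) (by positivity)
    have h3 : (0 : ℝ) < 2 ^ Λ * 2 ^ Λ := by positivity
    nlinarith
  have t4 : 2 * ((L : ℝ) / 2 ^ (4 * Λ)) ≤ 1 / 16 := by
    rw [e4, ← mul_div_assoc, div_le_iff₀ (by positivity)]
    have h2 : (64 : ℝ) * 64 ≤ 2 ^ Λ * 2 ^ Λ := mul_le_mul hz hz (by norm_num) (by positivity)
    have h3 : (2 : ℝ) ^ Λ * 1 ≤ 2 ^ Λ * 2 ^ Λ := by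
      gcongr
      exact one_le_pow₀ (by norm_num)
    nlinarith
  have t5 : 2 * r * ((2 : ℝ) ^ (Λ * t) / 2 ^ DQ) ≤ 1 / 16 := by
    have h1 : (2 : ℝ) ^ (2 * Λ + Λ * t) ≤ 2 ^ DQ := pow_le_pow_right₀ (by norm_num) hDQ
    rw [pow_add, e2] at h1
    rw [← mul_div_assoc, div_le_iff₀ (by positivity)]
    have h2 : (r : ℝ) * 2 ^ (Λ * t) ≤ 2 ^ Λ * 2 ^ (Λ * t) := by gcongr
    have h3 : (0 : ℝ) < 2 ^ Λ * 2 ^ (Λ * t) := by positivity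
    nlinarith
  linarith

end numerics

/-! ### Choice of the parameters -/

section parameters

/-- All the parameters of the construction are at most `2 ^ (K ^ 4 * g)`. -/
lemma size_num {K g ρ b : ℕ} (hK : 8 ≤ K) (hg : 1 ≤ g) (hρb : ρ * b ≤ 2 ^ g) :
    16 * (K ^ 3 * (K ^ 80 * ρ * b * g)) * ρ * b ≤ 2 ^ (K ^ 4 * g) ∧
    2 * (ρ * b * (K ^ 8 * g)) * (K ^ 80 * ρ * b * g) ≤ 2 ^ (K ^ 4 * g) ∧
    ρ * b ≤ 2 ^ (K ^ 4 * g) := by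
  have hKK : K ≤ 2 ^ K := Nat.lt_two_pow_self.le
  have hgg : g ≤ 2 ^ g := Nat.lt_two_pow_self.le
  have hΛ : 88 * K + 4 * g + 4 ≤ K ^ 4 * g := by
    have h1 : 512 * K ≤ K ^ 4 := by
      calc 512 * K = 8 ^ 3 * K := by norm_num
        _ ≤ K ^ 3 * K := by gcongr
        _ = K ^ 4 := by ring
    have h2 : 512 * K * g ≤ K ^ 4 * g := by gcongr
    have h3 : K * 1 ≤ K * g := by gcongr
    have h4 : 8 * g ≤ K * g := by gcongr
    nlinarith
  have hle : (2 : ℕ) ^ (88 * K + 4 * g + 4) ≤ 2 ^ (K ^ 4 * g) :=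
    Nat.pow_le_pow_right (by norm_num) hΛ
  have hpow : (2 : ℕ) ^ (88 * K + 4 * g + 4) = 16 * ((2 ^ K) ^ 88 * (2 ^ g * 2 ^ g) *
      (2 ^ g * 2 ^ g)) := by
    rw [pow_add, pow_add, ← pow_mul, ← pow_add, mul_assoc ((2 : ℕ) ^ (K * 88)), ← pow_add]
    ring_nf
  have h83 : K ^ 83 ≤ (2 ^ K) ^ 88 :=
    (Nat.pow_le_pow_right (by omega) (by norm_num)).trans (Nat.pow_le_pow_left hKK 88)
  have h1 : 1 ≤ 2 ^ g := Nat.one_le_two_pow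
  refine ⟨?_, ?_, ?_⟩
  · calc 16 * (K ^ 3 * (K ^ 80 * ρ * b * g)) * ρ * b = 16 * (K ^ 83 * (1 * g) *
          ((ρ * b) * (ρ * b))) := by ring
      _ ≤ 16 * ((2 ^ K) ^ 88 * (2 ^ g * 2 ^ g) * (2 ^ g * 2 ^ g)) := by gcongr
      _ ≤ _ := hpow ▸ hle
  · calc 2 * (ρ * b * (K ^ 8 * g)) * (K ^ 80 * ρ * b * g) = 2 * (K ^ 88 * (g * g) *
          ((ρ * b) * (ρ * b))) := by ring
      _ ≤ 16 * ((2 ^ K) ^ 88 * (2 ^ g * 2 ^ g) * (2 ^ g * 2 ^ g)) := by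
        gcongr
        norm_num
      _ ≤ _ := hpow ▸ hle
  · exact hρb.trans (Nat.pow_le_pow_right (by norm_num) (by omega))

set_option maxHeartbeats 1000000 in
/-- The family of random graphs exists for the parameters expressed through `K`, `g`, `h`, `ρ`
and `b`. -/
lemma core {K g h ρ b r c m t Q : ℕ} (hK : 8 ≤ K) (hc : 1 ≤ c) (hcK : c + 1 ≤ K) (hg : 1 ≤ g)
    (hb : 1 ≤ b) (hgρ : g ≤ ρ) (hh : 1 ≤ h) (hgh : g ≤ h * K ^ 5) (h2h : 2 ^ h ≤ ρ)
    (hstar : 2 ^ h * g ^ 2 ≤ K ^ 32 * b) (hr0 : 0 < r) (hr : r ≤ ρ * b) (hρb : ρ * b ≤ 2 ^ g)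
    (hQ : Q = K ^ 80 * ρ * b * g) (ht : t = K ^ 3 * Q) (hm : m = 16 * t * ρ)
    (pr : Bool → Fin m × Fin b → Fin m)
    (hfib : ∀ κ x, ∀ F : Finset (Fin m × Fin b), (∀ u ∈ F, pr κ u = x) → F.card ≤ 8 * b)
    (hgrid : ∀ T : Finset (Fin m × Fin b), T.card = 16 * t → ∃ κ, t ≤ (T.image (pr κ)).card) :
    ∃ ω : Obj r (K ^ 8 * g) m Q c, ∀ f : Fin m × Fin b → Fin r, ∃ (i : Fin r)
      (S : Finset (Fin m × Fin b)), S.card = c ∧ (∀ u ∈ S, f u = i) ∧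
        ∀ u ∈ S, ∀ w ∈ S, u ≠ w → (gr ω pr i).Adj u w := by
  have hρ : 1 ≤ ρ := hg.trans hgρ
  have hK1 : 1 ≤ K := by omega
  obtain ⟨z1, z2, z3⟩ := size_num hK hg hρb
  have hQ0 : 0 < Q := by
    rw [hQ]
    positivity
  have ht0 : 0 < t := by
    rw [ht]
    positivity
  have hm0 : 0 < m := by
    rw [hm]
    positivity
  have hcard : Fintype.card (Fin m × Fin b) = m * b := by simp
  have hmb : m * b ≤ 2 ^ (K ^ 4 * g) := by
    rw [hm, ht, hQ]
    exact z1
  have hmΛ : m ≤ 2 ^ (K ^ 4 * g) := (Nat.le_mul_of_pos_right m (by omega)).trans hmb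
  have hLΛ : 2 * (r * (K ^ 8 * g)) * Q ≤ 2 ^ (K ^ 4 * g) := by
    refine le_trans ?_ z2
    rw [hQ]
    gcongr
  have hrΛ : r ≤ 2 ^ (K ^ 4 * g) := hr.trans z3
  have hmΛ' : (m : ℝ) ≤ 2 ^ (K ^ 4 * g) := by exact_mod_cast hmΛ
  have hLΛ' : ((2 * (r * (K ^ 8 * g)) * Q : ℕ) : ℝ) ≤ 2 ^ (K ^ 4 * g) := by exact_mod_cast hLΛ
  have hrΛ' : (r : ℝ) ≤ 2 ^ (K ^ 4 * g) := by exact_mod_cast hrΛ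
  have hK' : (8 : ℝ) ≤ K := by exact_mod_cast hK
  have hg' : (1 : ℝ) ≤ g := by exact_mod_cast hg
  have hb' : (1 : ℝ) ≤ b := by exact_mod_cast hb
  have hρ' : (1 : ℝ) ≤ ρ := by exact_mod_cast hρ
  have hK0' : (0 : ℝ) < K := by linarith
  have hg0' : (0 : ℝ) < g := by linarith
  have hb0' : (0 : ℝ) < b := by linarith
  have hρ0' : (0 : ℝ) < ρ := by linarith
  have hQ0' : (0 : ℝ) < Q := by exact_mod_cast hQ0
  have h2h' : (2 : ℝ) ^ h ≤ ρ := by exact_mod_cast h2h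
  have hmQ : (m : ℝ) / Q = 16 * K ^ 3 * ρ := by
    rw [hm, ht]
    push_cast
    field_simp
  have hΛ6 : 6 ≤ K ^ 4 * g := by
    calc 6 ≤ 8 ^ 4 * 1 := by norm_num
      _ ≤ K ^ 4 * g := by gcongr
  have hpowle : ∀ j : ℕ, 1 ≤ j → (2 : ℝ) ^ (K ^ 4 * g) ≤ 2 ^ (j * (K ^ 4 * g)) := fun j hj =>
    pow_le_pow_right₀ (by norm_num) (Nat.le_mul_of_pos_left _ hj)
  have : Nonempty (Fin m × Fin b) := ⟨(⟨0, hm0⟩, ⟨0, by omega⟩)⟩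
  -- `t` is a large multiple of the fibre size
  have h8b : 8 * b * 8 ≤ t := by
    calc 8 * b * 8 = 8 ^ 2 * 1 * (1 * b * 1) := by ring
      _ ≤ K ^ 3 * K ^ 80 * (ρ * b * g) := by
        refine Nat.mul_le_mul (Nat.mul_le_mul ?_ (Nat.one_le_pow _ _ hK1)) (by gcongr)
        exact (Nat.pow_le_pow_left hK 2).trans (Nat.pow_le_pow_right hK1 (by norm_num))
      _ = t := by
        rw [ht, hQ]
        ring
  set q := t / (8 * b) + 1 with hq
  have hqt : q * (4 * b) ≤ t := by
    have h1 : 8 * b * (t / (8 * b)) ≤ t := Nat.mul_div_le t (8 * b)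
    rw [hq]
    nlinarith
  have hq' : 2 * (q : ℝ) ≤ t / (2 * b) := by
    rw [le_div_iff₀ (by positivity)]
    have : (q : ℝ) * (4 * b) ≤ t := by exact_mod_cast hqt
    linarith
  refine exists_family (lam := K ^ 4 * g) (h := h) (Kc := K ^ 11) (K₃ := K ^ 10)
    (ν := 4 * (K ^ 4 * g)) (η := K ^ 4 * g) (t := t) (ℓ := K ^ 6 * ρ) (b := 8 * b) (q := q)
    (μ := 2 * (K ^ 5 * g)) (a := 6 * m * 2 ^ h / (Q : ℝ) ^ 2) (ℓ' := 4 * K ^ 2 * Q)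
    hc hQ0 pr (by positivity) (hmΛ'.trans (hpowle 2 (by norm_num)))
    (hmΛ'.trans (hpowle 4 (by norm_num))) ?_ ?_ ?_ ?_ (hLΛ'.trans (hpowle 4 (by norm_num)))
    ?_ ?_ (class_num hc hcK) ?_ (by positivity) (by omega) hfib le_rfl ?_ ?_ ?_ hgrid hr0 ?_
  · have e : (2 : ℝ) * ((K ^ 8 * g : ℕ) * t * 2 ^ h / (Q * (K ^ 6 * ρ : ℕ))) =
        2 * (K ^ 5 * g) * (2 ^ h / ρ) := by
      rw [ht]
      push_cast
      field_simp
    rw [e]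
    exact mul_le_of_le_one_right (by positivity) ((div_le_one hρ0').mpr h2h')
  · have h1 : K ^ 6 * g ≤ h * K ^ 11 := by
      calc K ^ 6 * g ≤ K ^ 6 * (h * K ^ 5) := by gcongr
        _ = h * K ^ 11 := by ring
    have h2 : 2 * (K ^ 5 * g) + 4 * (K ^ 4 * g) ≤ K ^ 6 * g := by
      have h3 : 8 * (K ^ 5 * g) ≤ K * (K ^ 5 * g) := by gcongr
      have h4 : 8 * (K ^ 4 * g) ≤ K * (K ^ 4 * g) := by gcongr
      have e1 : K * (K ^ 5 * g) = K ^ 6 * g := by ring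
      have e2 : K * (K ^ 4 * g) = K ^ 5 * g := by ring
      omega
    exact_mod_cast h2.trans h1
  · have h1 : (1 : ℝ) ≤ h := by exact_mod_cast hh
    exact le_mul_of_one_le_left (by positivity) h1
  · have h1 : K ^ 5 * g ≤ h * K ^ 10 := by
      calc K ^ 5 * g ≤ K ^ 5 * (h * K ^ 5) := by gcongr
        _ = h * K ^ 10 := by ring
    have h4 : 8 * (K ^ 4 * g) ≤ K * (K ^ 4 * g) := by gcongr
    have e2 : K * (K ^ 4 * g) = K ^ 5 * g := by ring
    omega
  · rw [hcard]
    exact_mod_cast hmb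
  · rw [ht]
    calc 2 * (4 * K ^ 2 * Q) = 8 * K ^ 2 * Q := by ring
      _ ≤ K * K ^ 2 * Q := by gcongr
      _ = K ^ 3 * Q := by ring
  · refine sum_num (ρ := ρ) (K := K) hΛ6 hLΛ' hmΛ' hrΛ' hmQ ?_ ?_
    · have h1 : K ^ 4 * g ≤ K ^ 4 * ρ := by gcongr
      have h2 : 8 * (K ^ 3 * ρ) ≤ K * (K ^ 3 * ρ) := by gcongr
      have h3 : 64 * (K ^ 4 * ρ) ≤ K ^ 2 * (K ^ 4 * ρ) := by
        gcongr
        nlinarith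
      have e1 : K * (K ^ 3 * ρ) = K ^ 4 * ρ := by ring
      have e2 : K ^ 2 * (K ^ 4 * ρ) = K ^ 6 * ρ := by ring
      have e3 : 32 * K ^ 3 * ρ = 32 * (K ^ 3 * ρ) := by ring
      omega
    · have h1 : K ^ 4 * g * 1 ≤ K ^ 4 * g * t := by gcongr; omega
      have h2 : 8 * (K ^ 4 * g * t) ≤ K * (K ^ 4 * g * t) := by gcongr
      have e1 : K * (K ^ 4 * g * t) = K ^ 8 * g * Q := by
        rw [ht]
        ring
      omega
  · calc 2 * q ≤ q * (4 * b) := by nlinarith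
      _ ≤ t := hqt
  · have := lump_num (K := K) (g := g) (ρ := ρ) (b := b) (w := 2 ^ h) (r := r)
      (D := (K ^ 8 * g : ℕ)) (Q := Q) (t := t) (q := q) (lam := (K ^ 4 * g : ℕ))
      (K₃ := (K ^ 10 : ℕ)) (Kc := (K ^ 11 : ℕ)) (ℓ := (K ^ 6 * ρ : ℕ))
      (a := 6 * m * 2 ^ h / (Q : ℝ) ^ 2) hK' hg' hρ' hb' (by positivity)
      (by exact_mod_cast hgρ) (by exact_mod_cast hstar) (by positivity) (by exact_mod_cast hr)
      (by push_cast; rfl) (by rw [hQ]; push_cast; rfl) (by rw [ht]; push_cast; rfl)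
      (by rw [hm]; push_cast; rfl) (by push_cast; rfl) (by push_cast; rfl) (by push_cast; rfl)
      (by push_cast; rfl) (by positivity) hq'
    push_cast at this ⊢
    exact this
  · rw [hQ]
    calc 4 * (K ^ 8 * g * (K ^ 6 * ρ)) = 4 * K ^ 14 * ρ * 1 * g := by ring
      _ ≤ K * K ^ 14 * ρ * b * g := by
        gcongr
        omega
      _ = K ^ 15 * ρ * b * g := by ring
      _ ≤ K ^ 80 * ρ * b * g := by
        gcongr
        norm_num
  · rw [hcard, hm]
    calc r * (16 * t) ≤ ρ * b * (16 * t) := by gcongr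
      _ = 16 * t * ρ * b := by ring

end parameters

/-! ### The upper bound -/

section assembly

/-- The family of graphs for given grid parameters `ρ`, `b`, turned into a Ramsey minimal graph
whose minimum degree is at most the number of points of the grid. -/
lemma upper_core {k g h ρ b r m t Q : ℕ} (hk : 3 ≤ k) (hg : 1 ≤ g)
    (hb : 1 ≤ b) (hgρ : g ≤ ρ) (hh : 1 ≤ h) (hgh : g ≤ h * (2 ^ k) ^ 5) (h2h : 2 ^ h ≤ ρ)
    (hstar : 2 ^ h * g ^ 2 ≤ (2 ^ k) ^ 32 * b) (hr0 : 0 < r) (hr : r ≤ ρ * b)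
    (hρb : ρ * b ≤ 2 ^ g) (hQ : Q = (2 ^ k) ^ 80 * ρ * b * g) (ht : t = (2 ^ k) ^ 3 * Q)
    (hm : m = 16 * t * ρ) (π : Fin m × Fin b → Fin m)
    (hfib : ∀ x, ∀ F : Finset (Fin m × Fin b), (∀ u ∈ F, π u = x) → F.card ≤ 8 * b)
    (hgrid : ∀ T : Finset (Fin m × Fin b), T.card = 16 * t →
      t ≤ (T.image Prod.fst).card ∨ t ≤ (T.image π).card) :
    ∃ (n : ℕ) (G : SimpleGraph (Fin n)), RamseyMinimal G r k ∧ minDeg G ≤ m * b := by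
  classical
  have hK : 8 ≤ 2 ^ k := by
    calc 8 = 2 ^ 3 := by norm_num
      _ ≤ 2 ^ k := Nat.pow_le_pow_right (by norm_num) hk
  have hkK : k < 2 ^ k := Nat.lt_two_pow_self
  obtain ⟨ω, hω⟩ := core (c := k - 1) hK (by omega) (by omega) hg hb hgρ hh hgh h2h hstar hr0 hr hρb
    hQ ht hm (fun κ => if κ then π else Prod.fst) (by
      intro κ x F hF
      cases κ with
      | true => exact hfib x F (by simpa using hF)
      | false =>
        have hF' : ∀ u ∈ F, u.1 = x := by simpa using hF
        calc F.card ≤ ({x} ×ˢ (univ : Finset (Fin b))).card := Finset.card_le_card fun u hu =>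
              mem_product.mpr ⟨mem_singleton.mpr (hF' u hu), mem_univ _⟩
          _ ≤ 8 * b := by
            rw [card_product, card_singleton, card_univ, Fintype.card_fin]
            omega) (by
      intro T hT
      rcases hgrid T hT with h | h
      · exact ⟨false, by simpa using h⟩
      · exact ⟨true, by simpa using h⟩)
  obtain ⟨n, G, hG, hd⟩ := gadget hr0 hk (gr ω fun κ => if κ then π else Prod.fst)
    (fun i j u w => gr_disjoint i j u w)
    (fun i S hS h => gr_free i S (by omega) (by omega) h) hω
  refine ⟨n, G, hG, hd.trans (le_of_eq ?_)⟩
  simp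

lemma pow_aux (e : ℕ) : 3 * e ≤ 4 ^ e := by
  induction e with
  | zero => norm_num
  | succ e ih =>
    rw [pow_succ]
    have : 1 ≤ 4 ^ e := Nat.one_le_pow _ _ (by norm_num)
    omega

lemma pow_aux' {e : ℕ} (he : 4 ≤ e) : 3 * e ≤ 2 ^ e := by
  induction e, he using Nat.le_induction with
  | base => norm_num
  | succ e he ih =>
    rw [pow_succ]
    omega

/-- The upper bound for at most `8 ^ e` colours. Few colours, compared with `k`, need no second
projection; otherwise the grid has `2 ^ e` columns. -/
lemma upper_exists {k r e : ℕ} (hk : 3 ≤ k) (hr0 : 0 < r) (he : 1 ≤ e) (hre : r ≤ 8 ^ e) :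
    ∃ (n : ℕ) (G : SimpleGraph (Fin n)), RamseyMinimal G r k ∧
      minDeg G ≤ 16 * (2 ^ k) ^ 83 * (8 ^ e) ^ 2 * (3 * e) := by
  set K := 2 ^ k with hKdef
  have hK : 8 ≤ K := by
    calc 8 = 2 ^ 3 := by norm_num
      _ ≤ 2 ^ k := Nat.pow_le_pow_right (by norm_num) hk
  have h8 : (8 : ℕ) ^ e = 2 ^ (3 * e) := by
    rw [pow_mul]
    norm_num
  rcases Nat.lt_or_ge (3 * e) (K ^ 5) with hs | hl
  · -- few colours: the grid is a single column
    have h4 : 3 * e ≤ 8 ^ e := (pow_aux e).trans (Nat.pow_le_pow_left (by norm_num) e)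
    obtain ⟨n, G, hG, hd⟩ := upper_core (g := 3 * e) (h := 1) (ρ := 8 ^ e) (b := 1) (r := r)
      (m := 16 * (K ^ 3 * (K ^ 80 * 8 ^ e * 1 * (3 * e))) * 8 ^ e)
      (t := K ^ 3 * (K ^ 80 * 8 ^ e * 1 * (3 * e))) (Q := K ^ 80 * 8 ^ e * 1 * (3 * e))
      hk (by omega) le_rfl h4 le_rfl (by rw [one_mul]; exact hs.le)
      (by
        calc 2 ^ 1 ≤ 8 ^ 1 := by norm_num
          _ ≤ 8 ^ e := Nat.pow_le_pow_right (by norm_num) he)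
      (by
        calc 2 ^ 1 * (3 * e) ^ 2 ≤ K * (K ^ 5) ^ 2 := by
              gcongr
              omega
          _ = K ^ 11 := by ring
          _ ≤ K ^ 32 * 1 := by
            rw [mul_one]
            exact Nat.pow_le_pow_right (by omega) (by norm_num)) hr0 (by omega) (by omega) rfl rfl rfl
      Prod.fst (by
        intro x F hF
        calc F.card ≤ ({x} ×ˢ (Finset.univ : Finset (Fin 1))).card :=
              Finset.card_le_card fun u hu =>
                mem_product.mpr ⟨mem_singleton.mpr (hF u hu), mem_univ _⟩
          _ ≤ 8 * 1 := by simp)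
      (by
        intro T hT
        left
        rw [Finset.card_image_of_injective T (fun u w h => Prod.ext h (Subsingleton.elim _ _)), hT]
        omega)
    exact ⟨n, G, hG, hd.trans (le_of_eq (by ring))⟩
  · -- many colours: a genuine grid, with the columns of size about the cube root of `r`
    have h5 : 8 ^ 4 * K ≤ K ^ 5 := by
      calc 8 ^ 4 * K ≤ K ^ 4 * K := by gcongr
        _ = K ^ 5 := by ring
    have hkK : k < K := Nat.lt_two_pow_self
    have he4 : 4 ≤ e := by omega
    have hρb : (4 : ℕ) ^ e * 2 ^ e = 8 ^ e := by
      rw [← mul_pow]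
      norm_num
    have h16 : 16 * K ^ 83 ≤ 2 ^ e := by
      calc 16 * K ^ 83 = 2 ^ (4 + k * 83) := by
            rw [hKdef, ← pow_mul, pow_add]
            norm_num
        _ ≤ 2 ^ e := Nat.pow_le_pow_right (by norm_num) (by omega)
    have hb8 : 8 ≤ 2 ^ e := by
      calc 8 = 2 ^ 3 := by norm_num
        _ ≤ 2 ^ e := Nat.pow_le_pow_right (by norm_num) (by omega)
    have h42 : (4 : ℕ) ^ e = (2 ^ e) ^ 2 := by
      rw [← pow_mul, mul_comm, pow_mul]
      norm_num
    set h := 3 * e / K ^ 5 + 1 with hh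
    have hK5 : 0 < K ^ 5 := by positivity
    have hdiv : 3 * e / K ^ 5 ≤ e / 4 := by
      calc 3 * e / K ^ 5 ≤ 3 * e / 12 := Nat.div_le_div_left (by omega) (by norm_num)
        _ = e / 4 := by omega
    set Q := K ^ 80 * 4 ^ e * 2 ^ e * (3 * e) with hQ
    have hQ0 : 0 < Q := by positivity
    obtain ⟨π, hπ, hπ'⟩ := exists_grid (m := 16 * (K ^ 3 * Q) * 4 ^ e) (b := 2 ^ e) (t := K ^ 3 * Q)
      hb8 (by rw [h42]) (Nat.mul_pos (Nat.pow_pos (by omega)) hQ0) (by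
        calc 16 * (K ^ 3 * Q) * 4 ^ e = (16 * K ^ 83) * (3 * e) * (4 ^ e * 4 ^ e * 2 ^ e) := by
              rw [hQ]
              ring
          _ ≤ 2 ^ e * 2 ^ e * (4 ^ e * 4 ^ e * 2 ^ e) := by
            gcongr
            exact pow_aux' he4
          _ = (2 ^ e) ^ 7 := by
            rw [h42]
            ring)
    obtain ⟨n, G, hG, hd⟩ := upper_core (g := 3 * e) (h := h) (ρ := 4 ^ e) (b := 2 ^ e) (r := r)
      (m := 16 * (K ^ 3 * Q) * 4 ^ e) (t := K ^ 3 * Q) (Q := Q) hk (by omega)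
      Nat.one_le_two_pow (pow_aux e) (Nat.le_add_left 1 _)
      (by
        have h1 := Nat.lt_div_mul_add (a := 3 * e) hK5
        rw [hh, add_mul, one_mul]
        exact h1.le)
      (by
        rw [show (4 : ℕ) ^ e = 2 ^ (2 * e) by rw [pow_mul]; norm_num]
        exact Nat.pow_le_pow_right (by norm_num) (by omega))
      (by
        have h1 : e / 4 + 1 ≤ 2 ^ (e / 4) := Nat.lt_two_pow_self
        have h2 : e ≤ 4 * 2 ^ (e / 4) := by omega
        calc 2 ^ h * (3 * e) ^ 2 ≤ 2 ^ (e / 4 + 1) * (3 * (4 * 2 ^ (e / 4))) ^ 2 := by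
              gcongr
              · norm_num
              · omega
          _ = 288 * 2 ^ (3 * (e / 4)) := by
            ring
          _ ≤ 8 ^ 32 * 2 ^ e := by
            gcongr
            · norm_num
            · norm_num
            · omega
          _ ≤ K ^ 32 * 2 ^ e := by gcongr) hr0 (hρb ▸ hre) (by rw [hρb, h8]) rfl rfl rfl π hπ hπ'
    refine ⟨n, G, hG, hd.trans (le_of_eq ?_)⟩
    rw [← hρb, hQ]
    ring

/-- The upper bound, with `e` the least number satisfying `r ≤ 8 ^ e`. -/
lemma upper_final {k r : ℕ} (hk : 3 ≤ k) (hr : 3 ≤ r) :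
    ∃ (n : ℕ) (G : SimpleGraph (Fin n)), RamseyMinimal G r k ∧
      (minDeg G : ℝ) ≤ 2 ^ (100 * k) * (r : ℝ) ^ 2 * Real.log r := by
  set e := Nat.clog 8 r with he
  have he1 : 1 ≤ e := Nat.clog_pos (by norm_num) (by omega)
  obtain ⟨n, G, hG, hd⟩ := upper_exists hk (by omega) he1 (Nat.le_pow_clog (by norm_num) r)
  refine ⟨n, G, hG, ?_⟩
  have h1 : 8 ^ (e - 1) < r := Nat.pow_pred_clog_lt_self (by norm_num) (by omega)
  have h2 : 8 ^ e ≤ 8 * r := by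
    calc 8 ^ e = 8 * 8 ^ (e - 1) := by
          rw [← pow_succ']
          congr 1
          omega
      _ ≤ 8 * r := by gcongr
  have hr' : (3 : ℝ) ≤ r := by exact_mod_cast hr
  have hlog1 : 1 ≤ Real.log r := by
    rw [Real.le_log_iff_exp_le (by linarith)]
    linarith [Real.exp_one_lt_d9]
  have hlog : 2 * ((e : ℝ) - 1) ≤ Real.log r := by
    have h3 : ((8 : ℝ) ^ (e - 1)) ≤ r := by exact_mod_cast h1.le
    have h4 := Real.log_le_log (by positivity) h3
    rw [Real.log_pow, Nat.cast_sub he1] at h4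
    have h5 : (2 : ℝ) ≤ Real.log 8 := by
      rw [show (8 : ℝ) = 2 ^ 3 by norm_num, Real.log_pow]
      have := Real.log_two_gt_d9
      push_cast
      linarith
    have h6 : (0 : ℝ) ≤ (e : ℝ) - 1 := by
      have : (1 : ℝ) ≤ e := by exact_mod_cast he1
      linarith
    push_cast at h4
    nlinarith
  have hd' : (minDeg G : ℝ) ≤ 16 * (2 ^ k) ^ 83 * (8 ^ e) ^ 2 * (3 * e) := by exact_mod_cast hd
  have h2' : (8 : ℝ) ^ e ≤ 8 * r := by exact_mod_cast h2
  have h7 : (2 : ℝ) ^ 13 * (2 ^ k) ^ 83 ≤ 2 ^ (100 * k) := by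
    rw [← pow_mul, ← pow_add]
    exact pow_le_pow_right₀ (by norm_num) (by omega)
  calc (minDeg G : ℝ) ≤ 16 * (2 ^ k) ^ 83 * (8 ^ e) ^ 2 * (3 * e) := hd'
    _ ≤ 16 * (2 ^ k) ^ 83 * (8 * r) ^ 2 * (8 * Real.log r) := by
      refine mul_le_mul ?_ (by linarith) (by positivity) (by positivity)
      gcongr
    _ = 2 ^ 13 * (2 ^ k) ^ 83 * (r : ℝ) ^ 2 * Real.log r := by ring
    _ ≤ _ := by gcongr

end assembly

end SRam

/-- There is an absolute constant `c > 0` such that for all `k, r ≥ 3`,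
`s_r(k) ≤ 2^{100k}·r²·log r` and `s_r(k) ≥ c·(k−1)·r²`. -/
theorem sRamseyMinDeg_bounds :
    ∃ c : ℝ, 0 < c ∧ ∀ k r : ℕ, 3 ≤ k → 3 ≤ r →
      (sRamseyMinDeg r k : ℝ) ≤ 2 ^ (100 * k) * (r : ℝ) ^ 2 * Real.log r ∧
        c * ((k : ℝ) - 1) * (r : ℝ) ^ 2 ≤ (sRamseyMinDeg r k : ℝ) := by
  refine ⟨1 / 128, by norm_num, fun k r hk hr => ?_⟩
  obtain ⟨n, G, hG, hd⟩ := SRam.upper_final hk hr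
  constructor
  · refine le_trans ?_ hd
    have h1 : sRamseyMinDeg r k ≤ minDeg G := Nat.sInf_le ⟨n, G, hG, rfl⟩
    exact_mod_cast h1
  · obtain ⟨n', G', hG', hd'⟩ := Nat.sInf_mem
      (s := {δ : ℕ | ∃ (n : ℕ) (G : SimpleGraph (Fin n)), RamseyMinimal G r k ∧ minDeg G = δ})
      ⟨_, n, G, hG, rfl⟩
    have h1 := SRam.lower_bound (by omega) hk G' hG'
    rw [hd'] at h1
    have h2 : r ^ 2 * (k - 1) ≤ 128 * sRamseyMinDeg r k := by
      obtain ⟨j, rfl⟩ := Nat.exists_eq_add_of_le hk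
      rw [show 3 + j - 2 = j + 1 by omega] at h1
      rw [show 3 + j - 1 = j + 2 by omega]
      unfold sRamseyMinDeg
      nlinarith [sq_nonneg r]
    have h3 : ((r ^ 2 * (k - 1) : ℕ) : ℝ) ≤ 128 * sRamseyMinDeg r k := by exact_mod_cast h2
    rw [Nat.cast_mul, Nat.cast_sub (by omega)] at h3
    push_cast at h3
    linarith
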